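/- arXiv:2601.13906 — 2 statements merged into one kernel-verified Lean document; each statement's English description precedes it below -/
import Mathlib

section
/- For every integer r ≥ 2 and every mismatched pair {P, Q} of distinct r-patterns, asymptotically almost surely z_{{P,Q}}(RM_n^(r)) = Θ(n^(1/r)); that is, there exist constants c₁, c₂ > 0 (depending only on r, P, Q) such that the probability that c₁·n^(1/r) ≤ z_{{P,Q}}(RM_n^(r)) ≤ c₂·n^(1/r) tends to 1 as n → ∞. -/
open Finset
open scoped Classical

/-- An ordered `r`-matching of size `n`: a partition of `[r*n] = {1,…,r*n}` into `n`
pairwise disjoint `r`-element subsets (the edges). -/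
def IsOrderedMatching (r n : ℕ) (M : Finset (Finset ℕ)) : Prop :=
  M.card = n ∧ (∀ e ∈ M, e.card = r) ∧
  (∀ e ∈ M, ∀ f ∈ M, e ≠ f → Disjoint e f) ∧
  M.biUnion id = Finset.Icc 1 (r * n)

/-- Two disjoint `r`-element sets `e`, `f` form the `r`-pattern `P`: the unique
order-preserving bijection from `e ∪ f` onto `[2r]` maps the pair `{e, f}` onto `P`. -/
def FormsPattern (r : ℕ) (e f : Finset ℕ) (P : Finset (Finset ℕ)) : Prop :=
  ∃ φ : ℕ → ℕ, StrictMonoOn φ ↑(e ∪ f) ∧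
    (e ∪ f).image φ = Finset.Icc 1 (2 * r) ∧
    ({e.image φ, f.image φ} : Finset (Finset ℕ)) = P

/-- A `Ps`-clique: a family of pairwise disjoint `r`-element subsets of `ℕ`, every two of
which form a pattern belonging to `Ps`. -/
def IsClique (r : ℕ) (Ps : Set (Finset (Finset ℕ))) (K : Finset (Finset ℕ)) : Prop :=
  (∀ e ∈ K, e.card = r) ∧ (∀ e ∈ K, ∀ f ∈ K, e ≠ f → Disjoint e f) ∧
  (∀ e ∈ K, ∀ f ∈ K, e ≠ f → ∃ P ∈ Ps, FormsPattern r e f P)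

/-- `z_Ps(M)`: the maximum size of a subfamily of `M` that is a `Ps`-clique. -/
noncomputable def zClique (r : ℕ) (Ps : Set (Finset (Finset ℕ))) (M : Finset (Finset ℕ)) : ℕ :=
  sSup {k | ∃ K : Finset (Finset ℕ), K ⊆ M ∧ IsClique r Ps K ∧ K.card = k}

/-- All ordered `r`-matchings of size `n` (as a finset). -/
noncomputable def matchingFamilies (r n : ℕ) : Finset (Finset (Finset ℕ)) :=
  ((Finset.Icc 1 (r * n)).powerset.powerset).filter (IsOrderedMatching r n)

/-- The probability of the event `A` for a uniformly random ordered `r`-matching of size `n`. -/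
noncomputable def prob (r n : ℕ) (A : Finset (Finset ℕ) → Prop) : ℝ :=
  (((matchingFamilies r n).filter A).card : ℝ) / ((matchingFamilies r n).card : ℝ)

/-- Expectation of `X` with respect to a uniformly random ordered `r`-matching of size `n`. -/
noncomputable def expect (r n : ℕ) (X : Finset (Finset ℕ) → ℝ) : ℝ :=
  (∑ M ∈ matchingFamilies r n, X M) / ((matchingFamilies r n).card : ℝ)

/-- An `r`-partite `r`-pattern: each edge contains exactly one of `{2i-1, 2i}` for each
`i = 1, …, r`. -/
def IsPartitePattern (r : ℕ) (P : Finset (Finset ℕ)) : Prop :=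
  IsOrderedMatching r 2 P ∧
  ∀ e ∈ P, ∀ i ∈ Finset.Icc 1 r, (e ∩ {2 * i - 1, 2 * i}).card = 1

/-- An `r`-pattern `P` is collectable if there exist arbitrarily large `{P}`-cliques. -/
def Collectable (r : ℕ) (P : Finset (Finset ℕ)) : Prop :=
  ∀ k : ℕ, ∃ K : Finset (Finset ℕ), IsClique r {P} K ∧ K.card = k

/-- The word of a pattern `P` over `{A=true, B=false}`: the `j`-th letter is `true` iff
vertex `j` lies in the edge of `P` containing `1`. -/
noncomputable def patternWord (r : ℕ) (P : Finset (Finset ℕ)) : List Bool :=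
  (List.range (2 * r)).map (fun j => decide (∃ e ∈ P, 1 ∈ e ∧ j + 1 ∈ e))

/-- `lam` is a splitting of the word `w` into consecutive blocks of the form
`A^t B^t` or `B^t A^t` with half-lengths given by `lam`. -/
def IsBlockSplitting (w : List Bool) (lam : List ℕ) : Prop :=
  (∀ t ∈ lam, 1 ≤ t) ∧
  ∃ bs : List Bool, bs.length = lam.length ∧
    w = (List.zipWith (fun t b => List.replicate t b ++ List.replicate t !b) lam bs).flatten

/-- The pattern `P` has composition `lam` (the sequence of half-lengths of the blocks of
its unique splitting). -/
def HasComposition (r : ℕ) (P : Finset (Finset ℕ)) (lam : List ℕ) : Prop :=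
  IsBlockSplitting (patternWord r P) lam

/-- Two distinct collectable `r`-patterns are harmonious if they have the same composition. -/
def Harmonious (r : ℕ) (P Q : Finset (Finset ℕ)) : Prop :=
  P ≠ Q ∧ Collectable r P ∧ Collectable r Q ∧
  ∃ lam : List ℕ, HasComposition r P lam ∧ HasComposition r Q lam

/-- A pair of distinct `r`-patterns is a mismatch if exactly one of them is collectable, or
both are collectable but their compositions differ. -/
def Mismatch (r : ℕ) (P Q : Finset (Finset ℕ)) : Prop :=
  P ≠ Q ∧
  ((Collectable r P ∧ ¬ Collectable r Q) ∨
   (¬ Collectable r P ∧ Collectable r Q) ∨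
   (Collectable r P ∧ Collectable r Q ∧
     ¬ ∃ lam : List ℕ, HasComposition r P lam ∧ HasComposition r Q lam))

/-- The trace of an ordered `r`-matching of size `k` on `[rk]`: the `j`-th letter equals
`i` when `j` is the `i`-th smallest element of the edge containing `j`. -/
noncomputable def trace (r k : ℕ) (M : Finset (Finset ℕ)) : List ℕ :=
  (List.range (r * k)).map (fun j₀ =>
    ((Finset.Icc 1 (r * k)).filter
      (fun x => x ≤ j₀ + 1 ∧ ∃ e ∈ M, j₀ + 1 ∈ e ∧ x ∈ e)).card)

/-- `a_Ps(k)`: the number of `Ps`-cliques of size `k` whose edges partition `[rk]`. -/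
noncomputable def cliqueCount (r : ℕ) (Ps : Set (Finset (Finset ℕ))) (k : ℕ) : ℕ :=
  (((Finset.Icc 1 (r * k)).powerset.powerset).filter
    (fun M => IsOrderedMatching r k M ∧ IsClique r Ps M)).card

/-- The maximum size of any `Ps`-clique whatsoever. -/
noncomputable def maxCliqueSize (r : ℕ) (Ps : Set (Finset (Finset ℕ))) : ℕ :=
  sSup {k | ∃ K : Finset (Finset ℕ), IsClique r Ps K ∧ K.card = k}

/-- `M` contains a copy of the ordered `r`-matching `H` of size `k`: a subfamily `N ⊆ M` of
`k` edges such that the order-preserving bijection from the union of the edges of `N`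
onto `[rk]` maps `N` onto `H`. -/
def ContainsCopy (r k : ℕ) (H M : Finset (Finset ℕ)) : Prop :=
  ∃ N ⊆ M, N.card = k ∧ ∃ φ : ℕ → ℕ,
    StrictMonoOn φ ↑(N.biUnion id) ∧
    (N.biUnion id).image φ = Finset.Icc 1 (r * k) ∧
    N.image (fun e => e.image φ) = H

/-- Delete the `j`-th smallest element of the finite set `e`. -/
def deleteJth (j : ℕ) (e : Finset ℕ) : Finset ℕ :=
  e.filter (fun x => (e.filter (· ≤ x)).card ≠ j)

/-- Relabel the elements of `e` order-preservingly by their ranks in `V`. -/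
def relabel (V : Finset ℕ) (e : Finset ℕ) : Finset ℕ :=
  e.image (fun x => (V.filter (· ≤ x)).card)

/-- `S^(−j)`: delete from each edge of the pattern `S` its `j`-th smallest element and
relabel the remaining vertices order-preservingly. -/
def patternDelete (j : ℕ) (S : Finset (Finset ℕ)) : Finset (Finset ℕ) :=
  (S.image (deleteJth j)).image (relabel ((S.image (deleteJth j)).biUnion id))

/-- perfect `r`-matchings of a finite vertex set `V`. -/
noncomputable def PMs (r : ℕ) (V : Finset ℕ) : Finset (Finset (Finset ℕ)) :=
  V.powerset.powerset.filter (fun M => (∀ e ∈ M, e.card = r) ∧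
    (∀ e ∈ M, ∀ f ∈ M, e ≠ f → Disjoint e f) ∧ M.biUnion id = V)

lemma mem_PMs {r : ℕ} {V : Finset ℕ} {M : Finset (Finset ℕ)} :
    M ∈ PMs r V ↔ (∀ e ∈ M, e.card = r) ∧
    (∀ e ∈ M, ∀ f ∈ M, e ≠ f → Disjoint e f) ∧ M.biUnion id = V := by
  unfold PMs
  rw [Finset.mem_filter]
  constructor
  · exact fun h => h.2
  · intro h
    refine ⟨?_, h⟩
    rw [Finset.mem_powerset]
    intro e he
    rw [Finset.mem_powerset, ← h.2.2]
    exact Finset.subset_biUnion_of_mem id he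

lemma matchingFamilies_eq (r n : ℕ) (hr : 1 ≤ r) :
    matchingFamilies r n = PMs r (Finset.Icc 1 (r * n)) := by
  ext M
  rw [mem_PMs]
  unfold matchingFamilies
  rw [Finset.mem_filter]
  unfold IsOrderedMatching
  constructor
  · exact fun h => h.2.2
  · intro h
    have h' := mem_PMs.2 h
    refine ⟨(Finset.mem_filter.1 h').1, ?_, h⟩
    have h1 : (M.biUnion id).card = ∑ e ∈ M, e.card :=
      Finset.card_biUnion (fun e he f hf hef => h.2.1 e he f hf hef)
    rw [h.2.2, Finset.sum_congr rfl h.1, Finset.sum_const] at h1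
    simp at h1
    have : r * n = r * M.card := by rw [h1]; ring
    exact (Nat.eq_of_mul_eq_mul_left (by omega) this).symm

/-- edges `F` are disjoint `r`-subsets of `V`. -/
def GoodF (r : ℕ) (V : Finset ℕ) (F : Finset (Finset ℕ)) : Prop :=
  (∀ e ∈ F, e.card = r) ∧ (∀ e ∈ F, ∀ f ∈ F, e ≠ f → Disjoint e f) ∧ ∀ e ∈ F, e ⊆ V

lemma count_containing (r : ℕ) (hr : 1 ≤ r) (V : Finset ℕ) (F : Finset (Finset ℕ))
    (hF : GoodF r V F) :
    ((PMs r V).filter (fun M => F ⊆ M)).card = (PMs r (V \ F.biUnion id)).card := by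
  obtain ⟨h1, h2, h3⟩ := hF
  have key : ∀ M ∈ PMs r (V \ F.biUnion id), ∀ e ∈ M, ∀ f ∈ F, Disjoint e f := by
    intro M hM e he f hf
    rw [mem_PMs] at hM
    have : e ⊆ V \ F.biUnion id := by rw [← hM.2.2]; exact Finset.subset_biUnion_of_mem id he
    rw [Finset.disjoint_left]
    intro x hx hxf
    have := this hx
    rw [Finset.mem_sdiff, Finset.mem_biUnion] at this
    exact this.2 ⟨f, hf, hxf⟩
  have ne : ∀ f ∈ F, f.Nonempty := by
    intro f hf
    rw [← Finset.card_pos, h1 f hf]; omega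
  have dj : ∀ M ∈ PMs r (V \ F.biUnion id), Disjoint M F := by
    intro M hM
    rw [Finset.disjoint_left]
    intro e he hf
    have := key M hM e he e hf
    rw [disjoint_self] at this
    exact (ne e hf).ne_empty this
  refine Finset.card_bij' (fun M _ => M \ F) (fun M _ => M ∪ F) ?_ ?_ ?_ ?_
  · intro M hM
    rw [Finset.mem_filter, mem_PMs] at hM
    obtain ⟨⟨a, b, c⟩, d⟩ := hM
    rw [mem_PMs]
    refine ⟨fun e he => a e (Finset.mem_sdiff.1 he).1, fun e he f hf => b e (Finset.mem_sdiff.1 he).1 f (Finset.mem_sdiff.1 hf).1, ?_⟩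
    ext x
    simp only [Finset.mem_biUnion, Finset.mem_sdiff, id]
    constructor
    · rintro ⟨e, ⟨he, hef⟩, hx⟩
      refine ⟨?_, ?_⟩
      · rw [← c]; exact Finset.mem_biUnion.2 ⟨e, he, hx⟩
      · rintro ⟨f, hf, hxf⟩
        have : e ≠ f := by rintro rfl; exact hef hf
        exact Finset.disjoint_left.1 (b e he f (d hf) this) hx hxf
    · rintro ⟨hx, hn⟩
      rw [← c, Finset.mem_biUnion] at hx
      obtain ⟨e, he, hx⟩ := hx
      exact ⟨e, ⟨he, fun hf => hn ⟨e, hf, hx⟩⟩, hx⟩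
  · intro M hM
    have k := key M hM
    rw [mem_PMs] at hM
    obtain ⟨a, b, c⟩ := hM
    rw [Finset.mem_filter, mem_PMs]
    refine ⟨⟨?_, ?_, ?_⟩, Finset.subset_union_right⟩
    · intro e he
      rcases Finset.mem_union.1 he with he | he
      · exact a e he
      · exact h1 e he
    · intro e he f hf hef
      rcases Finset.mem_union.1 he with he | he <;> rcases Finset.mem_union.1 hf with hf | hf
      · exact b e he f hf hef
      · exact k e he f hf
      · exact (k f hf e he).symm
      · exact h2 e he f hf hef
    · rw [Finset.union_biUnion, c]
      apply Finset.sdiff_union_of_subset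
      intro x hx
      obtain ⟨f, hf, hx⟩ := Finset.mem_biUnion.1 hx
      exact h3 f hf hx
  · intro M hM
    rw [Finset.mem_filter] at hM
    exact Finset.sdiff_union_of_subset hM.2
  · intro M hM
    rw [Finset.union_sdiff_right]
    exact Finset.sdiff_eq_self_of_disjoint (dj M hM)

/-- number of ordered matchings. -/
def gN (r n : ℕ) : ℕ := ∏ i ∈ Finset.range n, Nat.choose (r * (i + 1) - 1) (r - 1)

lemma gN_succ (r n : ℕ) : gN r (n + 1) = gN r n * Nat.choose (r * (n + 1) - 1) (r - 1) := by
  unfold gN; rw [Finset.prod_range_succ]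

lemma gN_pos (r n : ℕ) (hr : 1 ≤ r) : 0 < gN r n := by
  unfold gN
  apply Finset.prod_pos
  intro i _
  apply Nat.choose_pos
  have : r * 1 ≤ r * (i + 1) := Nat.mul_le_mul_left _ (by omega)
  omega

lemma card_PMs (r : ℕ) (hr : 1 ≤ r) (n : ℕ) : ∀ V : Finset ℕ, V.card = r * n →
    (PMs r V).card = gN r n := by
  induction n with
  | zero =>
    intro V hV
    have : V = ∅ := by simpa using hV
    subst this
    have : PMs r ∅ = {∅} := by
      ext M
      rw [mem_PMs, Finset.mem_singleton]
      constructor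
      · rintro ⟨a, b, c⟩
        rw [Finset.eq_empty_iff_forall_notMem]
        intro e he
        have h1 : e ⊆ ∅ := by rw [← c]; exact Finset.subset_biUnion_of_mem id he
        have h2 := a e he
        rw [Finset.subset_empty.1 h1] at h2
        simp at h2; omega
      · rintro rfl
        simp
    rw [this]; simp [gN]
  | succ n ih =>
    intro V hV
    have hVp : V.Nonempty := by
      rw [← Finset.card_pos, hV]; positivity
    obtain ⟨v, hv⟩ := hVp
    set E := (V.powersetCard r).filter (fun e => v ∈ e) with hE
    have hun : PMs r V = E.biUnion (fun e => (PMs r V).filter (fun M => {e} ⊆ M)) := by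
      ext M
      rw [Finset.mem_biUnion]
      constructor
      · intro hM
        have hM' := mem_PMs.1 hM
        have : v ∈ M.biUnion id := by rw [hM'.2.2]; exact hv
        obtain ⟨e, he, hve⟩ := Finset.mem_biUnion.1 this
        refine ⟨e, ?_, ?_⟩
        · rw [hE, Finset.mem_filter, Finset.mem_powersetCard]
          refine ⟨⟨?_, hM'.1 e he⟩, hve⟩
          rw [← hM'.2.2]; exact Finset.subset_biUnion_of_mem id he
        · rw [Finset.mem_filter]
          exact ⟨hM, by simpa using he⟩
      · rintro ⟨e, _, he⟩
        exact (Finset.mem_filter.1 he).1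
    rw [hun, Finset.card_biUnion]
    · have : ∀ e ∈ E, ((PMs r V).filter (fun M => {e} ⊆ M)).card = gN r n := by
        intro e he
        rw [hE, Finset.mem_filter, Finset.mem_powersetCard] at he
        obtain ⟨⟨h1, h2⟩, h3⟩ := he
        rw [count_containing r hr]
        · apply ih
          simp only [Finset.singleton_biUnion, id]
          rw [Finset.card_sdiff_of_subset h1, hV, h2]
          rw [Nat.mul_succ]; omega
        · refine ⟨?_, ?_, ?_⟩
          · simp [h2]
          · intro a ha b hb hab
            simp at ha hb
            exact absurd (ha.trans hb.symm) hab
          · simpa using h1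
      rw [Finset.sum_congr rfl this, Finset.sum_const, gN_succ, smul_eq_mul, mul_comm]
      congr 1
      have hEc : E.card = ((V.erase v).powersetCard (r - 1)).card := by
        refine Finset.card_bij' (fun e _ => e.erase v) (fun e _ => insert v e) ?_ ?_ ?_ ?_
        · intro e he
          rw [hE, Finset.mem_filter, Finset.mem_powersetCard] at he
          rw [Finset.mem_powersetCard, Finset.card_erase_of_mem he.2, he.1.2]
          exact ⟨Finset.erase_subset_erase _ he.1.1, rfl⟩
        · intro e he
          rw [Finset.mem_powersetCard] at he
          have hve : v ∉ e := fun h => by simpa using he.1 h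
          rw [hE, Finset.mem_filter, Finset.mem_powersetCard, Finset.card_insert_of_notMem hve, he.2]
          refine ⟨⟨?_, by omega⟩, by simp⟩
          intro x hx
          rcases Finset.mem_insert.1 hx with rfl | hx
          · exact hv
          · exact Finset.mem_of_mem_erase (he.1 hx)
        · intro e he
          rw [hE, Finset.mem_filter] at he
          exact Finset.insert_erase he.2
        · intro e he
          rw [Finset.mem_powersetCard] at he
          have hve : v ∉ e := fun h => by simpa using he.1 h
          exact Finset.erase_insert hve
      rw [hEc, Finset.card_powersetCard, Finset.card_erase_of_mem hv, hV]
    · intro e he f hf hef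
      rw [Function.onFun, Finset.disjoint_left]
      intro M hM hM'
      rw [Finset.mem_filter] at hM hM'
      have h1 := mem_PMs.1 hM.1
      have he' : v ∈ e := (Finset.mem_filter.1 he).2
      have hf' : v ∈ f := (Finset.mem_filter.1 hf).2
      exact Finset.disjoint_left.1 (h1.2.1 e (by simpa using hM.2) f (by simpa using hM'.2) hef) he' hf'

lemma card_matchingFamilies (r n : ℕ) (hr : 1 ≤ r) : (matchingFamilies r n).card = gN r n := by
  rw [matchingFamilies_eq r n hr]
  exact card_PMs r hr n _ (by simp)

lemma count_good (r n s : ℕ) (hr : 1 ≤ r) (hs : s ≤ n) (F : Finset (Finset ℕ))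
    (hF : GoodF r (Finset.Icc 1 (r * n)) F) (hFs : F.card = s) :
    ((matchingFamilies r n).filter (fun M => F ⊆ M)).card = gN r (n - s) := by
  rw [matchingFamilies_eq r n hr, count_containing r hr _ _ hF]
  apply card_PMs r hr
  have h1 : F.biUnion id ⊆ Finset.Icc 1 (r * n) := by
    intro x hx
    obtain ⟨f, hf, hx⟩ := Finset.mem_biUnion.1 hx
    exact hF.2.2 f hf hx
  have h2 : (F.biUnion id).card = ∑ e ∈ F, e.card :=
    Finset.card_biUnion (fun e he f hf hef => hF.2.1 e he f hf hef)
  rw [Finset.card_sdiff_of_subset h1, h2]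
  rw [Finset.sum_congr rfl hF.1, Finset.sum_const, hFs]
  simp [Nat.mul_sub, mul_comm]

lemma count_le (r n s : ℕ) (hr : 1 ≤ r) (hs : s ≤ n) (F : Finset (Finset ℕ))
    (hFs : F.card = s) :
    ((matchingFamilies r n).filter (fun M => F ⊆ M)).card ≤ gN r (n - s) := by
  by_cases hF : GoodF r (Finset.Icc 1 (r * n)) F
  · exact (count_good r n s hr hs F hF hFs).le
  · have : (matchingFamilies r n).filter (fun M => F ⊆ M) = ∅ := by
      rw [Finset.filter_eq_empty_iff]
      intro M hM hFM
      apply hF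
      rw [matchingFamilies_eq r n hr, mem_PMs] at hM
      refine ⟨fun e he => hM.1 e (hFM he), fun e he f hf => hM.2.1 e (hFM he) f (hFM hf), ?_⟩
      intro e he
      rw [← hM.2.2]
      exact Finset.subset_biUnion_of_mem id (hFM he)
    rw [this]; simp

/-- the increasing enumeration of an `r`-set. -/
noncomputable def en (r : ℕ) (e : Finset ℕ) : Fin r → ℕ :=
  if h : e.card = r then e.orderEmbOfFin h else fun l => l

lemma en_strictMono (r : ℕ) (e : Finset ℕ) : StrictMono (en r e) := by
  unfold en
  split_ifs with h
  · exact (e.orderEmbOfFin h).strictMono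
  · exact fun a b h => h

lemma image_en {r : ℕ} {e : Finset ℕ} (h : e.card = r) : Finset.univ.image (en r e) = e := by
  unfold en
  rw [dif_pos h]
  ext x
  have := Finset.range_orderEmbOfFin e h
  rw [Set.ext_iff] at this
  simp

lemma en_mem {r : ℕ} {e : Finset ℕ} (h : e.card = r) (l : Fin r) : en r e l ∈ e := by
  have := Finset.mem_image_of_mem (en r e) (Finset.mem_univ l)
  rwa [image_en h] at this

lemma eq_of_image_eq {r : ℕ} {a b : Fin r → ℕ} (ha : StrictMono a) (hb : StrictMono b)
    (h : Finset.univ.image a = Finset.univ.image b) : a = b := by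
  rw [← StrictMono.range_inj ha hb]
  ext x
  have := Finset.ext_iff.1 h x
  simpa using this

lemma en_image {r : ℕ} {a : Fin r → ℕ} (ha : StrictMono a) : en r (Finset.univ.image a) = a := by
  apply eq_of_image_eq (en_strictMono _ _) ha
  apply image_en
  rw [Finset.card_image_of_injective _ ha.injective]; simp

/-- `(a,b)` compares like `(A,B)` or like `(B,A)`. -/
def Pat {r : ℕ} (a b A B : Fin r → ℕ) : Prop :=
  (∀ l m, a l < b m ↔ A l < B m) ∨ (∀ l m, a l < b m ↔ B l < A m)

def SepP {r : ℕ} (A B : Fin r → ℕ) (i j : Fin r) : Prop := A i < B j ∧ B i < A j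

def DisjF {r : ℕ} (a b : Fin r → ℕ) : Prop := ∀ l m, a l ≠ b m

lemma disjF_en {r : ℕ} {e f : Finset ℕ} (he : e.card = r) (hf : f.card = r)
    (h : Disjoint e f) : DisjF (en r e) (en r f) := fun l m =>
  Finset.disjoint_iff_ne.1 h _ (en_mem he l) _ (en_mem hf m)

/-- a normal form of a pattern. -/
structure NF (r : ℕ) (P : Finset (Finset ℕ)) (A B : Fin r → ℕ) : Prop where
  mA : StrictMono A
  mB : StrictMono B
  dj : DisjF A B
  eq : P = {Finset.univ.image A, Finset.univ.image B}
  un : Finset.univ.image A ∪ Finset.univ.image B = Finset.Icc 1 (2 * r)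

lemma exists_NF (r : ℕ) (hr : 2 ≤ r) (P : Finset (Finset ℕ)) (hP : IsOrderedMatching r 2 P) :
    ∃ A B, NF r P A B ∧ A ⟨0, by omega⟩ = 1 := by
  obtain ⟨h1, h2, h3, h4⟩ := hP
  obtain ⟨e, f, hef, rfl⟩ := Finset.card_eq_two.1 h1
  have key : ∀ e f : Finset ℕ, e ≠ f → (∀ g ∈ ({e, f} : Finset (Finset ℕ)), g.card = r) → Disjoint e f →
      (({e, f} : Finset (Finset ℕ)).biUnion id = Finset.Icc 1 (r * 2)) → 1 ∈ e →
      ∃ A B, NF r {e, f} A B ∧ A ⟨0, by omega⟩ = 1 := by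
    intro e f hef h2 hd h4 h1e
    have he : e.card = r := h2 e (by simp)
    have hf : f.card = r := h2 f (by simp)
    have hun : e ∪ f = Finset.Icc 1 (2 * r) := by
      rw [mul_comm 2 r, ← h4]; simp
    refine ⟨en r e, en r f, ⟨en_strictMono _ _, en_strictMono _ _, disjF_en he hf hd, ?_, ?_⟩, ?_⟩
    · rw [image_en he, image_en hf]
    · rw [image_en he, image_en hf, hun]
    · have a1 : en r e ⟨0, by omega⟩ ∈ Finset.Icc 1 (2 * r) := by
        rw [← hun]; exact Finset.mem_union_left _ (en_mem he _)
      have a2 : 1 ∈ Finset.univ.image (en r e) := by rw [image_en he]; exact h1e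
      obtain ⟨l, _, hl⟩ := Finset.mem_image.1 a2
      have a3 : en r e ⟨0, by omega⟩ ≤ en r e l := (en_strictMono r e).monotone (Nat.zero_le _)
      rw [Finset.mem_Icc] at a1
      omega
  have h5 : 1 ∈ ({e, f} : Finset (Finset ℕ)).biUnion id := by
    rw [h4, Finset.mem_Icc]; omega
  have hd : Disjoint e f := h3 e (by simp) f (by simp) hef
  simp at h5
  rcases h5 with h5 | h5
  · exact key e f hef h2 hd h4 h5
  · rw [Finset.pair_comm] at h2 h4 ⊢
    exact key f e hef.symm h2 hd.symm h4 h5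

lemma pat_of_forms {r : ℕ} {P : Finset (Finset ℕ)} {A B : Fin r → ℕ} (hP : NF r P A B)
    {e f : Finset ℕ} (he : e.card = r) (hf : f.card = r) 
    (h : FormsPattern r e f P) : Pat (en r e) (en r f) A B := by
  obtain ⟨φ, h1, h2, h3⟩ := h
  rw [hP.eq] at h3
  have m1 : StrictMono (fun l => φ (en r e l)) := fun x y hxy =>
    h1 (by simp [en_mem he]) (by simp [en_mem he]) (en_strictMono r e hxy)
  have m2 : StrictMono (fun l => φ (en r f l)) := fun x y hxy =>
    h1 (by simp [en_mem hf]) (by simp [en_mem hf]) (en_strictMono r f hxy)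
  have i1 : e.image φ = Finset.univ.image (fun l => φ (en r e l)) := by
    conv_lhs => rw [← image_en he, Finset.image_image]
    rfl
  have i2 : f.image φ = Finset.univ.image (fun l => φ (en r f l)) := by
    conv_lhs => rw [← image_en hf, Finset.image_image]
    rfl
  have lt : ∀ l m, en r e l < en r f m ↔ φ (en r e l) < φ (en r f m) := fun l m =>
    (h1.lt_iff_lt (by simp [en_mem he]) (by simp [en_mem hf])).symm
  rw [i1, i2] at h3
  have h4 := h3
  rw [← Finset.coe_inj] at h4
  push_cast at h4
  rw [Set.pair_eq_pair_iff] at h4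
  rcases h4 with ⟨h5, h6⟩ | ⟨h5, h6⟩
  · left
    have a := eq_of_image_eq m1 hP.mA h5
    have b := eq_of_image_eq m2 hP.mB h6
    intro l m
    rw [lt, ← a, ← b]
  · right
    have a := eq_of_image_eq m1 hP.mB h5
    have b := eq_of_image_eq m2 hP.mA h6
    intro l m
    rw [lt, ← a, ← b]

lemma forms_of_cmp {r : ℕ} {P : Finset (Finset ℕ)} {A B : Fin r → ℕ} (hP : NF r P A B)
    {a b : Fin r → ℕ} (ha : StrictMono a) (hb : StrictMono b) (hd : DisjF a b)
    (h : ∀ l m, a l < b m ↔ A l < B m) :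
    FormsPattern r (Finset.univ.image a) (Finset.univ.image b) P := by
  have inj : Function.Injective (Sum.elim a b) := by
    rintro (l | l) (m | m) hlm
    · simpa using ha.injective hlm
    · exact absurd hlm (hd l m)
    · exact absurd hlm.symm (hd m l)
    · simpa using hb.injective hlm
  set φ := Function.extend (Sum.elim a b) (Sum.elim A B) (fun _ => 0) with hφ
  have φa : ∀ l, φ (a l) = A l := fun l => inj.extend_apply (Sum.elim A B) _ (Sum.inl l)
  have φb : ∀ l, φ (b l) = B l := fun l => inj.extend_apply (Sum.elim A B) _ (Sum.inr l)
  have ia : (Finset.univ.image a).image φ = Finset.univ.image A := by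
    rw [Finset.image_image]; congr 1; funext l; exact φa l
  have ib : (Finset.univ.image b).image φ = Finset.univ.image B := by
    rw [Finset.image_image]; congr 1; funext l; exact φb l
  refine ⟨φ, ?_, ?_, ?_⟩
  · intro x hx y hy hxy
    simp at hx hy
    rcases hx with ⟨l, rfl⟩ | ⟨l, rfl⟩ <;> rcases hy with ⟨m, rfl⟩ | ⟨m, rfl⟩
    · rw [φa, φa]; exact hP.mA (ha.lt_iff_lt.1 hxy)
    · rw [φa, φb]; exact (h l m).1 hxy
    · rw [φa, φb]
      have := h m l
      have := hP.dj m l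
      omega
    · rw [φb, φb]; exact hP.mB (hb.lt_iff_lt.1 hxy)
  · rw [Finset.image_union, ia, ib, hP.un]
  · rw [ia, ib, hP.eq]

lemma Pat.sep {r : ℕ} {a b A B : Fin r → ℕ} (h : Pat a b A B) (hd : DisjF a b) (hD : DisjF A B)
    (i j : Fin r) : SepP a b i j ↔ SepP A B i j := by
  unfold SepP
  have := hd j i
  have := hd i j
  have := hD i j
  have := hD j i
  rcases h with h | h
  · have := h i j
    have := h j i
    omega
  · have := h i j
    have := h j i
    omega

lemma Pat.sgn {r : ℕ} {a b A B : Fin r → ℕ} (h : Pat a b A B) (hd : DisjF a b) (hD : DisjF A B)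
    (i j : Fin r) : (a i < b i ↔ a j < b j) ↔ (A i < B i ↔ A j < B j) := by
  have := hd j j
  have := hd i i
  have := hD i i
  have := hD j j
  rcases h with h | h
  · have := h i i
    have := h j j
    omega
  · have := h i i
    have := h j j
    omega

/-- transitivity of non-separation. -/
def NTrans {r : ℕ} (A B : Fin r → ℕ) : Prop :=
  ∀ i j k : Fin r, i < j → j < k → ¬ SepP A B i j → ¬ SepP A B j k → ¬ SepP A B i k

lemma ntrans_of_collectable {r : ℕ} {P : Finset (Finset ℕ)} {A B : Fin r → ℕ} (hP : NF r P A B)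
    (h : Collectable r P) : NTrans A B := by
  intro i j k hij hjk h1 h2 h3
  obtain ⟨K, ⟨hK1, hK2, hK3⟩, hc⟩ := h 3
  obtain ⟨e, f, g, hef, heg, hfg, rfl⟩ := Finset.card_eq_three.1 hc
  have key : ∀ x ∈ ({e, f, g} : Finset (Finset ℕ)), ∀ y ∈ ({e, f, g} : Finset (Finset ℕ)), x ≠ y →
      ¬ SepP (en r x) (en r y) i j ∧ ¬ SepP (en r x) (en r y) j k ∧ SepP (en r x) (en r y) i k ∧
      (en r x i ≠ en r y j) ∧ (en r x j ≠ en r y i) ∧ (en r x j ≠ en r y k) ∧ (en r x k ≠ en r y j) := by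
    intro x hx y hy hxy
    have d := disjF_en (hK1 x hx) (hK1 y hy) (hK2 x hx y hy hxy)
    obtain ⟨P', hP', hf⟩ := hK3 x hx y hy hxy
    rw [Set.mem_singleton_iff] at hP'
    subst hP'
    have p := pat_of_forms hP (hK1 x hx) (hK1 y hy) hf
    rw [p.sep d hP.dj, p.sep d hP.dj, p.sep d hP.dj]
    exact ⟨h1, h2, h3, d i j, d j i, d j k, d k j⟩
  have a := key e (by simp) f (by simp) hef
  have b := key e (by simp) g (by simp) heg
  have c := key f (by simp) g (by simp) hfg
  have e1 := en_strictMono r e hij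
  have e2 := en_strictMono r e hjk
  have f1 := en_strictMono r f hij
  have f2 := en_strictMono r f hjk
  have g1 := en_strictMono r g hij
  have g2 := en_strictMono r g hjk
  unfold SepP at a b c
  omega

lemma rank_eq {ι : Type*} [Fintype ι] (u u' : ι → ℕ) (hu : Function.Injective u)
    (hu' : Function.Injective u') (him : Finset.univ.image u = Finset.univ.image u')
    (h : ∀ x y, u x < u y ↔ u' x < u' y) : u = u' := by
  funext x
  set S := Finset.univ.image u with hS
  have c1 : (S.filter (· < u x)) = (Finset.univ.filter (fun z => u z < u x)).image u := by
    ext s; simp [hS]; grind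
  have c2 : (S.filter (· < u' x)) = (Finset.univ.filter (fun z => u' z < u' x)).image u' := by
    rw [him]
    ext s; simp; grind
  have c3 : (S.filter (· < u x)).card = (S.filter (· < u' x)).card := by
    rw [c1, c2, Finset.card_image_of_injective _ hu, Finset.card_image_of_injective _ hu']
    congr 1; ext z; simp [h]
  have m1 : u x ∈ S := by simp [hS]
  have m2 : u' x ∈ S := by rw [him]; simp
  rcases lt_trichotomy (u x) (u' x) with hlt | heq | hlt
  · have : S.filter (· < u x) ⊂ S.filter (· < u' x) := by
      rw [Finset.ssubset_iff_of_subset]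
      · exact ⟨u x, by simp [m1, hlt], by simp⟩
      · intro s hs; simp at hs ⊢; exact ⟨hs.1, by omega⟩
    have := Finset.card_lt_card this
    omega
  · exact heq
  · have : S.filter (· < u' x) ⊂ S.filter (· < u x) := by
      rw [Finset.ssubset_iff_of_subset]
      · exact ⟨u' x, by simp [m2, hlt], by simp⟩
      · intro s hs; simp at hs ⊢; exact ⟨hs.1, by omega⟩
    have := Finset.card_lt_card this
    omega

lemma noncross_aux {ι : Type*} [Fintype ι] (u v v' : ι → ℕ) (hu : Function.Injective u)
    (hv : Function.Injective v) 
    (him : Finset.univ.image v = Finset.univ.image v')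
    (h1 : ∀ x, u x < v x) (h1' : ∀ x, u x < v' x)
    (h2 : ∀ x y, x ≠ y → ¬ (u x < u y ∧ u y < v x ∧ v x < v y))
    (h2' : ∀ x y, x ≠ y → ¬ (u x < u y ∧ u y < v' x ∧ v' x < v' y)) (x : ι) :
    ¬ v x < v' x := by
  intro hlt
  set Ls := Finset.univ.filter (fun z => u x < u z ∧ u z < v x) with hLs
  set R := (Finset.univ.image v).filter (fun s => u x < s ∧ s ≤ v x) with hR
  have a1 : (insert x Ls).image v ⊆ R := by
    intro s hs
    simp only [Finset.mem_image, Finset.mem_insert] at hs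
    obtain ⟨z, hz, rfl⟩ := hs
    rw [hR, Finset.mem_filter]
    refine ⟨by simp, ?_⟩
    rcases hz with rfl | hz
    · exact ⟨h1 z, le_rfl⟩
    · simp only [hLs, Finset.mem_filter] at hz
      have hne : x ≠ z := by rintro rfl; omega
      have := h2 x z hne
      have := h1 z
      omega
  have a2 : R ⊆ Ls.image v' := by
    intro s hs
    rw [hR, Finset.mem_filter, him, Finset.mem_image] at hs
    obtain ⟨⟨z, _, rfl⟩, h3, h4⟩ := hs
    refine Finset.mem_image_of_mem _ ?_
    rw [hLs, Finset.mem_filter]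
    refine ⟨Finset.mem_univ _, ?_⟩
    have hne : z ≠ x := by rintro rfl; omega
    have := h2' z x hne
    have := h1' z
    have := hu.ne hne
    omega
  have b1 := Finset.card_le_card a1
  have b2 := Finset.card_le_card a2
  have b3 : (Ls.image v').card ≤ Ls.card := Finset.card_image_le
  rw [Finset.card_image_of_injective _ hv, Finset.card_insert_of_notMem (by simp [hLs])] at b1
  omega

/-- A family `a` of edges, all of whose pairs form `(A,B)` or `(C,D)`. -/
structure Fam {ι : Type*} {r : ℕ} (A B C D : Fin r → ℕ) (a : ι → Fin r → ℕ) : Prop where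
  mono : ∀ x, StrictMono (a x)
  dj : ∀ x y, x ≠ y → DisjF (a x) (a y)
  pat : ∀ x y, x ≠ y → Pat (a x) (a y) A B ∨ Pat (a x) (a y) C D

lemma Fam.inj {ι : Type*} {r : ℕ} {A B C D : Fin r → ℕ} {a : ι → Fin r → ℕ} (h : Fam A B C D a)
    (l : Fin r) : Function.Injective (fun x => a x l) := by
  intro x y hxy
  by_contra hne
  exact h.dj x y hne l l hxy

lemma fam_det {ι : Type*} [Fintype ι] {r : ℕ} {A B C D : Fin r → ℕ} (hAB : DisjF A B) (hCD : DisjF C D)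
    (hC : StrictMono C) (hD : StrictMono D)
    {i j : Fin r} (hij : i < j) (s1 : SepP A B i j) (s2 : ¬ SepP C D i j)
    {a a' : ι → Fin r → ℕ} (ha : Fam A B C D a) (ha' : Fam A B C D a')
    (hi : ∀ x, a x i = a' x i)
    (him : ∀ l, Finset.univ.image (fun x => a x l) = Finset.univ.image (fun x => a' x l)) :
    a = a' := by
  have scd : C i < D i ↔ C j < D j := by
    unfold SepP at s2
    have := hC hij
    have := hD hij
    have := hCD i j
    have := hCD j i
    omega
  have sgnc : ∀ {a : ι → Fin r → ℕ}, Fam A B C D a → (A i < B i ↔ A j < B j) → ∀ x y, x ≠ y →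
      (a x i < a y i ↔ a x j < a y j) := by
    intro a ha hs x y hxy
    rcases ha.pat x y hxy with p | p
    · exact (p.sgn (ha.dj x y hxy) hAB i j).2 hs
    · exact (p.sgn (ha.dj x y hxy) hCD i j).2 scd
  have nc : ∀ {a : ι → Fin r → ℕ}, Fam A B C D a → ¬ (A i < B i ↔ A j < B j) → ∀ x y, x ≠ y →
      ¬ (a x i < a y i ∧ a y i < a x j ∧ a x j < a y j) := by
    intro a ha hs x y hxy hh
    rcases ha.pat x y hxy with p | p
    · apply hs
      apply (p.sgn (ha.dj x y hxy) hAB i j).1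
      omega
    · have := p.sep (ha.dj x y hxy) hCD i j
      apply s2
      rw [← this]
      have := ha.mono x hij
      unfold SepP
      omega
  have hj : ∀ x, a x j = a' x j := by
    by_cases hs : (A i < B i ↔ A j < B j)
    · have := rank_eq (fun x => a x j) (fun x => a' x j) (ha.inj j) (ha'.inj j) (him j) (by
        intro x y
        by_cases hxy : x = y
        · subst hxy; simp
        · rw [← sgnc ha hs x y hxy, ← sgnc ha' hs x y hxy, hi, hi])
      exact fun x => congrFun this x
    · intro x
      have n1 := noncross_aux (fun x => a x i) (fun x => a x j) (fun x => a' x j) (ha.inj i)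
        (ha.inj j) (him j) (fun x => ha.mono x hij) (fun x => by simp only [hi]; exact ha'.mono x hij)
        (nc ha hs) (by simp only [hi]; exact nc ha' hs) x
      have n2 := noncross_aux (fun x => a' x i) (fun x => a' x j) (fun x => a x j) (ha'.inj i)
        (ha'.inj j) (him j).symm (fun x => ha'.mono x hij) (fun x => by simp only [← hi]; exact ha.mono x hij)
        (nc ha' hs) (by simp only [← hi]; exact nc ha hs) x
      omega
  have hl : ∀ l x, a x l = a' x l := by
    intro l
    have := rank_eq (fun x => a x l) (fun x => a' x l) (ha.inj l) (ha'.inj l) (him l) (by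
      intro x y
      by_cases hxy : x = y
      · subst hxy; simp
      · have d := ha.dj x y hxy
        have d' := ha'.dj x y hxy
        have sp : SepP (a x) (a y) i j ↔ SepP (a' x) (a' y) i j := by
          unfold SepP; rw [hi, hi, hj, hj]
        have sg : (a x i < a y i ↔ a x l < a y l) ↔ (a' x i < a' y i ↔ a' x l < a' y l) := by
          rcases ha.pat x y hxy with p | p <;> rcases ha'.pat x y hxy with p' | p'
          · rw [p.sgn d hAB, p'.sgn d' hAB]
          · rw [p.sep d hAB, p'.sep d' hCD] at sp
            exact absurd (sp.1 s1) s2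
          · rw [p.sep d hCD, p'.sep d' hAB] at sp
            exact absurd (sp.2 s1) s2
          · rw [p.sgn d hCD, p'.sgn d' hCD]
        rw [hi, hi] at sg
        tauto)
    exact fun x => congrFun this x
  funext x l
  exact hl l x

lemma clique_fam {r : ℕ} {P Q : Finset (Finset ℕ)} {A B C D : Fin r → ℕ} (hP : NF r P A B)
    (hQ : NF r Q C D) {K : Finset (Finset ℕ)} (hK : IsClique r {P, Q} K) {ι : Type*}
    (E : ι → Finset ℕ) (hE : ∀ x, E x ∈ K) (hinj : Function.Injective E) :
    Fam A B C D (fun x => en r (E x)) := by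
  obtain ⟨h1, h2, h3⟩ := hK
  refine ⟨fun x => en_strictMono _ _, ?_, ?_⟩
  · intro x y hxy
    exact disjF_en (h1 _ (hE x)) (h1 _ (hE y)) (h2 _ (hE x) _ (hE y) (hinj.ne hxy))
  · intro x y hxy
    obtain ⟨P', hP', hf⟩ := h3 _ (hE x) _ (hE y) (hinj.ne hxy)
    rcases hP' with rfl | hP'
    · exact Or.inl (pat_of_forms hP (h1 _ (hE x)) (h1 _ (hE y)) hf)
    · rw [Set.mem_singleton_iff] at hP'
      subst hP'
      exact Or.inr (pat_of_forms hQ (h1 _ (hE x)) (h1 _ (hE y)) hf)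

lemma clique_en_inj {r : ℕ} {Ps : Set (Finset (Finset ℕ))} {K : Finset (Finset ℕ)}
    (hK : IsClique r Ps K) (l : Fin r) : Set.InjOn (fun e => en r e l) K := by
  intro e he f hf hef
  by_contra hne
  exact disjF_en (hK.1 e he) (hK.1 f hf) (hK.2.1 e he f hf hne) l l hef

lemma clique_det {r : ℕ} {P Q : Finset (Finset ℕ)} {A B C D : Fin r → ℕ} (hP : NF r P A B)
    (hQ : NF r Q C D) {i j : Fin r} (hij : i < j) (s1 : SepP A B i j) (s2 : ¬ SepP C D i j)
    {K K' : Finset (Finset ℕ)} (hK : IsClique r {P, Q} K) (hK' : IsClique r {P, Q} K')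
    (h : ∀ l, K.image (fun e => en r e l) = K'.image (fun e => en r e l)) : K = K' := by
  set S := K.image (fun e => en r e i) with hS
  have ch : ∀ x : S, ∃ e ∈ K, en r e i = x := by
    intro x
    exact Finset.mem_image.1 x.2
  have ch' : ∀ x : S, ∃ e ∈ K', en r e i = x := by
    intro x
    have hx : (x : ℕ) ∈ K.image (fun e => en r e i) := x.2
    rw [h i] at hx
    exact Finset.mem_image.1 hx
  choose E hE1 hE2 using ch
  choose E' hE1' hE2' using ch'
  have im : Finset.univ.image E = K := by
    ext e
    simp only [Finset.mem_image, Finset.mem_univ, true_and]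
    constructor
    · rintro ⟨x, rfl⟩; exact hE1 x
    · intro he
      refine ⟨⟨en r e i, Finset.mem_image_of_mem _ he⟩, ?_⟩
      apply clique_en_inj hK i (hE1 _) he
      simp only [hE2]
  have im' : Finset.univ.image E' = K' := by
    ext e
    simp only [Finset.mem_image, Finset.mem_univ, true_and]
    constructor
    · rintro ⟨x, rfl⟩; exact hE1' x
    · intro he
      refine ⟨⟨en r e i, by rw [hS, h i]; exact Finset.mem_image_of_mem _ he⟩, ?_⟩
      apply clique_en_inj hK' i (hE1' _) he
      simp only [hE2']
  have inj : Function.Injective E := by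
    intro x y hxy
    apply Subtype.ext
    rw [← hE2 x, ← hE2 y, hxy]
  have inj' : Function.Injective E' := by
    intro x y hxy
    apply Subtype.ext
    rw [← hE2' x, ← hE2' y, hxy]
  have := fam_det hP.dj hQ.dj hQ.mA hQ.mB hij s1 s2 (clique_fam hP hQ hK E hE1 inj)
    (clique_fam hP hQ hK' E' hE1' inj') (fun x => by rw [hE2, hE2']) (by
      intro l
      have := h l
      rw [← im, ← im', Finset.image_image, Finset.image_image] at this
      exact this)
  rw [← im, ← im']
  congr 1
  funext x
  rw [← image_en (hK.1 _ (hE1 x)), ← image_en (hK'.1 _ (hE1' x))]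
  have := congrFun this x
  rw [this]

lemma list_split (W : Set (ℕ → Bool)) (r : ℕ) (S : ℕ → Prop)
    (hS : ∀ a < r, S a → ∃ t, 1 ≤ t ∧ a + t ≤ r ∧ S (a + t) ∧ ∀ w ∈ W, ∃ b : Bool,
      ∀ u < t, w (2 * a + u) = b ∧ w (2 * a + t + u) = !b) :
    ∀ d a, a + d = r → S a → ∃ lam : List ℕ, (∀ t ∈ lam, 1 ≤ t) ∧ ∀ w ∈ W,
      ∃ bs : List Bool, bs.length = lam.length ∧
      (List.range' (2 * a) (2 * d)).map w =
        (List.zipWith (fun t b => List.replicate t b ++ List.replicate t !b) lam bs).flatten := by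
  intro d
  induction d using Nat.strong_induction_on with
  | _ d ih =>
    intro a had hSa
    by_cases hd : d = 0
    · subst hd
      exact ⟨[], by simp, fun w _ => ⟨[], by simp⟩⟩
    · obtain ⟨t, ht1, ht2, ht3, ht4⟩ := hS a (by omega) hSa
      obtain ⟨lam, h1, h2⟩ := ih (d - t) (by omega) (a + t) (by omega) ht3
      refine ⟨t :: lam, ?_, ?_⟩
      · intro s hs
        rcases List.mem_cons.1 hs with rfl | hs
        · exact ht1
        · exact h1 s hs
      · intro w hw
        obtain ⟨bs, hb1, hb2⟩ := h2 w hw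
        obtain ⟨b, hb⟩ := ht4 w hw
        refine ⟨b :: bs, by simp [hb1], ?_⟩
        rw [List.zipWith_cons_cons, List.flatten_cons, ← hb2]
        have e : 2 * d = t + (t + 2 * (d - t)) := by omega
        rw [e, ← List.range'_append_1, ← List.range'_append_1, List.map_append, List.map_append, ← List.append_assoc]
        have e2 : 2 * a + t + t = 2 * (a + t) := by ring
        rw [e2]
        congr 1
        congr 1
        · rw [List.eq_replicate_iff]
          refine ⟨by simp, ?_⟩
          intro c hc
          simp only [List.mem_map, List.mem_range'_1] at hc
          obtain ⟨p, hp, rfl⟩ := hc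
          have := (hb (p - 2 * a) (by omega)).1
          rwa [show 2 * a + (p - 2 * a) = p by omega] at this
        · rw [List.eq_replicate_iff]
          refine ⟨by simp, ?_⟩
          intro c hc
          simp only [List.mem_map, List.mem_range'_1] at hc
          obtain ⟨p, hp, rfl⟩ := hc
          have := (hb (p - (2 * a + t)) (by omega)).2
          rwa [show 2 * a + t + (p - (2 * a + t)) = p by omega] at this

lemma NF.symm {r : ℕ} {P : Finset (Finset ℕ)} {A B : Fin r → ℕ} (h : NF r P A B) : NF r P B A :=
  ⟨h.mB, h.mA, fun l m => (h.dj m l).symm, by rw [h.eq, Finset.pair_comm], by rw [← h.un, Finset.union_comm]⟩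

lemma SepP.symm {r : ℕ} {A B : Fin r → ℕ} {i j : Fin r} (h : SepP A B i j) : SepP B A i j :=
  ⟨h.2, h.1⟩

/-- position formula. -/
lemma NF.pos {r : ℕ} {P : Finset (Finset ℕ)} {A B : Fin r → ℕ} (h : NF r P A B) (l : Fin r) (c : ℕ)
    (hcr : c ≤ r) (hc : ∀ m, B m < A l ↔ (m : ℕ) < c) : A l = 1 + l + c := by
  have h1 : (Finset.Icc 1 (2 * r)).filter (fun y => y < A l) =
      (Finset.univ.filter (fun m : Fin r => m < l)).image A ∪
      (Finset.univ.filter (fun m : Fin r => (m : ℕ) < c)).image B := by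
    rw [← h.un]
    ext y
    simp only [Finset.mem_filter, Finset.mem_union, Finset.mem_image, Finset.mem_univ, true_and]
    constructor
    · rintro ⟨⟨m, rfl⟩ | ⟨m, rfl⟩, hy⟩
      · exact Or.inl ⟨m, h.mA.lt_iff_lt.1 hy, rfl⟩
      · exact Or.inr ⟨m, (hc m).1 hy, rfl⟩
    · rintro (⟨m, hm, rfl⟩ | ⟨m, hm, rfl⟩)
      · exact ⟨Or.inl ⟨m, rfl⟩, h.mA hm⟩
      · exact ⟨Or.inr ⟨m, rfl⟩, (hc m).2 hm⟩
  have hA : A l ∈ Finset.Icc 1 (2 * r) := by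
    rw [← h.un]; simp
  rw [Finset.mem_Icc] at hA
  have h2 : (Finset.Icc 1 (2 * r)).filter (fun y => y < A l) = Finset.Ico 1 (A l) := by
    ext y; simp only [Finset.mem_filter, Finset.mem_Icc, Finset.mem_Ico]; omega
  have h3 := congrArg Finset.card h1
  rw [h2, Nat.card_Ico, Finset.card_union_of_disjoint, Finset.card_image_of_injective _ h.mA.injective,
    Finset.card_image_of_injective _ h.mB.injective] at h3
  · have e1 : (Finset.univ.filter (fun m : Fin r => m < l)).card = l := by
      have := Fin.card_Iio l
      rw [← this]; congr 1; ext m; simp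
    have e2 : (Finset.univ.filter (fun m : Fin r => (m : ℕ) < c)).card = c := by
      rw [Fin.card_filter_val_lt]; omega
    rw [e1, e2] at h3
    omega
  · rw [Finset.disjoint_left]
    intro y hy hy'
    simp only [Finset.mem_image] at hy hy'
    obtain ⟨m, _, rfl⟩ := hy
    obtain ⟨m', _, hm'⟩ := hy'
    exact h.dj m m' hm'.symm

lemma blk_first {r : ℕ} {P : Finset (Finset ℕ)} {A B : Fin r → ℕ} (hP : NF r P A B) (a t : ℕ)
    (hat : a + t ≤ r)
    (h1 : ∀ m l : Fin r, (m : ℕ) < a → a ≤ (l : ℕ) → SepP A B m l)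
    (h2 : ∀ m l : Fin r, a ≤ (m : ℕ) → m < l → (l : ℕ) < a + t → ¬ SepP A B m l)
    (l : Fin r) (hl : a ≤ (l : ℕ)) (hl' : (l : ℕ) < a + t) (hAB : A l < B l) : A l = 1 + l + a := by
  apply hP.pos l a (by omega)
  intro m
  constructor
  · intro hm
    by_contra hma
    rcases lt_trichotomy m l with h | h | h
    · have := h2 m l (by omega) h hl'
      unfold SepP at this
      have := hP.mA h
      have := hP.mB h
      have := hP.dj l m
      have := hP.dj m l
      omega
    · subst h; omega
    · have := hP.mB h
      omega
  · intro hm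
    exact (h1 m l hm hl).2

lemma blk_second {r : ℕ} {P : Finset (Finset ℕ)} {A B : Fin r → ℕ} (hP : NF r P A B) (a t : ℕ)
    (hat : a + t ≤ r)
    (h2 : ∀ m l : Fin r, a ≤ (m : ℕ) → m < l → (l : ℕ) < a + t → ¬ SepP A B m l)
    (h3 : ∀ m l : Fin r, (m : ℕ) < a + t → a + t ≤ (l : ℕ) → SepP A B m l)
    (l : Fin r) (hl : a ≤ (l : ℕ)) (hl' : (l : ℕ) < a + t) (hAB : B l < A l) :
    A l = 1 + l + (a + t) := by
  apply hP.pos l (a + t) (by omega)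
  intro m
  constructor
  · intro hm
    by_contra hma
    have := (h3 l m hl' (by omega)).1
    omega
  · intro hm
    rcases lt_trichotomy m l with h | h | h
    · have := hP.mB h
      omega
    · subst h; omega
    · have := h2 l m (by omega) h hm
      unfold SepP at this
      have := hP.mA h
      have := hP.mB h
      have := hP.dj l m
      have := hP.dj m l
      omega

lemma blk_sgn {r : ℕ} {P : Finset (Finset ℕ)} {A B : Fin r → ℕ} (hP : NF r P A B) {i j : Fin r}
    (hij : i < j) (h : ¬ SepP A B i j) : A i < B i ↔ A j < B j := by
  unfold SepP at h
  have := hP.mA hij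
  have := hP.mB hij
  have := hP.dj i j
  have := hP.dj j i
  omega

lemma blk_word {r : ℕ} {P : Finset (Finset ℕ)} {A B : Fin r → ℕ} (hP : NF r P A B) (a t : ℕ)
    (hat : a + t ≤ r)
    (h1 : ∀ m l : Fin r, (m : ℕ) < a → a ≤ (l : ℕ) → SepP A B m l)
    (h2 : ∀ m l : Fin r, a ≤ (m : ℕ) → m < l → (l : ℕ) < a + t → ¬ SepP A B m l)
    (h3 : ∀ m l : Fin r, (m : ℕ) < a + t → a + t ≤ (l : ℕ) → SepP A B m l) :
    ∃ b : Bool, ∀ u < t, decide (2 * a + u + 1 ∈ Finset.univ.image A) = b ∧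
      decide (2 * a + t + u + 1 ∈ Finset.univ.image A) = !b := by
  by_cases ht : t = 0
  · subst ht; exact ⟨true, fun u hu => by omega⟩
  have nB : ∀ {y}, y ∈ Finset.univ.image B → y ∉ Finset.univ.image A := by
    intro y hy hy'
    obtain ⟨m, _, rfl⟩ := Finset.mem_image.1 hy
    obtain ⟨l, _, hl⟩ := Finset.mem_image.1 hy'
    exact hP.dj l m hl
  have h1' : ∀ m l : Fin r, (m : ℕ) < a → a ≤ (l : ℕ) → SepP B A m l := fun m l x y => (h1 m l x y).symm
  have h2' : ∀ m l : Fin r, a ≤ (m : ℕ) → m < l → (l : ℕ) < a + t → ¬ SepP B A m l :=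
    fun m l x y z h => h2 m l x y z h.symm
  have h3' : ∀ m l : Fin r, (m : ℕ) < a + t → a + t ≤ (l : ℕ) → SepP B A m l :=
    fun m l x y => (h3 m l x y).symm
  have sg : ∀ l : Fin r, a ≤ (l : ℕ) → (l : ℕ) < a + t →
      (A ⟨a, by omega⟩ < B ⟨a, by omega⟩ ↔ A l < B l) := by
    intro l hl hl'
    by_cases hla : (l : ℕ) = a
    · have : l = ⟨a, by omega⟩ := Fin.ext hla
      rw [this]
    · have hlt : (⟨a, by omega⟩ : Fin r) < l := by
        rw [Fin.lt_def]; simp; omega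
      exact blk_sgn hP hlt (h2 _ l le_rfl hlt hl')
  by_cases hs : A ⟨a, by omega⟩ < B ⟨a, by omega⟩
  · refine ⟨true, fun u hu => ⟨?_, ?_⟩⟩
    · rw [decide_eq_true_iff, Finset.mem_image]
      have hl := (sg ⟨a + u, by omega⟩ (by simp) (by simp; omega)).1 hs
      refine ⟨⟨a + u, by omega⟩, Finset.mem_univ _, ?_⟩
      rw [blk_first hP a t hat h1 h2 ⟨a + u, by omega⟩ (by simp) (by simp; omega) hl]
      simp only; ring
    · rw [Bool.not_true, decide_eq_false_iff_not]
      apply nB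
      rw [Finset.mem_image]
      have hl := (sg ⟨a + u, by omega⟩ (by simp) (by simp; omega)).1 hs
      refine ⟨⟨a + u, by omega⟩, Finset.mem_univ _, ?_⟩
      rw [blk_second hP.symm a t hat h2' h3' ⟨a + u, by omega⟩ (by simp) (by simp; omega) hl]
      simp only; ring
  · refine ⟨false, fun u hu => ⟨?_, ?_⟩⟩
    · rw [decide_eq_false_iff_not]
      apply nB
      rw [Finset.mem_image]
      have hl := (sg ⟨a + u, by omega⟩ (by simp) (by simp; omega)).not.1 hs
      have := hP.dj ⟨a + u, by omega⟩ ⟨a + u, by omega⟩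
      refine ⟨⟨a + u, by omega⟩, Finset.mem_univ _, ?_⟩
      rw [blk_first hP.symm a t hat h1' h2' ⟨a + u, by omega⟩ (by simp) (by simp; omega) (by omega)]
      simp only; ring
    · rw [Bool.not_false, decide_eq_true_iff, Finset.mem_image]
      have hl := (sg ⟨a + u, by omega⟩ (by simp) (by simp; omega)).not.1 hs
      have := hP.dj ⟨a + u, by omega⟩ ⟨a + u, by omega⟩
      refine ⟨⟨a + u, by omega⟩, Finset.mem_univ _, ?_⟩
      rw [blk_second hP a t hat h2 h3 ⟨a + u, by omega⟩ (by simp) (by simp; omega) (by omega)]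
      simp only; ring

lemma patternWord_eq {r : ℕ} {P : Finset (Finset ℕ)} {A B : Fin r → ℕ} (hP : NF r P A B)
    (hr : 0 < r) (h1 : A ⟨0, hr⟩ = 1) :
    patternWord r P = (List.range' (2 * 0) (2 * r)).map
      (fun p => decide (p + 1 ∈ Finset.univ.image A)) := by
  unfold patternWord
  rw [List.range_eq_range']
  apply List.map_congr_left
  intro p _
  have : (∃ e ∈ P, 1 ∈ e ∧ p + 1 ∈ e) ↔ p + 1 ∈ Finset.univ.image A := by
    rw [hP.eq]
    constructor
    · rintro ⟨e, he, h1e, hp⟩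
      rcases Finset.mem_insert.1 he with rfl | he
      · exact hp
      · rw [Finset.mem_singleton] at he
        subst he
        obtain ⟨m, _, hm⟩ := Finset.mem_image.1 h1e
        exact absurd (h1.trans hm.symm) (hP.dj _ m)
    · intro hp
      refine ⟨_, Finset.mem_insert_self _ _, ?_, hp⟩
      rw [← h1]; simp
  simp only [this]

lemma SepP.mono {r : ℕ} {P : Finset (Finset ℕ)} {A B : Fin r → ℕ} (hP : NF r P A B) {i j i' j' : Fin r}
    (hi : i' ≤ i) (hj : j ≤ j') (h : SepP A B i j) : SepP A B i' j' := by
  unfold SepP at *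
  have := hP.mA.monotone hi
  have := hP.mB.monotone hi
  have := hP.mA.monotone hj
  have := hP.mB.monotone hj
  omega

lemma common_comp {r : ℕ} (hr : 0 < r) {P Q : Finset (Finset ℕ)} {A B C D : Fin r → ℕ}
    (hP : NF r P A B) (hQ : NF r Q C D) (hA : A ⟨0, hr⟩ = 1) (hC : C ⟨0, hr⟩ = 1)
    (hn : NTrans A B) (hs : ∀ i j, i < j → (SepP A B i j ↔ SepP C D i j)) :
    ∃ lam : List ℕ, HasComposition r P lam ∧ HasComposition r Q lam := by
  obtain ⟨lam, h1, h2⟩ := list_split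
    {fun p => decide (p + 1 ∈ Finset.univ.image A), fun p => decide (p + 1 ∈ Finset.univ.image C)} r
    (fun a => ∀ m l : Fin r, (m : ℕ) < a → a ≤ (l : ℕ) → SepP A B m l) (by
      intro a ha hSa
      have hex : ∃ t, 1 ≤ t ∧ (a + t = r ∨ ∃ h : a + t < r, SepP A B ⟨a, ha⟩ ⟨a + t, h⟩) :=
        ⟨r - a, by omega, Or.inl (by omega)⟩
      obtain ⟨ht1, ht2⟩ := Nat.find_spec hex
      have ht3 := fun s (hs : s < Nat.find hex) => Nat.find_min hex hs
      set t := Nat.find hex with htdef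
      have hat : a + t ≤ r := by
        rcases ht2 with h | ⟨h, _⟩ <;> omega
      have ns : ∀ l : Fin r, a < (l : ℕ) → (l : ℕ) < a + t → ¬ SepP A B ⟨a, ha⟩ l := by
        intro l hl hl' hsep
        have := ht3 (l - a) (by omega)
        apply this
        refine ⟨by omega, Or.inr ⟨by omega, ?_⟩⟩
        have e : (⟨a + (l - a), by omega⟩ : Fin r) = l := Fin.ext (by simp; omega)
        rw [e]; exact hsep
      have b2 : ∀ m l : Fin r, a ≤ (m : ℕ) → m < l → (l : ℕ) < a + t → ¬ SepP A B m l := by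
        intro m l hm hml hl hsep
        rw [Fin.lt_def] at hml
        exact ns l (by omega) hl (hsep.mono hP (by rw [Fin.le_def]; exact hm) le_rfl)
      have b3 : ∀ m l : Fin r, (m : ℕ) < a + t → a + t ≤ (l : ℕ) → SepP A B m l := by
        intro m l hm hl
        by_cases hma : (m : ℕ) < a
        · exact hSa m l hma (by omega)
        · rcases ht2 with h | ⟨h, hsep⟩
          · omega
          · have hgoal : SepP A B m ⟨a + t, h⟩ := by
              by_cases hma' : (m : ℕ) = a
              · have : m = ⟨a, ha⟩ := Fin.ext hma'
                rw [this]; exact hsep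
              · by_contra hc
                exact hn ⟨a, ha⟩ m ⟨a + t, h⟩ (by rw [Fin.lt_def]; simp; omega)
                  (by rw [Fin.lt_def]; simp; omega) (ns m (by omega) hm) hc hsep
            exact hgoal.mono hP le_rfl (by rw [Fin.le_def]; exact hl)
      refine ⟨t, ht1, hat, b3, ?_⟩
      intro w hw
      rcases hw with rfl | hw
      · exact blk_word hP a t hat hSa b2 b3
      · rw [Set.mem_singleton_iff] at hw
        subst hw
        refine blk_word hQ a t hat ?_ ?_ ?_
        · intro m l hm hl
          exact (hs m l (by rw [Fin.lt_def]; omega)).1 (hSa m l hm hl)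
        · intro m l hm hml hl h
          exact b2 m l hm hml hl ((hs m l hml).2 h)
        · intro m l hm hl
          exact (hs m l (by rw [Fin.lt_def]; omega)).1 (b3 m l hm hl))
    r 0 (by omega) (by intro m l hm; omega)
  refine ⟨lam, ⟨h1, ?_⟩, ⟨h1, ?_⟩⟩
  · rw [patternWord_eq hP hr hA]
    exact h2 _ (by simp)
  · rw [patternWord_eq hQ hr hC]
    exact h2 _ (by simp)

noncomputable def bst {r : ℕ} (A B : Fin r → ℕ) (l : Fin r) : ℕ :=
  (Finset.univ.filter (fun i => SepP A B i l)).card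

lemma sepP_lt {r : ℕ} {P : Finset (Finset ℕ)} {A B : Fin r → ℕ} (hP : NF r P A B) {i j : Fin r}
    (h : SepP A B i j) : i < j := by
  by_contra hc
  have h1 := hP.mA.monotone (not_lt.1 hc)
  have h2 := hP.mB.monotone (not_lt.1 hc)
  unfold SepP at h
  omega

lemma bst_lt {r : ℕ} {P : Finset (Finset ℕ)} {A B : Fin r → ℕ} (hP : NF r P A B) {i j : Fin r}
    (h : SepP A B i j) : bst A B i < bst A B j := by
  have hij := sepP_lt hP h
  apply Finset.card_lt_card
  rw [Finset.ssubset_iff_of_subset]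
  · refine ⟨i, by simpa using h, ?_⟩
    simp only [Finset.mem_filter, Finset.mem_univ, true_and]
    intro h'
    exact lt_irrefl _ (sepP_lt hP h')
  · intro x hx
    simp only [Finset.mem_filter, Finset.mem_univ, true_and] at hx ⊢
    exact hx.mono hP le_rfl hij.le

lemma bst_eq {r : ℕ} {P : Finset (Finset ℕ)} {A B : Fin r → ℕ} (hP : NF r P A B) (hn : NTrans A B)
    {l m : Fin r} (hlm : l < m) (h : ¬ SepP A B l m) : bst A B l = bst A B m := by
  unfold bst
  congr 1
  ext i
  simp only [Finset.mem_filter, Finset.mem_univ, true_and]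
  constructor
  · intro hx
    exact hx.mono hP le_rfl hlm.le
  · intro hx
    by_contra hc
    rcases lt_trichotomy i l with hil | rfl | hil
    · exact hn i l m hil hlm hc h hx
    · exact h hx
    · exact h (hx.mono hP hil.le le_rfl)

lemma bst_le {r : ℕ} (A B : Fin r → ℕ) (l : Fin r) : bst A B l ≤ r := by
  unfold bst
  exact (Finset.card_le_univ _).trans (by simp)

lemma lex_lt {q1 q2 l m r : ℕ} (h : q1 < q2) (hl : l < r) : q1 * r + l < q2 * r + m := by
  have : (q1 + 1) * r ≤ q2 * r := Nat.mul_le_mul_right _ h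
  have e : (q1 + 1) * r = q1 * r + r := by ring
  omega

lemma exists_pos {r : ℕ} {P : Finset (Finset ℕ)} {A B : Fin r → ℕ} (hP : NF r P A B)
    (hn : NTrans A B) (k : ℕ) : ∃ pos : Fin k → Fin r → ℕ, (∀ x, StrictMono (pos x)) ∧
      (∀ x l, pos x l < (r + 1) * r * k) ∧
      ∀ x y, x < y → ∀ l m, pos x l ≠ pos y m ∧ (pos x l < pos y m ↔ A l < B m) := by
  set sg : Fin k → Fin r → ℕ := fun x l => if A l < B l then (x : ℕ) else k - 1 - x with hsg
  have sgk : ∀ x l, sg x l < k := by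
    intro x l
    have := x.2
    simp only [hsg]; split_ifs <;> omega
  set q : Fin k → Fin r → ℕ := fun x l => bst A B l * k + sg x l with hq
  refine ⟨fun x l => q x l * r + l, ?_, ?_, ?_⟩
  · intro x l m hlm
    simp only
    by_cases h : SepP A B l m
    · apply lex_lt _ l.2
      exact lex_lt (bst_lt hP h) (sgk x l)
    · have e : q x l = q x m := by
        simp only [hq, hsg]
        rw [bst_eq hP hn hlm h]
        simp only [blk_sgn hP hlm h]
      rw [e]
      have : (l : ℕ) < m := hlm
      omega
  · intro x l
    simp only
    have h1 : q x l < (r + 1) * k := by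
      simp only [hq]
      have := Nat.mul_le_mul_right k (bst_le A B l)
      have := sgk x l
      have e : (r + 1) * k = r * k + k := by ring
      omega
    have := lex_lt (m := 0) h1 l.2
    calc _ < _ := this
      _ = _ := by ring
  · intro x y hxy l m
    have hxy' : (x : ℕ) < y := hxy
    simp only
    -- nonseparated case
    have ns : ∀ l m : Fin r, bst A B l = bst A B m → (A l < B l ↔ A m < B m) →
        (A l < B m ↔ A l < B l) →
        (q x l * r + l ≠ q y m * r + m ∧ (q x l * r + l < q y m * r + m ↔ A l < B m)) := by
      intro l m hb hs hc
      have := y.2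
      by_cases hA : A l < B l
      · have h1 : q x l < q y m := by
          simp only [hq, hsg, hb]
          rw [if_pos hA, if_pos (hs.1 hA)]; omega
        have := lex_lt (m := (m : ℕ)) h1 l.2
        rw [hc]
        simp only [hA, iff_true]
        omega
      · have h1 : q y m < q x l := by
          simp only [hq, hsg, hb]
          rw [if_neg hA, if_neg (hs.not.1 hA)]; omega
        have := lex_lt (m := (l : ℕ)) h1 m.2
        rw [hc]
        simp only [hA, iff_false]
        omega
    by_cases h1 : SepP A B l m
    · have a : q x l < q y m := lex_lt (bst_lt hP h1) (sgk x l)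
      have := lex_lt (m := (m : ℕ)) a l.2
      have := h1.1
      omega
    by_cases h2 : SepP A B m l
    · have a : q y m < q x l := lex_lt (bst_lt hP h2) (sgk y m)
      have := lex_lt (m := (l : ℕ)) a m.2
      have := h2.2
      omega
    rcases lt_trichotomy l m with h | rfl | h
    · refine ns l m (bst_eq hP hn h h1) (blk_sgn hP h h1) ?_
      unfold SepP at h1
      have := hP.mA h
      have := hP.mB h
      have := hP.dj l m
      have := hP.dj m l
      omega
    · exact ns l l rfl Iff.rfl Iff.rfl
    · refine ns l m (bst_eq hP hn h h2).symm (blk_sgn hP h h2).symm ?_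
      unfold SepP at h2
      have := hP.mA h
      have := hP.mB h
      have := hP.dj l m
      have := hP.dj m l
      omega

lemma clique_of_family {r k : ℕ} (hr : 0 < r) {P : Finset (Finset ℕ)} {A B : Fin r → ℕ} (hP : NF r P A B)
    (c : Fin k → Fin r → ℕ) (T : Finset (Fin k)) (hm : ∀ x ∈ T, StrictMono (c x))
    (hc : ∀ x ∈ T, ∀ y ∈ T, x < y → ∀ l m, c x l ≠ c y m ∧ (c x l < c y m ↔ A l < B m)) :
    IsClique r {P} (T.image (fun x => Finset.univ.image (c x))) ∧
    (T.image (fun x => Finset.univ.image (c x))).card = T.card := by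
  have dj : ∀ x ∈ T, ∀ y ∈ T, x ≠ y → DisjF (c x) (c y) := by
    intro x hx y hy hxy l m
    rcases lt_or_gt_of_ne hxy with h | h
    · exact (hc x hx y hy h l m).1
    · exact (hc y hy x hx h m l).1.symm
  refine ⟨⟨?_, ?_, ?_⟩, ?_⟩
  · intro e he
    obtain ⟨x, hx, rfl⟩ := Finset.mem_image.1 he
    rw [Finset.card_image_of_injective _ (hm x hx).injective]; simp
  · intro e he f hf hef
    obtain ⟨x, hx, rfl⟩ := Finset.mem_image.1 he
    obtain ⟨y, hy, rfl⟩ := Finset.mem_image.1 hf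
    have hxy : x ≠ y := by rintro rfl; exact hef rfl
    rw [Finset.disjoint_left]
    intro z hz hz'
    obtain ⟨l, _, rfl⟩ := Finset.mem_image.1 hz
    obtain ⟨m, _, h⟩ := Finset.mem_image.1 hz'
    exact dj x hx y hy hxy l m h.symm
  · intro e he f hf hef
    obtain ⟨x, hx, rfl⟩ := Finset.mem_image.1 he
    obtain ⟨y, hy, rfl⟩ := Finset.mem_image.1 hf
    have hxy : x ≠ y := by rintro rfl; exact hef rfl
    refine ⟨P, rfl, ?_⟩
    rcases lt_or_gt_of_ne hxy with h | h
    · exact forms_of_cmp hP (hm x hx) (hm y hy) (dj x hx y hy hxy) (fun l m => (hc x hx y hy h l m).2)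
    · apply forms_of_cmp hP.symm (hm x hx) (hm y hy) (dj x hx y hy hxy)
      intro l m
      have h1 := hc y hy x hx h m l
      have := hP.dj m l
      omega
  · apply Finset.card_image_of_injOn
    intro x hx y hy hxy
    by_contra hne
    have h1 : c x ⟨0, hr⟩ ∈ Finset.univ.image (c x) := by simp
    simp only at hxy
    rw [hxy] at h1
    obtain ⟨m, _, h⟩ := Finset.mem_image.1 h1
    exact dj x hx y hy hne _ m h.symm

lemma collectable_of_ntrans {r : ℕ} (hr : 0 < r) {P : Finset (Finset ℕ)} {A B : Fin r → ℕ}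
    (hP : NF r P A B) (hn : NTrans A B) : Collectable r P := by
  intro k
  obtain ⟨pos, h1, _, h3⟩ := exists_pos hP hn k
  have := clique_of_family hr hP pos Finset.univ (fun x _ => h1 x) (fun x _ y _ h => h3 x y h)
  exact ⟨_, this.1, by rw [this.2]; simp⟩

/-- mismatched patterns have different separation relations. -/
lemma mismatch_sep {r : ℕ} (hr : 0 < r) {P Q : Finset (Finset ℕ)} {A B C D : Fin r → ℕ}
    (hP : NF r P A B) (hQ : NF r Q C D) (hA : A ⟨0, hr⟩ = 1) (hC : C ⟨0, hr⟩ = 1)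
    (hm : Mismatch r P Q) : ∃ i j, i < j ∧ ¬ (SepP A B i j ↔ SepP C D i j) := by
  by_contra hcon
  push Not at hcon
  have tr : NTrans A B ↔ NTrans C D := by
    unfold NTrans
    constructor
    · intro h i j k hij hjk
      rw [← hcon i j hij, ← hcon j k hjk, ← hcon i k (hij.trans hjk)]
      exact h i j k hij hjk
    · intro h i j k hij hjk
      rw [hcon i j hij, hcon j k hjk, hcon i k (hij.trans hjk)]
      exact h i j k hij hjk
  rcases hm.2 with ⟨h1, h2⟩ | ⟨h1, h2⟩ | ⟨h1, h2, h3⟩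
  · exact h2 (collectable_of_ntrans hr hQ (tr.1 (ntrans_of_collectable hP h1)))
  · exact h1 (collectable_of_ntrans hr hP (tr.2 (ntrans_of_collectable hQ h2)))
  · exact h3 (common_comp hr hP hQ hA hC (ntrans_of_collectable hP h1) hcon)

/-- A `{P,Q}`-clique is determined by its level sets. -/
lemma mismatch_det {r : ℕ} (hr : 2 ≤ r) {P Q : Finset (Finset ℕ)} (hP : IsOrderedMatching r 2 P)
    (hQ : IsOrderedMatching r 2 Q) (hm : Mismatch r P Q)
    {K K' : Finset (Finset ℕ)} (hK : IsClique r {P, Q} K) (hK' : IsClique r {P, Q} K')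
    (h : ∀ l, K.image (fun e => en r e l) = K'.image (fun e => en r e l)) : K = K' := by
  obtain ⟨A, B, nP, hA⟩ := exists_NF r hr P hP
  obtain ⟨C, D, nQ, hC⟩ := exists_NF r hr Q hQ
  obtain ⟨i, j, hij, hs⟩ := mismatch_sep (by omega) nP nQ hA hC hm
  by_cases h1 : SepP A B i j
  · exact clique_det nP nQ hij h1 (by tauto) hK hK' h
  · rw [Set.pair_comm] at hK hK'
    exact clique_det nQ nP hij (by tauto) h1 hK hK' h

lemma IsClique.subset {r : ℕ} {Ps : Set (Finset (Finset ℕ))} {K K' : Finset (Finset ℕ)}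
    (h : IsClique r Ps K) (hs : K' ⊆ K) : IsClique r Ps K' :=
  ⟨fun e he => h.1 e (hs he), fun e he f hf => h.2.1 e (hs he) f (hs hf),
    fun e he f hf => h.2.2 e (hs he) f (hs hf)⟩

lemma zClique_bdd (r : ℕ) (Ps : Set (Finset (Finset ℕ))) (M : Finset (Finset ℕ)) :
    BddAbove {k | ∃ K : Finset (Finset ℕ), K ⊆ M ∧ IsClique r Ps K ∧ K.card = k} := by
  refine ⟨M.card, ?_⟩
  rintro k ⟨K, h, _, rfl⟩
  exact Finset.card_le_card h

lemma exists_clique_of_le {r k : ℕ} {Ps : Set (Finset (Finset ℕ))} {M : Finset (Finset ℕ)}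
    (h : k ≤ zClique r Ps M) : ∃ K, K ⊆ M ∧ IsClique r Ps K ∧ K.card = k := by
  have := Nat.sSup_mem (s := {k | ∃ K : Finset (Finset ℕ), K ⊆ M ∧ IsClique r Ps K ∧ K.card = k})
    ⟨0, ∅, by simp, ⟨by simp, by simp, by simp⟩, rfl⟩ (zClique_bdd r Ps M)
  obtain ⟨K, h1, h2, h3⟩ := this
  obtain ⟨K', h4, h5⟩ := Finset.exists_subset_card_eq (s := K) (n := k) (by rw [h3]; exact h)
  exact ⟨K', h4.trans h1, h2.subset h4, h5⟩

lemma le_zClique {r : ℕ} {Ps : Set (Finset (Finset ℕ))} {M K : Finset (Finset ℕ)}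
    (h : K ⊆ M) (hK : IsClique r Ps K) : K.card ≤ zClique r Ps M :=
  le_csSup (zClique_bdd r Ps M) ⟨K, h, hK, rfl⟩

lemma count_cliques {r : ℕ} (hr : 2 ≤ r) {P Q : Finset (Finset ℕ)} (hP : IsOrderedMatching r 2 P)
    (hQ : IsOrderedMatching r 2 Q) (hm : Mismatch r P Q) (n k : ℕ) :
    (((Finset.Icc 1 (r * n)).powerset.powerset).filter
      (fun K => IsClique r {P, Q} K ∧ K.card = k)).card ≤ (Nat.choose (r * n) k) ^ r := by
  have hc : (Fintype.piFinset (fun _ : Fin r => (Finset.Icc 1 (r * n)).powersetCard k)).card =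
      (Nat.choose (r * n) k) ^ r := by
    simp
  rw [← hc]
  apply Finset.card_le_card_of_injOn (fun K l => K.image (fun e => en r e l))
  · intro K hK
    rw [Finset.mem_coe, Finset.mem_filter, Finset.mem_powerset] at hK
    obtain ⟨h1, h2, h3⟩ := hK
    simp only [Fintype.coe_piFinset, Set.mem_pi, Set.mem_univ, true_implies, Finset.mem_coe, Finset.mem_powersetCard]
    intro l
    refine ⟨?_, ?_⟩
    · intro x hx
      obtain ⟨e, he, rfl⟩ := Finset.mem_image.1 hx
      exact Finset.mem_powerset.1 (h1 he) (en_mem (h2.1 e he) l)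
    · rw [Finset.card_image_of_injOn (clique_en_inj h2 l), h3]
  · intro K hK K' hK' h
    rw [Finset.mem_coe, Finset.mem_filter] at hK hK'
    exact mismatch_det hr hP hQ hm hK.2.1 hK'.2.1 (fun l => congrFun h l)

lemma prob_le_count {r : ℕ} (hr : 2 ≤ r) {P Q : Finset (Finset ℕ)} (hP : IsOrderedMatching r 2 P)
    (hQ : IsOrderedMatching r 2 Q) (hm : Mismatch r P Q) (n k : ℕ) (hk : k ≤ n) :
    ((matchingFamilies r n).filter (fun M => k ≤ zClique r {P, Q} M)).card ≤
      (Nat.choose (r * n) k) ^ r * gN r (n - k) := by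
  set 𝒦 := ((Finset.Icc 1 (r * n)).powerset.powerset).filter
      (fun K => IsClique r {P, Q} K ∧ K.card = k) with h𝒦
  have hsub : (matchingFamilies r n).filter (fun M => k ≤ zClique r {P, Q} M) ⊆
      𝒦.biUnion (fun K => (matchingFamilies r n).filter (fun M => K ⊆ M)) := by
    intro M hM
    rw [Finset.mem_filter] at hM
    obtain ⟨K, h1, h2, h3⟩ := exists_clique_of_le hM.2
    rw [Finset.mem_biUnion]
    refine ⟨K, ?_, Finset.mem_filter.2 ⟨hM.1, h1⟩⟩
    rw [h𝒦, Finset.mem_filter, Finset.mem_powerset]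
    refine ⟨h1.trans ?_, h2, h3⟩
    have := hM.1
    unfold matchingFamilies at this
    exact Finset.mem_powerset.1 (Finset.mem_filter.1 this).1
  refine (Finset.card_le_card hsub).trans (Finset.card_biUnion_le.trans ?_)
  calc _ ≤ ∑ K ∈ 𝒦, gN r (n - k) := by
        apply Finset.sum_le_sum
        intro K hK
        exact count_le r n k (by omega) hk K (Finset.mem_filter.1 hK).2.2
    _ = 𝒦.card * gN r (n - k) := by simp
    _ ≤ _ := Nat.mul_le_mul_right _ (count_cliques hr hP hQ hm n k)

lemma gN_lower (r : ℕ) (hr : 1 ≤ r) (N k : ℕ) :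
    gN r N * N ^ ((r - 1) * k) ≤ gN r (N + k) * ((r - 1).factorial) ^ k := by
  induction k with
  | zero => simp
  | succ k ih =>
    rw [← add_assoc, gN_succ, Nat.mul_succ, pow_add, pow_succ]
    have h1 : N ^ (r - 1) ≤ (r - 1).factorial * Nat.choose (r * (N + k + 1) - 1) (r - 1) := by
      have h2 := Nat.pow_sub_le_descFactorial (r * (N + k + 1) - 1) (r - 1)
      rw [Nat.descFactorial_eq_factorial_mul_choose] at h2
      refine le_trans (Nat.pow_le_pow_left ?_ _) h2
      obtain ⟨s, rfl⟩ : ∃ s, r = s + 1 := ⟨r - 1, by omega⟩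
      have : (s + 1) * (N + k + 1) = s * (N + k) + s + N + k + 1 := by ring
      rw [this]
      have : 0 ≤ s * (N + k) := Nat.zero_le _
      omega
    calc _ = (gN r N * N ^ ((r - 1) * k)) * N ^ (r - 1) := by ring
      _ ≤ (gN r (N + k) * ((r - 1).factorial) ^ k) *
          ((r - 1).factorial * Nat.choose (r * (N + k + 1) - 1) (r - 1)) := Nat.mul_le_mul ih h1
      _ = _ := by ring

lemma upper_real (r n k : ℕ) (hr : 1 ≤ r) (hn : 1 ≤ n) (hk : 1 ≤ k) (hkn : 2 * k ≤ n) :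
    (((Nat.choose (r * n) k) ^ r * gN r (n - k) : ℕ) : ℝ) / (gN r n : ℝ) ≤
    ((Real.exp 1 * r) ^ r * ((r - 1).factorial * 2 ^ (r - 1)) * n / (k : ℝ) ^ r) ^ k := by
  have hn' : (0 : ℝ) < n := by exact_mod_cast hn
  have hk' : (0 : ℝ) < k := by exact_mod_cast hk
  have h1 : ((Nat.choose (r * n) k : ℕ) : ℝ) ≤ (Real.exp 1 * r * n / k) ^ k := by
    have a := Nat.choose_le_pow_div (α := ℝ) k (r * n)
    have b := Real.pow_div_factorial_le_exp (k : ℝ) hk'.le k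
    have fp : (0 : ℝ) < k.factorial := by exact_mod_cast k.factorial_pos
    have c : (1 : ℝ) / k.factorial ≤ (Real.exp 1) ^ k / (k : ℝ) ^ k := by
      rw [← Real.exp_one_pow] at b
      rw [div_le_div_iff₀ fp (by positivity)]
      rw [div_le_iff₀ fp] at b
      linarith
    calc _ ≤ _ := a
      _ = ((r * n : ℕ) : ℝ) ^ k * (1 / k.factorial) := by ring
      _ ≤ ((r * n : ℕ) : ℝ) ^ k * ((Real.exp 1) ^ k / (k : ℝ) ^ k) := by gcongr
      _ = _ := by
        push_cast
        rw [div_pow, mul_pow, mul_pow, mul_pow]; ring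
  have h2 : (gN r (n - k) : ℝ) / gN r n ≤ (((r - 1).factorial * 2 ^ (r - 1)) / (n : ℝ) ^ (r - 1)) ^ k := by
    have a := gN_lower r hr (n - k) k
    rw [Nat.sub_add_cancel (by omega)] at a
    have a' : (gN r (n - k) : ℝ) * ((n - k : ℕ) : ℝ) ^ ((r - 1) * k) ≤
      gN r n * ((r - 1).factorial) ^ k := by exact_mod_cast a
    have b : (n : ℝ) / 2 ≤ ((n - k : ℕ) : ℝ) := by
      rw [Nat.cast_sub (by omega)]
      have : (2 : ℝ) * k ≤ n := by exact_mod_cast hkn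
      linarith
    have gp : (0 : ℝ) < gN r n := by exact_mod_cast gN_pos r n hr
    have c : (gN r (n - k) : ℝ) * ((n : ℝ) / 2) ^ ((r - 1) * k) ≤ gN r n * ((r - 1).factorial) ^ k := by
      refine le_trans ?_ a'
      gcongr
    rw [div_le_iff₀ gp]
    rw [← le_div_iff₀ (by positivity)] at c
    refine c.trans (le_of_eq ?_)
    rw [pow_mul, div_pow, div_pow, div_pow, mul_pow]
    field_simp
  push_cast
  rw [mul_div_assoc]
  have h3 : ((Nat.choose (r * n) k : ℕ) : ℝ) ^ r ≤ ((Real.exp 1 * r * n / k) ^ k) ^ r := by gcongr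
  refine (mul_le_mul h3 h2 (by positivity) (by positivity)).trans (le_of_eq ?_)
  rw [← pow_mul, mul_comm k r, pow_mul, ← mul_pow]
  congr 1
  obtain ⟨s, rfl⟩ : ∃ s, r = s + 1 := ⟨r - 1, by omega⟩
  simp only [Nat.add_sub_cancel]
  rw [div_pow, mul_pow (_ * _) (n : ℝ), pow_succ (n : ℝ) s]
  field_simp

lemma upper_tendsto {r : ℕ} (hr : 2 ≤ r) {P Q : Finset (Finset ℕ)} (hP : IsOrderedMatching r 2 P)
    (hQ : IsOrderedMatching r 2 Q) (hm : Mismatch r P Q) : ∃ c : ℝ, 0 < c ∧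
    Filter.Tendsto (fun n : ℕ => prob r n (fun M =>
      ¬ ((zClique r {P, Q} M : ℝ) ≤ c * (n : ℝ) ^ ((1 : ℝ) / (r : ℝ))))) Filter.atTop (nhds 0) := by
  set C0 : ℝ := (Real.exp 1 * r) ^ r * ((r - 1).factorial * 2 ^ (r - 1)) with hC0
  have hr0 : (0 : ℝ) < r := by exact_mod_cast (by omega : 0 < r)
  have C0pos : 0 < C0 := by
    have : (0 : ℝ) < (r - 1).factorial := by exact_mod_cast (r - 1).factorial_pos
    positivity
  set c : ℝ := (2 * C0) ^ ((1 : ℝ) / r) with hc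
  have cpos : 0 < c := by positivity
  have cr : c ^ r = 2 * C0 := by
    rw [hc, ← Real.rpow_natCast, ← Real.rpow_mul (by positivity)]
    rw [one_div_mul_cancel hr0.ne', Real.rpow_one]
  refine ⟨c, cpos, ?_⟩
  have t1 : Filter.Tendsto (fun n : ℕ => c * (n : ℝ) ^ ((1 : ℝ) / (r : ℝ))) Filter.atTop Filter.atTop := by
    apply Filter.Tendsto.const_mul_atTop cpos
    exact (tendsto_rpow_atTop (by positivity)).comp tendsto_natCast_atTop_atTop
  have t2 : Filter.Tendsto (fun n : ℕ => ⌈c * (n : ℝ) ^ ((1 : ℝ) / (r : ℝ))⌉₊) Filter.atTop Filter.atTop :=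
    tendsto_nat_ceil_atTop.comp t1
  have t3 : Filter.Tendsto (fun n : ℕ => ((1 : ℝ) / 2) ^ ⌈c * (n : ℝ) ^ ((1 : ℝ) / (r : ℝ))⌉₊)
      Filter.atTop (nhds 0) :=
    (tendsto_pow_atTop_nhds_zero_of_lt_one (by norm_num) (by norm_num)).comp t2
  -- k ≤ n / 2 eventually
  have ev : ∀ᶠ n : ℕ in Filter.atTop, 2 * ⌈c * (n : ℝ) ^ ((1 : ℝ) / (r : ℝ))⌉₊ ≤ n := by
    have hexp : (1 : ℝ) / r ≤ 1 / 2 := by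
      apply one_div_le_one_div_of_le (by norm_num)
      exact_mod_cast hr
    have s1 : Filter.Tendsto (fun n : ℕ => (n : ℝ) ^ ((1 : ℝ) / 2)) Filter.atTop Filter.atTop :=
      (tendsto_rpow_atTop (by norm_num)).comp tendsto_natCast_atTop_atTop
    filter_upwards [s1.eventually_ge_atTop (2 * (c + 1)), Filter.eventually_ge_atTop 1] with n h1 h2
    have hn1 : (1 : ℝ) ≤ n := by exact_mod_cast h2
    set y := (n : ℝ) ^ ((1 : ℝ) / 2) with hy
    have yy : y * y = n := by
      rw [hy, ← Real.rpow_add (by linarith)]; norm_num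
    have a1 : (n : ℝ) ^ ((1 : ℝ) / (r : ℝ)) ≤ y := Real.rpow_le_rpow_of_exponent_le hn1 hexp
    have a2 : (⌈c * (n : ℝ) ^ ((1 : ℝ) / (r : ℝ))⌉₊ : ℝ) < c * (n : ℝ) ^ ((1 : ℝ) / (r : ℝ)) + 1 :=
      Nat.ceil_lt_add_one (by positivity)
    have a3 : 1 ≤ y := by nlinarith
    have : (2 : ℝ) * ⌈c * (n : ℝ) ^ ((1 : ℝ) / (r : ℝ))⌉₊ ≤ n := by
      have : c * (n : ℝ) ^ ((1 : ℝ) / (r : ℝ)) ≤ c * y := by gcongr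
      nlinarith
    exact_mod_cast this
  refine squeeze_zero' ?_ ?_ t3
  · exact Filter.Eventually.of_forall (fun n => by unfold prob; positivity)
  · filter_upwards [ev, Filter.eventually_ge_atTop 1] with n h1 h2
    set k := ⌈c * (n : ℝ) ^ ((1 : ℝ) / (r : ℝ))⌉₊ with hk
    have hn1 : (1 : ℝ) ≤ n := by exact_mod_cast h2
    have hk1 : 1 ≤ k := by
      rw [hk, Nat.one_le_ceil_iff]; positivity
    have b1 : ((matchingFamilies r n).filter (fun M => ¬ ((zClique r {P, Q} M : ℝ) ≤ c * (n : ℝ) ^ ((1 : ℝ) / (r : ℝ))))).card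
        ≤ (Nat.choose (r * n) k) ^ r * gN r (n - k) := by
      refine le_trans (Finset.card_le_card ?_) (prob_le_count hr hP hQ hm n k (by omega))
      intro M hM
      rw [Finset.mem_filter] at hM ⊢
      refine ⟨hM.1, ?_⟩
      rw [hk]
      exact Nat.ceil_le.2 (not_le.1 hM.2).le
    unfold prob
    rw [card_matchingFamilies r n (by omega)]
    have b2 := upper_real r n k (by omega) h2 hk1 h1
    refine le_trans (le_trans ?_ b2) ?_
    · refine div_le_div_of_nonneg_right ?_ (Nat.cast_nonneg _)
      refine Nat.cast_le.2 (le_trans (le_of_eq ?_) b1)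
      congr 1
      ext M
      simp only [Finset.mem_filter]
    · have kr : 2 * C0 * n ≤ (k : ℝ) ^ r := by
        have : c * (n : ℝ) ^ ((1 : ℝ) / (r : ℝ)) ≤ k := Nat.le_ceil _
        calc 2 * C0 * n = (c * (n : ℝ) ^ ((1 : ℝ) / (r : ℝ))) ^ r := by
              rw [mul_pow, cr, ← Real.rpow_natCast ((n : ℝ) ^ ((1 : ℝ) / (r : ℝ))), ← Real.rpow_mul (by positivity),
                one_div_mul_cancel hr0.ne', Real.rpow_one]
          _ ≤ _ := by gcongr
      have hkp : (0 : ℝ) < (k : ℝ) ^ r := by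
        have : (0 : ℝ) < k := by exact_mod_cast hk1
        positivity
      apply pow_le_pow_left₀ (by positivity)
      rw [div_le_iff₀ hkp]
      linarith

lemma xpt_count {ι : Type*} (r n s : ℕ) (hr : 1 ≤ r) (hs : s ≤ n) (I : Finset ι)
    (F : ι → Finset (Finset ℕ))
    (hF : ∀ i ∈ I, GoodF r (Finset.Icc 1 (r * n)) (F i) ∧ (F i).card = s) :
    expect r n (fun M => ((I.filter (fun i => F i ⊆ M)).card : ℝ)) =
      (I.card : ℝ) * ((gN r (n - s) : ℝ) / (gN r n : ℝ)) := by
  unfold _root_.expect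
  rw [card_matchingFamilies r n hr, ← mul_div_assoc]
  congr 1
  rw [← Nat.cast_sum, ← Nat.cast_mul]
  congr 1
  simp_rw [Finset.card_filter]
  rw [Finset.sum_comm]
  simp_rw [← Finset.card_filter]
  rw [Finset.sum_congr rfl (fun i hi => count_good r n s hr hs (F i) (hF i hi).1 (hF i hi).2)]
  simp

lemma xpt_count_le {ι : Type*} (r n s : ℕ) (hr : 1 ≤ r) (hs : s ≤ n) (I : Finset ι)
    (F : ι → Finset (Finset ℕ))
    (hF : ∀ i ∈ I, (F i).card = s) :
    expect r n (fun M => ((I.filter (fun i => F i ⊆ M)).card : ℝ)) ≤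
      (I.card : ℝ) * ((gN r (n - s) : ℝ) / (gN r n : ℝ)) := by
  unfold _root_.expect
  rw [card_matchingFamilies r n hr, ← mul_div_assoc]
  refine div_le_div_of_nonneg_right ?_ (Nat.cast_nonneg _)
  rw [← Nat.cast_sum, ← Nat.cast_mul]
  refine Nat.cast_le.2 ?_
  simp_rw [Finset.card_filter]
  rw [Finset.sum_comm]
  simp_rw [← Finset.card_filter]
  refine (Finset.sum_le_sum (fun i hi => count_le r n s hr hs (F i) (hF i hi))).trans ?_
  simp

lemma xpt_add (r n : ℕ) (X Y : Finset (Finset ℕ) → ℝ) :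
    expect r n (fun M => X M + Y M) = expect r n X + expect r n Y := by
  unfold _root_.expect; rw [Finset.sum_add_distrib, add_div]

lemma xpt_smul (r n : ℕ) (c : ℝ) (X : Finset (Finset ℕ) → ℝ) :
    expect r n (fun M => c * X M) = c * expect r n X := by
  unfold _root_.expect; rw [← Finset.mul_sum, mul_div_assoc]

lemma xpt_sum {ι : Type*} (r n : ℕ) (I : Finset ι) (X : ι → Finset (Finset ℕ) → ℝ) :
    expect r n (fun M => ∑ i ∈ I, X i M) = ∑ i ∈ I, expect r n (X i) := by
  unfold _root_.expect; rw [Finset.sum_comm, Finset.sum_div]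

lemma xpt_mono (r n : ℕ) (X Y : Finset (Finset ℕ) → ℝ)
    (h : ∀ M ∈ matchingFamilies r n, X M ≤ Y M) : expect r n X ≤ expect r n Y := by
  unfold _root_.expect
  exact div_le_div_of_nonneg_right (Finset.sum_le_sum h) (Nat.cast_nonneg _)

lemma xpt_congr (r n : ℕ) (X Y : Finset (Finset ℕ) → ℝ)
    (h : ∀ M ∈ matchingFamilies r n, X M = Y M) : expect r n X = expect r n Y := by
  unfold _root_.expect
  rw [Finset.sum_congr rfl h]

lemma xpt_const (r n : ℕ) (hr : 1 ≤ r) (c : ℝ) : expect r n (fun _ => c) = c := by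
  unfold _root_.expect
  have : (0 : ℝ) < (matchingFamilies r n).card := by
    rw [card_matchingFamilies r n hr]; exact_mod_cast gN_pos r n hr
  rw [Finset.sum_const, nsmul_eq_mul]; field_simp

/-- number of configurations of the family contained in `M`. -/
noncomputable def cnt {ι : Type*} (I : Finset ι) (F : ι → Finset (Finset ℕ))
    (M : Finset (Finset ℕ)) : ℝ := ((I.filter (fun i => F i ⊆ M)).card : ℝ)

lemma cnt_mul {ι κ : Type*} (I : Finset ι) (F : ι → Finset (Finset ℕ))
    (J : Finset κ) (G : κ → Finset (Finset ℕ)) (M : Finset (Finset ℕ)) :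
    cnt I F M * cnt J G M = cnt (I ×ˢ J) (fun p => F p.1 ∪ G p.2) M := by
  unfold cnt
  rw [← Nat.cast_mul, ← Finset.card_product]
  congr 2
  ext ⟨a, b⟩
  simp only [Finset.mem_product, Finset.mem_filter, Finset.union_subset_iff]
  tauto

lemma goodF_union {r : ℕ} {V : Finset ℕ} {F G : Finset (Finset ℕ)} (hF : GoodF r V F)
    (hG : GoodF r V G) (h : ∀ e ∈ F, ∀ f ∈ G, Disjoint e f) : GoodF r V (F ∪ G) := by
  refine ⟨?_, ?_, ?_⟩
  · intro e he
    rcases Finset.mem_union.1 he with he | he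
    · exact hF.1 e he
    · exact hG.1 e he
  · intro e he f hf hef
    rcases Finset.mem_union.1 he with he | he <;> rcases Finset.mem_union.1 hf with hf | hf
    · exact hF.2.1 e he f hf hef
    · exact h e he f hf
    · exact (h f hf e he).symm
    · exact hG.2.1 e he f hf hef
  · intro e he
    rcases Finset.mem_union.1 he with he | he
    · exact hF.2.2 e he
    · exact hG.2.2 e he

lemma card_union_of_disj {r : ℕ} (hr : 1 ≤ r) {V : Finset ℕ} {F G : Finset (Finset ℕ)}
    (hF : GoodF r V F) (h : ∀ e ∈ F, ∀ f ∈ G, Disjoint e f) :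
    (F ∪ G).card = F.card + G.card := by
  apply Finset.card_union_of_disjoint
  rw [Finset.disjoint_left]
  intro e he hf
  have := h e he e hf
  rw [disjoint_self] at this
  have h2 := hF.1 e he
  rw [this] at h2
  simp at h2
  omega

lemma xpt_cnt_mul {ι κ : Type*} (r n s t : ℕ) (hr : 1 ≤ r) (hs : s + t ≤ n)
    (I : Finset ι) (F : ι → Finset (Finset ℕ))
    (J : Finset κ) (G : κ → Finset (Finset ℕ))
    (hF : ∀ i ∈ I, GoodF r (Finset.Icc 1 (r * n)) (F i) ∧ (F i).card = s)
    (hG : ∀ i ∈ J, GoodF r (Finset.Icc 1 (r * n)) (G i) ∧ (G i).card = t)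
    (h : ∀ i ∈ I, ∀ j ∈ J, ∀ e ∈ F i, ∀ f ∈ G j, Disjoint e f) :
    expect r n (fun M => cnt I F M * cnt J G M) =
      (I.card : ℝ) * J.card * ((gN r (n - (s + t)) : ℝ) / (gN r n : ℝ)) := by
  simp_rw [cnt_mul]
  unfold cnt
  rw [xpt_count r n (s + t) hr hs]
  · rw [Finset.card_product]; push_cast; ring
  · rintro ⟨i, j⟩ hij
    rw [Finset.mem_product] at hij
    have h' := h i hij.1 j hij.2
    refine ⟨goodF_union (hF i hij.1).1 (hG j hij.2).1 h', ?_⟩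
    rw [card_union_of_disj hr (hF i hij.1).1 h', (hF i hij.1).2, (hG j hij.2).2]

/-- edges with one vertex in each box. -/
noncomputable def bE {r : ℕ} (U : Fin r → Finset ℕ) : Finset (Finset ℕ) :=
  (Fintype.piFinset U).image (fun v => Finset.univ.image v)

/-- disjoint ordered pairs of such edges. -/
noncomputable def bD {r : ℕ} (U : Fin r → Finset ℕ) : Finset (Finset ℕ × Finset ℕ) :=
  (bE U ×ˢ bE U).filter (fun p => Disjoint p.1 p.2)

lemma box_mono {r : ℕ} {U : Fin r → Finset ℕ}
    (hU : ∀ l l', l < l' → ∀ a ∈ U l, ∀ b ∈ U l', a < b) {v : Fin r → ℕ}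
    (hv : ∀ l, v l ∈ U l) : StrictMono v := fun l l' h => hU l l' h _ (hv l) _ (hv l')

lemma card_bE {r L : ℕ} {U : Fin r → Finset ℕ}
    (hU : ∀ l l', l < l' → ∀ a ∈ U l, ∀ b ∈ U l', a < b) (hc : ∀ l, (U l).card = L) :
    (bE U).card = L ^ r := by
  unfold bE
  rw [Finset.card_image_of_injOn]
  · simp [Fintype.card_piFinset, hc]
  · intro v hv w hw h
    simp only [Finset.mem_coe, Fintype.mem_piFinset] at hv hw
    exact eq_of_image_eq (box_mono hU hv) (box_mono hU hw) h

lemma mem_bE {r : ℕ} {U : Fin r → Finset ℕ} {e : Finset ℕ} :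
    e ∈ bE U ↔ ∃ v : Fin r → ℕ, (∀ l, v l ∈ U l) ∧ Finset.univ.image v = e := by
  simp [bE, Fintype.mem_piFinset]

lemma bE_disjoint_iff {r : ℕ} {U : Fin r → Finset ℕ}
    (hU : ∀ l l', l < l' → ∀ a ∈ U l, ∀ b ∈ U l', a < b) {v w : Fin r → ℕ}
    (hv : ∀ l, v l ∈ U l) (hw : ∀ l, w l ∈ U l) :
    Disjoint (Finset.univ.image v) (Finset.univ.image w) ↔ ∀ l, v l ≠ w l := by
  rw [Finset.disjoint_left]
  constructor
  · intro h l hl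
    exact h (Finset.mem_image_of_mem v (Finset.mem_univ l)) (hl ▸ Finset.mem_image_of_mem w (Finset.mem_univ l))
  · intro h a ha hb
    obtain ⟨l, -, rfl⟩ := Finset.mem_image.1 ha
    obtain ⟨m, -, hm⟩ := Finset.mem_image.1 hb
    rcases lt_trichotomy l m with hl | hl | hl
    · have := hU l m hl _ (hv l) _ (hw m); omega
    · subst hl; exact h l hm.symm
    · have := hU m l hl _ (hw m) _ (hv l); omega

lemma card_bD {r L : ℕ} {U : Fin r → Finset ℕ}
    (hU : ∀ l l', l < l' → ∀ a ∈ U l, ∀ b ∈ U l', a < b) (hc : ∀ l, (U l).card = L) :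
    (bD U).card = (L * L - L) ^ r := by
  have : bD U = (Fintype.piFinset (fun l => (U l).offDiag)).image
      (fun h => (Finset.univ.image (fun l => (h l).1), Finset.univ.image (fun l => (h l).2))) := by
    ext ⟨e, f⟩
    simp only [bD, Finset.mem_filter, Finset.mem_product, Finset.mem_image, Fintype.mem_piFinset,
      Finset.mem_offDiag, Prod.mk.injEq, mem_bE]
    constructor
    · rintro ⟨⟨⟨v, hv, rfl⟩, ⟨w, hw, rfl⟩⟩, hd⟩
      rw [bE_disjoint_iff hU hv hw] at hd
      exact ⟨fun l => (v l, w l), fun l => ⟨hv l, hw l, hd l⟩, rfl, rfl⟩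
    · rintro ⟨h, hh, rfl, rfl⟩
      refine ⟨⟨⟨_, fun l => (hh l).1, rfl⟩, ⟨_, fun l => (hh l).2.1, rfl⟩⟩, ?_⟩
      exact (bE_disjoint_iff hU (fun l => (hh l).1) (fun l => (hh l).2.1)).2 (fun l => (hh l).2.2)
  rw [this, Finset.card_image_of_injOn]
  · simp [Fintype.card_piFinset, Finset.offDiag_card, hc]
  · intro v hv w hw h
    simp only [Finset.mem_coe, Fintype.mem_piFinset, Finset.mem_offDiag] at hv hw
    simp only [Prod.mk.injEq] at h
    have h1 := eq_of_image_eq (box_mono hU (fun l => (hv l).1)) (box_mono hU (fun l => (hw l).1)) h.1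
    have h2 := eq_of_image_eq (box_mono hU (fun l => (hv l).2.1)) (box_mono hU (fun l => (hw l).2.1)) h.2
    funext l
    exact Prod.ext (congrFun h1 l) (congrFun h2 l)

lemma bE_card_sub {r : ℕ} {U : Fin r → Finset ℕ} {V : Finset ℕ}
    (hU : ∀ l l', l < l' → ∀ a ∈ U l, ∀ b ∈ U l', a < b) (hV : ∀ l, U l ⊆ V)
    {e : Finset ℕ} (he : e ∈ bE U) : e.card = r ∧ e ⊆ V := by
  obtain ⟨v, hv, rfl⟩ := mem_bE.1 he
  constructor
  · rw [Finset.card_image_of_injective _ (box_mono hU hv).injective]; simp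
  · intro a ha
    obtain ⟨l, -, rfl⟩ := Finset.mem_image.1 ha
    exact hV l (hv l)

/-- number of hits of the box system `U`. -/
noncomputable def bY {r : ℕ} (U : Fin r → Finset ℕ) (M : Finset (Finset ℕ)) : ℝ :=
  cnt (bE U) (fun e => {e}) M

/-- number of ordered pairs of hits of the box system `U`. -/
noncomputable def bO {r : ℕ} (U : Fin r → Finset ℕ) (M : Finset (Finset ℕ)) : ℝ :=
  cnt (bD U) (fun p => {p.1, p.2}) M

lemma good_E {r : ℕ} {U : Fin r → Finset ℕ} {V : Finset ℕ}
    (hU : ∀ l l', l < l' → ∀ a ∈ U l, ∀ b ∈ U l', a < b) (hV : ∀ l, U l ⊆ V) :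
    ∀ e ∈ bE U, GoodF r V {e} ∧ ({e} : Finset (Finset ℕ)).card = 1 := by
  intro e he
  have := bE_card_sub hU hV he
  refine ⟨⟨?_, ?_, ?_⟩, by simp⟩ <;> simp [this.1, this.2]

lemma good_D {r : ℕ} (hr : 1 ≤ r) {U : Fin r → Finset ℕ} {V : Finset ℕ}
    (hU : ∀ l l', l < l' → ∀ a ∈ U l, ∀ b ∈ U l', a < b) (hV : ∀ l, U l ⊆ V) :
    ∀ p ∈ bD U, GoodF r V {p.1, p.2} ∧ ({p.1, p.2} : Finset (Finset ℕ)).card = 2 := by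
  rintro ⟨e, f⟩ he
  simp only [bD, Finset.mem_filter, Finset.mem_product] at he
  obtain ⟨⟨h1, h2⟩, h3⟩ := he
  have g1 := good_E hU hV e h1
  have g2 := good_E hU hV f h2
  have e1 : ({e, f} : Finset (Finset ℕ)) = {e} ∪ {f} := by
    ext; simp
  have hd : ∀ a ∈ ({e} : Finset (Finset ℕ)), ∀ b ∈ ({f} : Finset (Finset ℕ)), Disjoint a b := by
    simpa using h3
  simp only
  rw [e1]
  exact ⟨goodF_union g1.1 g2.1 hd, card_union_of_disj hr g1.1 hd⟩

lemma bY_eq {r : ℕ} (U : Fin r → Finset ℕ) (M : Finset (Finset ℕ)) :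
    bY U M = ((bE U).filter (fun e => e ∈ M)).card := by
  simp [bY, cnt]

lemma bO_eq {r n : ℕ} (hr : 1 ≤ r) {U : Fin r → Finset ℕ} {M : Finset (Finset ℕ)}
    (hM : M ∈ matchingFamilies r n) :
    bO U M = bY U M * (bY U M - 1) := by
  rw [bY_eq]
  set E := (bE U).filter (fun e => e ∈ M) with hE
  have : (bD U).filter (fun p => ({p.1, p.2} : Finset (Finset ℕ)) ⊆ M) = E.offDiag := by
    rw [matchingFamilies_eq r n hr, mem_PMs] at hM
    ext ⟨e, f⟩
    simp only [bD, hE, Finset.mem_filter, Finset.mem_product, Finset.mem_offDiag,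
      Finset.insert_subset_iff, Finset.singleton_subset_iff]
    constructor
    · rintro ⟨⟨⟨h1, h2⟩, h3⟩, h4, h5⟩
      refine ⟨⟨h1, h4⟩, ⟨h2, h5⟩, ?_⟩
      rintro rfl
      rw [disjoint_self] at h3
      have := hM.1 e h4
      rw [h3] at this
      simp at this; omega
    · rintro ⟨⟨h1, h4⟩, ⟨h2, h5⟩, h⟩
      exact ⟨⟨⟨h1, h2⟩, hM.2.1 e h4 f h5 h⟩, h4, h5⟩
  unfold bO cnt
  rw [this, Finset.offDiag_card, Nat.cast_sub (Nat.le_mul_self _)]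
  push_cast; ring

/-- truncated hit counter. -/
noncomputable def bZ {r : ℕ} (U : Fin r → Finset ℕ) (M : Finset (Finset ℕ)) : ℝ :=
  bY U M + (-1 / 2) * bO U M

lemma cast_choose_four (y : ℕ) : (Nat.choose y 4 : ℝ) = (y : ℝ) * (y - 1) * (y - 2) * (y - 3) / 24 := by
  have h := Nat.descFactorial_eq_factorial_mul_choose y 4
  have h2 : (y.descFactorial 4 : ℝ) = (y : ℝ) * (y - 1) * (y - 2) * (y - 3) := by
    rcases lt_or_ge y 4 with h | h
    · interval_cases y <;> simp [Nat.descFactorial]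
    · obtain ⟨m, rfl⟩ := Nat.exists_eq_add_of_le h
      simp only [Nat.descFactorial_succ, Nat.descFactorial_zero]
      rw [show 4 + m - 3 = m + 1 by omega, show 4 + m - 2 = m + 2 by omega,
        show 4 + m - 1 = m + 3 by omega]
      push_cast
      simp
      ring
  rw [← h2, h]
  simp [Nat.factorial]

lemma bZ_le {r n : ℕ} (hr : 1 ≤ r) {U : Fin r → Finset ℕ} {M : Finset (Finset ℕ)}
    (hM : M ∈ matchingFamilies r n) :
    bZ U M ≤ if (∃ e ∈ bE U, e ∈ M) then 1 else 0 := by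
  unfold bZ
  rw [bO_eq hr hM, bY_eq]
  set E := (bE U).filter (fun e => e ∈ M) with hE
  split_ifs with h
  · have h3 : (E.card : ℤ) = 0 ∨ (E.card : ℤ) = 1 ∨ (2 : ℤ) ≤ E.card := by omega
    have : (0 : ℤ) ≤ (E.card - 1) * (E.card - 2) := by
      rcases h3 with h3 | h3 | h3
      · rw [h3]; norm_num
      · rw [h3]; norm_num
      · apply mul_nonneg <;> omega
    have h4 : (0 : ℝ) ≤ ((E.card : ℝ) - 1) * (E.card - 2) := by exact_mod_cast this
    nlinarith
  · have : E = ∅ := by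
      rw [hE, Finset.filter_eq_empty_iff]
      intro e he heM
      exact h ⟨e, he, heM⟩
    rw [this]; simp

lemma bZ_sq_le {r n : ℕ} (hr : 1 ≤ r) {U : Fin r → Finset ℕ} {M : Finset (Finset ℕ)}
    (hM : M ∈ matchingFamilies r n) :
    bZ U M * bZ U M ≤ bY U M + 6 * cnt ((bE U).powersetCard 4) id M := by
  have h1 : cnt ((bE U).powersetCard 4) id M =
      (Nat.choose ((bE U).filter (fun e => e ∈ M)).card 4 : ℝ) := by
    unfold cnt
    rw [← Finset.card_powersetCard]
    congr 2
    ext F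
    simp only [Finset.mem_filter, Finset.mem_powersetCard, id, Finset.subset_iff]
    grind
  rw [h1, cast_choose_four]
  unfold bZ
  rw [bO_eq hr hM, bY_eq]
  set y : ℕ := ((bE U).filter (fun e => e ∈ M)).card
  have : (0 : ℝ) ≤ y * (y - 1) := by
    rcases Nat.eq_zero_or_pos y with h | h
    · rw [h]; simp
    · have : (1 : ℝ) ≤ y := by exact_mod_cast h
      apply mul_nonneg <;> linarith
  nlinarith

/-- a system of boxes. -/
structure Boxes (r n L k : ℕ) (V : Fin k → Fin r → Finset ℕ) : Prop where
  sub : ∀ x l, V x l ⊆ Finset.Icc 1 (r * n)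
  card : ∀ x l, (V x l).card = L
  lt : ∀ x l l', l < l' → ∀ a ∈ V x l, ∀ b ∈ V x l', a < b
  dj : ∀ x y, x ≠ y → ∀ l m, Disjoint (V x l) (V y m)

/-- ratio of matching counts. -/
noncomputable def pR (r n s : ℕ) : ℝ := (gN r (n - s) : ℝ) / (gN r n : ℝ)

lemma bE_disj {r n L k : ℕ} {V : Fin k → Fin r → Finset ℕ} (B : Boxes r n L k V)
    {x y : Fin k} (h : x ≠ y) {e f : Finset ℕ} (he : e ∈ bE (V x)) (hf : f ∈ bE (V y)) :
    Disjoint e f := by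
  obtain ⟨v, hv, rfl⟩ := mem_bE.1 he
  obtain ⟨w, hw, rfl⟩ := mem_bE.1 hf
  rw [Finset.disjoint_left]
  intro a ha hb
  obtain ⟨l, -, rfl⟩ := Finset.mem_image.1 ha
  obtain ⟨m, -, hm⟩ := Finset.mem_image.1 hb
  have := Finset.disjoint_left.1 (B.dj x y h l m) (hv l)
  exact this (hm ▸ hw m)

section moments
variable {r n L k : ℕ} {V : Fin k → Fin r → Finset ℕ}

lemma xpt_Y (hr : 1 ≤ r) (hn : 4 ≤ n) (B : Boxes r n L k V) (x : Fin k) :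
    _root_.expect r n (bY (V x)) = (L : ℝ) ^ r * pR r n 1 := by
  have := xpt_count r n 1 hr (by omega) (bE (V x)) (fun e => {e})
    (good_E (B.lt x) (B.sub x))
  rw [card_bE (B.lt x) (B.card x)] at this
  unfold pR
  rw [← Nat.cast_pow, ← this]
  rfl

lemma xpt_O (hr : 1 ≤ r) (hn : 4 ≤ n) (B : Boxes r n L k V) (x : Fin k) :
    _root_.expect r n (bO (V x)) = ((L * L - L : ℕ) : ℝ) ^ r * pR r n 2 := by
  have := xpt_count r n 2 hr (by omega) (bD (V x)) (fun p => {p.1, p.2})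
    (good_D hr (B.lt x) (B.sub x))
  rw [card_bD (B.lt x) (B.card x)] at this
  unfold pR
  rw [← Nat.cast_pow, ← this]
  rfl

lemma xpt_Z (hr : 1 ≤ r) (hn : 4 ≤ n) (B : Boxes r n L k V) (x : Fin k) :
    _root_.expect r n (bZ (V x)) = (L : ℝ) ^ r * pR r n 1 -
      ((L * L - L : ℕ) : ℝ) ^ r * pR r n 2 / 2 := by
  have : bZ (V x) = fun M => bY (V x) M + (-1 / 2) * bO (V x) M := rfl
  rw [this, xpt_add, xpt_smul, xpt_Y hr hn B, xpt_O hr hn B]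
  ring

lemma mem_bD_fst {U : Fin r → Finset ℕ} {p : Finset ℕ × Finset ℕ} (hp : p ∈ bD U)
    {e : Finset ℕ} (he : e ∈ ({p.1, p.2} : Finset (Finset ℕ))) : e ∈ bE U := by
  simp only [bD, Finset.mem_filter, Finset.mem_product] at hp
  rw [Finset.mem_insert, Finset.mem_singleton] at he
  rcases he with rfl | rfl
  · exact hp.1.1
  · exact hp.1.2

lemma xpt_YY (hr : 1 ≤ r) (hn : 4 ≤ n) (B : Boxes r n L k V) {x y : Fin k} (h : x ≠ y) :
    _root_.expect r n (fun M => bY (V x) M * bY (V y) M) = ((L : ℝ) ^ r) ^ 2 * pR r n 2 := by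
  unfold bY
  rw [xpt_cnt_mul r n 1 1 hr (by omega) _ _ _ _ (good_E (B.lt x) (B.sub x))
    (good_E (B.lt y) (B.sub y)), card_bE (B.lt x) (B.card x), card_bE (B.lt y) (B.card y)]
  · unfold pR; push_cast; ring
  · intro i hi j hj e he f hf
    rw [Finset.mem_singleton] at he hf
    subst he hf
    exact bE_disj B h hi hj

lemma xpt_YO (hr : 1 ≤ r) (hn : 4 ≤ n) (B : Boxes r n L k V) {x y : Fin k} (h : x ≠ y) :
    _root_.expect r n (fun M => bY (V x) M * bO (V y) M) =
      (L : ℝ) ^ r * ((L * L - L : ℕ) : ℝ) ^ r * pR r n 3 := by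
  unfold bY bO
  rw [xpt_cnt_mul r n 1 2 hr (by omega) _ _ _ _ (good_E (B.lt x) (B.sub x))
    (good_D hr (B.lt y) (B.sub y)), card_bE (B.lt x) (B.card x), card_bD (B.lt y) (B.card y)]
  · unfold pR; push_cast; ring
  · intro i hi j hj e he f hf
    rw [Finset.mem_singleton] at he
    subst he
    exact bE_disj B h hi (mem_bD_fst hj hf)

lemma xpt_OO (hr : 1 ≤ r) (hn : 4 ≤ n) (B : Boxes r n L k V) {x y : Fin k} (h : x ≠ y) :
    _root_.expect r n (fun M => bO (V x) M * bO (V y) M) =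
      (((L * L - L : ℕ) : ℝ) ^ r) ^ 2 * pR r n 4 := by
  unfold bO
  rw [xpt_cnt_mul r n 2 2 hr (by omega) _ _ _ _ (good_D hr (B.lt x) (B.sub x))
    (good_D hr (B.lt y) (B.sub y)), card_bD (B.lt x) (B.card x), card_bD (B.lt y) (B.card y)]
  · unfold pR; push_cast; ring
  · intro i hi j hj e he f hf
    exact bE_disj B h (mem_bD_fst hi he) (mem_bD_fst hj hf)

lemma xpt_ZZ (hr : 1 ≤ r) (hn : 4 ≤ n) (B : Boxes r n L k V) {x y : Fin k} (h : x ≠ y) :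
    _root_.expect r n (fun M => bZ (V x) M * bZ (V y) M) = ((L : ℝ) ^ r) ^ 2 * pR r n 2 -
      (L : ℝ) ^ r * ((L * L - L : ℕ) : ℝ) ^ r * pR r n 3 +
      (((L * L - L : ℕ) : ℝ) ^ r) ^ 2 * pR r n 4 / 4 := by
  have : (fun M => bZ (V x) M * bZ (V y) M) = fun M =>
      ((bY (V x) M * bY (V y) M + (-1 / 2) * (bY (V x) M * bO (V y) M)) +
      (-1 / 2) * (bY (V y) M * bO (V x) M)) + (1 / 4) * (bO (V x) M * bO (V y) M) := by
    funext M; unfold bZ; ring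
  rw [this, xpt_add, xpt_add, xpt_add, xpt_smul, xpt_smul, xpt_smul, xpt_YY hr hn B h,
    xpt_YO hr hn B h, xpt_YO hr hn B h.symm, xpt_OO hr hn B h]
  ring

lemma xpt_Zsq (hr : 1 ≤ r) (hn : 4 ≤ n) (B : Boxes r n L k V) (x : Fin k) :
    _root_.expect r n (fun M => bZ (V x) M * bZ (V x) M) ≤
      (L : ℝ) ^ r * pR r n 1 + ((L : ℝ) ^ r) ^ 4 * pR r n 4 := by
  refine (xpt_mono r n _ _ (fun M hM => bZ_sq_le hr hM)).trans ?_
  rw [xpt_add, xpt_smul, xpt_Y hr hn B]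
  have h1 := xpt_count_le r n 4 hr hn ((bE (V x)).powersetCard 4) id
    (fun F hF => (Finset.mem_powersetCard.1 hF).2)
  have h2 : (((bE (V x)).powersetCard 4).card : ℝ) ≤ ((L : ℝ) ^ r) ^ 4 / 24 := by
    rw [Finset.card_powersetCard, card_bE (B.lt x) (B.card x)]
    have := Nat.choose_le_pow_div (α := ℝ) 4 (L ^ r)
    simpa [Nat.factorial] using this
  have h3 : 0 ≤ pR r n 4 := by unfold pR; positivity
  have h4 : _root_.expect r n (cnt ((bE (V x)).powersetCard 4) id) ≤
      ((L : ℝ) ^ r) ^ 4 / 24 * pR r n 4 :=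
    le_trans h1 (mul_le_mul_of_nonneg_right h2 h3)
  have h5 : 0 ≤ ((L : ℝ) ^ r) ^ 4 * pR r n 4 := by positivity
  linarith

/-- mean of the truncated counter -/
noncomputable def eM (r n L : ℕ) : ℝ := (L : ℝ) ^ r * pR r n 1 -
      ((L * L - L : ℕ) : ℝ) ^ r * pR r n 2 / 2
/-- mixed moment of the truncated counters -/
noncomputable def fM (r n L : ℕ) : ℝ := ((L : ℝ) ^ r) ^ 2 * pR r n 2 -
      (L : ℝ) ^ r * ((L * L - L : ℕ) : ℝ) ^ r * pR r n 3 +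
      (((L * L - L : ℕ) : ℝ) ^ r) ^ 2 * pR r n 4 / 4
/-- bound for the second moment of the truncated counter -/
noncomputable def gM (r n L : ℕ) : ℝ :=
  (L : ℝ) ^ r * pR r n 1 + ((L : ℝ) ^ r) ^ 4 * pR r n 4

lemma xpt_var (hr : 1 ≤ r) (hn : 4 ≤ n) (B : Boxes r n L k V) (q : ℝ) :
    _root_.expect r n (fun M => (∑ x, bZ (V x) M - q * k) ^ 2) ≤
      (k : ℝ) ^ 2 * (fM r n L - 2 * q * eM r n L + q ^ 2) + k * (gM r n L - fM r n L) := by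
  have h1 : (fun M => (∑ x, bZ (V x) M - q * k) ^ 2) =
      fun M => ∑ x : Fin k, ∑ y : Fin k, (bZ (V x) M - q) * (bZ (V y) M - q) := by
    funext M
    rw [← Finset.sum_mul_sum, ← pow_two, Finset.sum_sub_distrib]
    simp [mul_comm]
  rw [h1, xpt_sum]
  have h2 : ∀ x y : Fin k, _root_.expect r n (fun M => (bZ (V x) M - q) * (bZ (V y) M - q)) ≤
      (fM r n L - 2 * q * eM r n L + q ^ 2) + if x = y then (gM r n L - fM r n L) else 0 := by
    intro x y
    have h3 : (fun M => (bZ (V x) M - q) * (bZ (V y) M - q)) = fun M =>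
      ((bZ (V x) M * bZ (V y) M + (-q) * bZ (V x) M) + (-q) * bZ (V y) M) + q ^ 2 := by
      funext M; ring
    rw [h3, xpt_add, xpt_add, xpt_add, xpt_smul, xpt_smul, xpt_const r n hr, xpt_Z hr hn B,
      xpt_Z hr hn B]
    by_cases hxy : x = y
    · subst hxy
      have := xpt_Zsq hr hn B x
      rw [if_pos rfl]
      unfold gM fM eM
      linarith
    · rw [if_neg hxy, xpt_ZZ hr hn B hxy]
      unfold fM eM
      linarith
  have h4 : ∀ x : Fin k, _root_.expect r n (fun M => ∑ y : Fin k, (bZ (V x) M - q) * (bZ (V y) M - q)) ≤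
      k * (fM r n L - 2 * q * eM r n L + q ^ 2) + (gM r n L - fM r n L) := by
    intro x
    rw [xpt_sum]
    refine (Finset.sum_le_sum (fun y _ => h2 x y)).trans (le_of_eq ?_)
    rw [Finset.sum_add_distrib]
    simp
    ring
  refine (Finset.sum_le_sum (fun y _ => h4 y)).trans (le_of_eq ?_)
  rw [Finset.sum_const, nsmul_eq_mul, Finset.card_univ, Fintype.card_fin]
  ring

lemma prob_eq_xpt (r n : ℕ) (A : Finset (Finset ℕ) → Prop) :
    prob r n A = _root_.expect r n (fun M => if A M then 1 else 0) := by
  unfold prob _root_.expect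
  rw [Finset.card_filter]
  push_cast
  congr 1

lemma cheb (hr : 1 ≤ r) (hn : 4 ≤ n) (hk : 1 ≤ k) (B : Boxes r n L k V) {q : ℝ} (hq : 0 < q) :
    prob r n (fun M => ¬ (q * k / 2 ≤ ∑ x, bZ (V x) M)) ≤
      4 / q ^ 2 * ((fM r n L - 2 * q * eM r n L + q ^ 2) + (gM r n L - fM r n L) / k) := by
  have hk' : (0 : ℝ) < k := by exact_mod_cast hk
  have h1 : (q * k / 2) ^ 2 * prob r n (fun M => ¬ (q * k / 2 ≤ ∑ x, bZ (V x) M)) ≤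
      _root_.expect r n (fun M => (∑ x, bZ (V x) M - q * k) ^ 2) := by
    rw [prob_eq_xpt, ← xpt_smul]
    apply xpt_mono
    intro M _
    by_cases h : q * k / 2 ≤ ∑ x, bZ (V x) M
    · rw [if_neg (not_not.2 h), mul_zero]
      positivity
    · rw [if_pos h]
      have : 0 < q * k / 2 := by positivity
      have h' := not_le.1 h
      nlinarith
  have h2 := h1.trans (xpt_var hr hn B q)
  rw [← le_div_iff₀' (by positivity)] at h2
  refine h2.trans (le_of_eq ?_)
  field_simp
  ring

end moments

/-- number of box systems -/
noncomputable def kf (r n : ℕ) : ℕ := ⌊(n : ℝ) ^ ((1 : ℝ) / (r : ℝ))⌋₊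
/-- size of a box -/
noncomputable def Lf (r n : ℕ) : ℕ := ⌊(n : ℝ) / ((r + 1) * kf r n)⌋₊

section asym
open Filter

lemma tt_t {r : ℕ} (hr : 1 ≤ r) :
    Tendsto (fun n : ℕ => (n : ℝ) ^ ((1 : ℝ) / (r : ℝ))) atTop atTop := by
  have hr0 : (0 : ℝ) < r := by exact_mod_cast hr
  exact (tendsto_rpow_atTop (by positivity)).comp tendsto_natCast_atTop_atTop

lemma tt_kf {r : ℕ} (hr : 1 ≤ r) : Tendsto (kf r) atTop atTop :=
  tendsto_nat_floor_atTop.comp (tt_t hr)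

lemma tt_kt {r : ℕ} (hr : 1 ≤ r) :
    Tendsto (fun n : ℕ => (kf r n : ℝ) / (n : ℝ) ^ ((1 : ℝ) / (r : ℝ))) atTop (nhds 1) :=
  (tendsto_nat_floor_div_atTop (R := ℝ)).comp (tt_t hr)

lemma t_pow {r : ℕ} (hr : 1 ≤ r) (n : ℕ) : ((n : ℝ) ^ ((1 : ℝ) / (r : ℝ))) ^ r = n := by
  have hr0 : (0 : ℝ) < r := by exact_mod_cast hr
  rw [← Real.rpow_natCast, ← Real.rpow_mul (by positivity), one_div_mul_cancel hr0.ne',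
    Real.rpow_one]

/-- `n / k^r → 1` -/
lemma tt_nk {r : ℕ} (hr : 1 ≤ r) :
    Tendsto (fun n : ℕ => (n : ℝ) / (kf r n : ℝ) ^ r) atTop (nhds 1) := by
  have h := ((tt_kt hr).pow r).inv₀ (by simp)
  simp only [one_pow, inv_one] at h
  refine h.congr (fun n => ?_)
  rw [div_pow, t_pow hr, inv_div]

lemma tt_u {r : ℕ} (hr : 2 ≤ r) :
    Tendsto (fun n : ℕ => (n : ℝ) / ((r + 1) * kf r n)) atTop atTop := by
  have h1 : Tendsto (fun n : ℕ => (kf r n : ℝ) ^ (r - 1) / (r + 1)) atTop atTop := by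
    apply Tendsto.atTop_div_const (by positivity)
    exact (tendsto_pow_atTop (by omega)).comp
      (tendsto_natCast_atTop_atTop.comp (tt_kf (by omega : 1 ≤ r)))
  have h2 := h1.atTop_mul_pos (zero_lt_one) (tt_nk (by omega : 1 ≤ r))
  refine h2.congr' ?_
  filter_upwards [(tt_kf (by omega : 1 ≤ r)).eventually_ge_atTop 1] with n hn
  have hk : (0 : ℝ) < kf r n := by exact_mod_cast hn
  obtain ⟨s, rfl⟩ : ∃ s, r = s + 1 := ⟨r - 1, by omega⟩
  simp only [Nat.add_sub_cancel]
  rw [pow_succ]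
  field_simp

lemma tt_L {r : ℕ} (hr : 2 ≤ r) : Tendsto (Lf r) atTop atTop :=
  tendsto_nat_floor_atTop.comp (tt_u hr)

lemma tt_Ln {r : ℕ} (hr : 2 ≤ r) :
    Tendsto (fun n : ℕ => (Lf r n : ℝ) ^ r / (n : ℝ) ^ (r - 1)) atTop
      (nhds (1 / ((r : ℝ) + 1) ^ r)) := by
  have h1 : Tendsto (fun n : ℕ => (Lf r n : ℝ) / ((n : ℝ) / ((r + 1) * kf r n))) atTop (nhds 1) :=
    (tendsto_nat_floor_div_atTop (R := ℝ)).comp (tt_u hr)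
  have h2 := ((h1.pow r).mul (tt_nk (by omega : 1 ≤ r))).div_const (((r : ℝ) + 1) ^ r)
  simp only [one_pow, mul_one] at h2
  refine h2.congr' ?_
  filter_upwards [(tt_kf (by omega : 1 ≤ r)).eventually_ge_atTop 1, eventually_ge_atTop 1] with n hn hn1
  have hk : (0 : ℝ) < kf r n := by exact_mod_cast hn
  have hnn : (0 : ℝ) < n := by exact_mod_cast hn1
  obtain ⟨s, rfl⟩ : ∃ s, r = s + 1 := ⟨r - 1, by omega⟩
  simp only [Nat.add_sub_cancel]
  have e1 : (n : ℝ) ^ (s + 1) = n ^ s * n := pow_succ _ _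
  rw [div_pow, div_pow, mul_pow, e1]
  have : (0 : ℝ) < (((s + 1 : ℕ) : ℝ) + 1) ^ (s + 1) := by positivity
  field_simp

lemma tt_choose {r : ℕ} (hr : 2 ≤ r) (j : ℕ) :
    Tendsto (fun n : ℕ => (Nat.choose (r * (n - j) - 1) (r - 1) : ℝ) / (n : ℝ) ^ (r - 1)) atTop
      (nhds ((r : ℝ) ^ (r - 1) / (r - 1).factorial)) := by
  have h1 : Tendsto (fun m : ℕ => (Nat.choose m (r - 1) : ℝ) * ((1 : ℝ) / m) ^ (r - 1)) atTop
      (nhds (1 ^ (r - 1) / (r - 1).factorial)) := by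
    apply ProbabilityTheory.tendsto_choose_mul_pow_atTop
    refine tendsto_const_nhds.congr' ?_
    filter_upwards [eventually_ge_atTop 1] with m hm
    have : (0 : ℝ) < m := by exact_mod_cast hm
    field_simp
  have h2 : Tendsto (fun n : ℕ => r * (n - j) - 1) atTop atTop := by
    rw [tendsto_atTop]
    intro b
    filter_upwards [eventually_ge_atTop (b + j + 1)] with n hn
    have : 1 * (n - j) ≤ r * (n - j) := Nat.mul_le_mul_right _ (by omega)
    omega
  have h3 : Tendsto (fun n : ℕ => ((r * (n - j) - 1 : ℕ) : ℝ) / n) atTop (nhds r) := by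
    have a := tendsto_const_nhds (x := ((r : ℝ) * j + 1)) (f := (atTop : Filter ℕ))
    have b := (tendsto_const_nhds (x := (r : ℝ)) (f := (atTop : Filter ℕ))).sub
      (a.mul (tendsto_one_div_atTop_nhds_zero_nat (𝕜 := ℝ)))
    simp only [mul_zero, sub_zero] at b
    refine b.congr' ?_
    filter_upwards [eventually_ge_atTop (j + 1)] with n hn
    have : 1 * (n - j) ≤ r * (n - j) := Nat.mul_le_mul_right _ (by omega)
    rw [Nat.cast_sub (by omega), Nat.cast_mul, Nat.cast_sub (by omega)]
    have hnn : (0 : ℝ) < n := by exact_mod_cast (by omega : 0 < n)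
    field_simp
    push_cast
    ring
  have h4 := (h1.comp h2).mul (h3.pow (r - 1))
  rw [one_pow, one_div_mul_eq_div] at h4
  refine h4.congr' ?_
  filter_upwards [h2.eventually_ge_atTop 1, eventually_ge_atTop 1] with n hn hn1
  have hm : (0 : ℝ) < ((r * (n - j) - 1 : ℕ) : ℝ) := by exact_mod_cast hn
  have hnn : (0 : ℝ) < n := by exact_mod_cast hn1
  simp only [Function.comp]
  rw [div_pow, div_pow, one_pow]
  field_simp

/-- limiting mean -/
noncomputable def muR (r : ℕ) : ℝ :=
  1 / ((r : ℝ) + 1) ^ r / ((r : ℝ) ^ (r - 1) / (r - 1).factorial)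

lemma muR_pos {r : ℕ} (hr : 2 ≤ r) : 0 < muR r := by
  have hr0 : (0 : ℝ) < r := by exact_mod_cast (by omega : 0 < r)
  have : (0 : ℝ) < (r - 1).factorial := by exact_mod_cast (r - 1).factorial_pos
  unfold muR; positivity

lemma muR_le {r : ℕ} (hr : 2 ≤ r) : muR r ≤ 1 := by
  have hr0 : (1 : ℝ) ≤ r := by exact_mod_cast (by omega : 1 ≤ r)
  have h0 : (0 : ℝ) < (r - 1).factorial := by exact_mod_cast (r - 1).factorial_pos
  have h1 : ((r - 1).factorial : ℝ) ≤ (r : ℝ) ^ (r - 1) := by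
    have a : (r - 1).factorial ≤ (r - 1) ^ (r - 1) := Nat.factorial_le_pow _
    have b : (r - 1) ^ (r - 1) ≤ r ^ (r - 1) := Nat.pow_le_pow_left (by omega) _
    exact_mod_cast a.trans b
  have h2 : (1 : ℝ) ≤ ((r : ℝ) + 1) ^ r := one_le_pow₀ (by linarith)
  have h3 : 1 / ((r : ℝ) + 1) ^ r ≤ 1 := by
    rw [div_le_one (by linarith)]; exact h2
  unfold muR
  have h4 : (1 : ℝ) ≤ (r : ℝ) ^ (r - 1) / (r - 1).factorial := by
    rw [le_div_iff₀ h0]; linarith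
  rw [div_le_one (by linarith)]
  linarith

lemma tt_ac {r : ℕ} (hr : 2 ≤ r) (j : ℕ) :
    Tendsto (fun n : ℕ => (Lf r n : ℝ) ^ r / (Nat.choose (r * (n - j) - 1) (r - 1) : ℝ)) atTop
      (nhds (muR r)) := by
  have hr0 : (0 : ℝ) < r := by exact_mod_cast (by omega : 0 < r)
  have h0 : (0 : ℝ) < (r - 1).factorial := by exact_mod_cast (r - 1).factorial_pos
  have h := (tt_Ln hr).div (tt_choose hr j) (by positivity)
  refine h.congr' ?_
  filter_upwards [eventually_ge_atTop 1] with n hn1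
  have hnn : (0 : ℝ) < n := by exact_mod_cast hn1
  simp only [Pi.div_apply]
  rw [div_div_div_cancel_right₀ (by positivity)]

lemma pR_succ {r n s : ℕ} (hs : s + 1 ≤ n) :
    pR r n (s + 1) = pR r n s / (Nat.choose (r * (n - s) - 1) (r - 1) : ℝ) ∨
    (Nat.choose (r * (n - s) - 1) (r - 1) : ℝ) = 0 := by
  by_cases h : (Nat.choose (r * (n - s) - 1) (r - 1) : ℝ) = 0
  · exact Or.inr h
  · left
    unfold pR
    have := gN_succ r (n - (s + 1))
    rw [show n - (s + 1) + 1 = n - s by omega] at this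
    rw [this]
    push_cast
    field_simp

lemma tt_p {r : ℕ} (hr : 2 ≤ r) (s : ℕ) :
    Tendsto (fun n : ℕ => ((Lf r n : ℝ) ^ r) ^ s * pR r n s) atTop (nhds (muR r ^ s)) := by
  induction s with
  | zero =>
    simp only [pow_zero, one_mul]
    refine tendsto_const_nhds.congr (fun n => ?_)
    have : (0 : ℝ) < gN r n := by exact_mod_cast gN_pos r n (by omega)
    unfold pR
    simp [this.ne']
  | succ s ih =>
    have h := ih.mul (tt_ac hr s)
    rw [← pow_succ] at h
    refine h.congr' ?_
    filter_upwards [eventually_ge_atTop (s + 1)] with n hn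
    have hc : (Nat.choose (r * (n - s) - 1) (r - 1) : ℝ) ≠ 0 := by
      have : 0 < Nat.choose (r * (n - s) - 1) (r - 1) := by
        apply Nat.choose_pos
        have : r * 1 ≤ r * (n - s) := Nat.mul_le_mul_left _ (by omega)
        omega
      exact_mod_cast this.ne'
    rw [(pR_succ hn).resolve_right hc, pow_succ]
    ring

lemma tt_d {r : ℕ} (hr : 2 ≤ r) :
    Tendsto (fun n : ℕ => ((Lf r n * Lf r n - Lf r n : ℕ) : ℝ) ^ r / ((Lf r n : ℝ) ^ r) ^ 2)
      atTop (nhds 1) := by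
  have h1 : Tendsto (fun n : ℕ => (1 - 1 / (Lf r n : ℝ)) ^ r) atTop (nhds ((1 - 0) ^ r)) :=
    (tendsto_const_nhds.sub ((tendsto_one_div_atTop_nhds_zero_nat (𝕜 := ℝ)).comp (tt_L hr))).pow r
  simp only [sub_zero, one_pow] at h1
  refine h1.congr' ?_
  filter_upwards [(tt_L hr).eventually_ge_atTop 1] with n hn
  have hL : (0 : ℝ) < Lf r n := by exact_mod_cast hn
  rw [Nat.cast_sub (Nat.le_mul_self _), ← pow_mul, mul_comm r 2, pow_mul, ← div_pow]
  congr 1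
  push_cast
  field_simp

lemma tt_dp {r : ℕ} (hr : 2 ≤ r) (i j : ℕ) :
    Tendsto (fun n : ℕ => ((Lf r n : ℝ) ^ r) ^ i *
      (((Lf r n * Lf r n - Lf r n : ℕ) : ℝ) ^ r) ^ j * pR r n (i + 2 * j)) atTop
      (nhds (muR r ^ (i + 2 * j))) := by
  have h := ((tt_d hr).pow j).mul (tt_p hr (i + 2 * j))
  rw [one_pow, one_mul] at h
  refine h.congr' ?_
  filter_upwards [(tt_L hr).eventually_ge_atTop 1] with n hn
  have hL : (0 : ℝ) < Lf r n := by exact_mod_cast hn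
  rw [div_pow, pow_add _ i, pow_mul _ 2 j]
  field_simp

/-- limiting density of hit boxes -/
noncomputable def qR (r : ℕ) : ℝ := muR r - muR r ^ 2 / 2

lemma qR_pos {r : ℕ} (hr : 2 ≤ r) : 0 < qR r := by
  have := muR_pos hr
  have := muR_le hr
  unfold qR
  nlinarith

lemma tt_e {r : ℕ} (hr : 2 ≤ r) : Tendsto (fun n => eM r n (Lf r n)) atTop (nhds (qR r)) := by
  have h := (tt_dp hr 1 0).sub ((tt_dp hr 0 1).div_const 2)
  simp only [pow_zero, pow_one, mul_one, one_mul, mul_zero, zero_add, add_zero] at h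
  exact h

lemma tt_f {r : ℕ} (hr : 2 ≤ r) : Tendsto (fun n => fM r n (Lf r n)) atTop (nhds (qR r ^ 2)) := by
  have h := ((tt_dp hr 2 0).sub (tt_dp hr 1 1)).add ((tt_dp hr 0 2).div_const 4)
  simp only [pow_zero, pow_one, mul_one, one_mul, mul_zero, zero_add, add_zero] at h
  have e : qR r ^ 2 = muR r ^ 2 - muR r ^ (1 + 2) + muR r ^ (2 * 2) / 4 := by
    unfold qR; ring
  rw [e]
  exact h

lemma tt_g {r : ℕ} (hr : 2 ≤ r) :
    Tendsto (fun n => gM r n (Lf r n)) atTop (nhds (muR r + muR r ^ 4)) := by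
  have h := (tt_dp hr 1 0).add (tt_dp hr 4 0)
  simp only [pow_zero, pow_one, mul_one, one_mul, mul_zero, zero_add, add_zero] at h
  exact h

lemma tt_bound {r : ℕ} (hr : 2 ≤ r) : Tendsto (fun n => 4 / qR r ^ 2 *
    ((fM r n (Lf r n) - 2 * qR r * eM r n (Lf r n) + qR r ^ 2) +
      (gM r n (Lf r n) - fM r n (Lf r n)) / (kf r n : ℝ))) atTop (nhds 0) := by
  have h1 := ((tt_f hr).sub ((tt_e hr).const_mul (2 * qR r))).add_const (qR r ^ 2)
  have h2 := ((tt_g hr).sub (tt_f hr)).div_atTop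
    (tendsto_natCast_atTop_atTop.comp (tt_kf (by omega : 1 ≤ r)) : Tendsto (fun n => (kf r n : ℝ)) atTop atTop)
  have h3 := (h1.add h2).const_mul (4 / qR r ^ 2)
  have e : 4 / qR r ^ 2 * (qR r ^ 2 - 2 * qR r * qR r + qR r ^ 2 + 0) = 0 := by ring
  rw [e] at h3
  exact h3

end asym

lemma lower_det {r n : ℕ} (hr : 2 ≤ r) {P : Finset (Finset ℕ)} {A B : Fin r → ℕ}
    (hP : NF r P A B) (hn : NTrans A B) (k L : ℕ) (hL : (r + 1) * k * L ≤ n)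
    (Q : Set (Finset (Finset ℕ))) (hQ : P ∈ Q) :
    ∃ V : Fin k → Fin r → Finset ℕ, Boxes r n L k V ∧
      ∀ M ∈ matchingFamilies r n, ∑ x, bZ (V x) M ≤ (zClique r Q M : ℝ) := by
  obtain ⟨pos, h1, h2, h3⟩ := exists_pos hP hn k
  have key : ∀ p p' a b, p < p' → a ∈ Finset.Ioc (p * L) ((p + 1) * L) →
      b ∈ Finset.Ioc (p' * L) ((p' + 1) * L) → a < b := by
    intro p p' a b h ha hb
    rw [Finset.mem_Ioc] at ha hb
    have : (p + 1) * L ≤ p' * L := Nat.mul_le_mul_right _ h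
    omega
  refine ⟨fun x l => Finset.Ioc (pos x l * L) ((pos x l + 1) * L), ⟨?_, ?_, ?_, ?_⟩, ?_⟩
  · intro x l a ha
    rw [Finset.mem_Ioc] at ha
    rw [Finset.mem_Icc]
    have e1 : (pos x l + 1) * L ≤ ((r + 1) * r * k) * L := Nat.mul_le_mul_right _ (h2 x l)
    have e2 : r * ((r + 1) * k * L) ≤ r * n := Nat.mul_le_mul_left _ hL
    have e3 : ((r + 1) * r * k) * L = r * ((r + 1) * k * L) := by ring
    omega
  · intro x l
    rw [Nat.card_Ioc, add_mul, one_mul]; omega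
  · intro x l l' hl a ha b hb
    exact key _ _ a b (h1 x hl) ha hb
  · intro x y hxy l m
    have hne : pos x l ≠ pos y m := by
      rcases lt_or_gt_of_ne hxy with h | h
      · exact (h3 x y h l m).1
      · exact (h3 y x h m l).1.symm
    rw [Finset.disjoint_left]
    intro a ha hb
    rcases lt_or_gt_of_ne hne with h | h
    · exact lt_irrefl _ (key _ _ a a h ha hb)
    · exact lt_irrefl _ (key _ _ a a h hb ha)
  · intro M hM
    set V : Fin k → Fin r → Finset ℕ := fun x l => Finset.Ioc (pos x l * L) ((pos x l + 1) * L) with hV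
    set T : Finset (Fin k) := Finset.univ.filter (fun x => ∃ e ∈ bE (V x), e ∈ M) with hT
    have s1 : ∑ x, bZ (V x) M ≤ (T.card : ℝ) := by
      refine (Finset.sum_le_sum (fun x _ => bZ_le (by omega) hM)).trans (le_of_eq ?_)
      rw [hT, Finset.card_filter]
      push_cast
      rfl
    have ex : ∀ x : Fin k, ∃ v : Fin r → ℕ, x ∈ T → (∀ l, v l ∈ V x l) ∧ Finset.univ.image v ∈ M := by
      intro x
      by_cases hx : x ∈ T
      · obtain ⟨-, e, he, heM⟩ := Finset.mem_filter.1 hx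
        obtain ⟨v, hv, rfl⟩ := mem_bE.1 he
        exact ⟨v, fun _ => ⟨hv, heM⟩⟩
      · exact ⟨fun _ => 0, fun h => absurd h hx⟩
    choose c hc using ex
    obtain ⟨g1, g2⟩ := clique_of_family (by omega) hP c T
      (fun x hx l l' hl => key _ _ _ _ (h1 x hl) ((hc x hx).1 l) ((hc x hx).1 l'))
      (by
        intro x hx y hy hxy l m
        obtain ⟨a1, a2⟩ := h3 x y hxy l m
        have b1 := (hc x hx).1 l
        have b2 := (hc y hy).1 m
        rcases lt_or_gt_of_ne a1 with h | h
        · have := key _ _ _ _ h b1 b2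
          exact ⟨this.ne, by rw [← a2]; exact ⟨fun _ => h, fun _ => this⟩⟩
        · have := key _ _ _ _ h b2 b1
          refine ⟨this.ne', ?_⟩
          rw [← a2]
          exact ⟨fun h' => absurd h' (not_lt.2 this.le), fun h' => absurd h' (not_lt.2 h.le)⟩)
    refine s1.trans ?_
    rw [← g2]
    refine Nat.cast_le.2 (le_zClique ?_ ?_)
    · intro e he
      obtain ⟨x, hx, rfl⟩ := Finset.mem_image.1 he
      exact (hc x hx).2
    · refine ⟨g1.1, g1.2.1, ?_⟩
      intro e he f hf hef
      obtain ⟨P', hP', hh⟩ := g1.2.2 e he f hf hef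
      rw [Set.mem_singleton_iff] at hP'
      exact ⟨P, hQ, hP' ▸ hh⟩

lemma prob_mono {r n : ℕ} {A B : Finset (Finset ℕ) → Prop}
    (h : ∀ M ∈ matchingFamilies r n, A M → B M) : prob r n A ≤ prob r n B := by
  rw [prob_eq_xpt, prob_eq_xpt]
  apply xpt_mono
  intro M hM
  by_cases hA : A M
  · rw [if_pos hA, if_pos (h M hM hA)]
  · rw [if_neg hA]
    split_ifs <;> norm_num

lemma lower_tendsto {r : ℕ} (hr : 2 ≤ r) {P : Finset (Finset ℕ)} (hP : IsOrderedMatching r 2 P)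
    (hc : Collectable r P) (Q : Set (Finset (Finset ℕ))) (hQ : P ∈ Q) :
    ∃ c : ℝ, 0 < c ∧
    Filter.Tendsto (fun n : ℕ => prob r n (fun M =>
      ¬ (c * (n : ℝ) ^ ((1 : ℝ) / (r : ℝ)) ≤ (zClique r Q M : ℝ)))) Filter.atTop (nhds 0) := by
  obtain ⟨A, B, hN, -⟩ := exists_NF r (by omega) P hP
  have hnt := ntrans_of_collectable hN hc
  have hq := qR_pos hr
  refine ⟨qR r / 4, by positivity, ?_⟩
  refine squeeze_zero' ?_ ?_ (tt_bound hr)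
  · exact Filter.Eventually.of_forall (fun n => by unfold prob; positivity)
  · have ev : ∀ᶠ n : ℕ in Filter.atTop, (1 / 2 : ℝ) < (kf r n : ℝ) / (n : ℝ) ^ ((1 : ℝ) / (r : ℝ)) :=
      (tt_kt (by omega : 1 ≤ r)).eventually (lt_mem_nhds (by norm_num))
    filter_upwards [ev, (tt_kf (by omega : 1 ≤ r)).eventually_ge_atTop 1,
      Filter.eventually_ge_atTop 4] with n h1 h2 h3
    have hk : (0 : ℝ) < kf r n := by exact_mod_cast h2
    have hL : (r + 1) * kf r n * Lf r n ≤ n := by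
      have : (Lf r n : ℝ) ≤ (n : ℝ) / ((r + 1) * kf r n) := Nat.floor_le (by positivity)
      rw [le_div_iff₀ (by positivity)] at this
      have h' : ((r : ℝ) + 1) * kf r n * Lf r n ≤ n := by linarith
      exact_mod_cast h'
    obtain ⟨V, hV, hz⟩ := lower_det hr hN hnt (kf r n) (Lf r n) hL Q hQ
    refine le_trans (prob_mono ?_) (cheb (by omega) h3 h2 hV hq)
    intro M hM hnot hle
    apply hnot
    have hnn : (0 : ℝ) < n := by exact_mod_cast (by omega : 0 < n)
    have ht : 0 < (n : ℝ) ^ ((1 : ℝ) / (r : ℝ)) := by positivity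
    rw [lt_div_iff₀ ht] at h1
    have := hz M hM
    nlinarith

lemma both_tendsto {r : ℕ} (hr : 1 ≤ r) (A B : ℕ → Finset (Finset ℕ) → Prop)
    (hA : Filter.Tendsto (fun n => prob r n (fun M => ¬ A n M)) Filter.atTop (nhds 0))
    (hB : Filter.Tendsto (fun n => prob r n (fun M => ¬ B n M)) Filter.atTop (nhds 0)) :
    Filter.Tendsto (fun n => prob r n (fun M => A n M ∧ B n M)) Filter.atTop (nhds 1) := by
  have h0 := (tendsto_const_nhds (x := (1 : ℝ)) (f := (Filter.atTop : Filter ℕ))).sub (hA.add hB)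
  simp only [add_zero, sub_zero] at h0
  refine tendsto_of_tendsto_of_tendsto_of_le_of_le h0 tendsto_const_nhds ?_ ?_
  · intro n
    simp only
    rw [sub_le_iff_le_add, ← xpt_const r n hr 1, prob_eq_xpt, prob_eq_xpt, prob_eq_xpt, ← xpt_add, ← xpt_add]
    apply xpt_mono
    intro M _
    by_cases a : A n M <;> by_cases b : B n M <;> simp [a, b]
  · intro n
    simp only
    rw [← xpt_const r n hr 1, prob_eq_xpt]
    apply xpt_mono
    intro M _
    split_ifs <;> norm_num

/-- **Theorem (mismatched pairs).** For every `r ≥ 2` and every mismatched pair `{P, Q}` of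
distinct `r`-patterns, a.a.s. `z_{{P,Q}}(RM_n^(r)) = Θ(n^(1/r))`. -/
theorem aas_mismatched_pair (r : ℕ) (hr : 2 ≤ r) (P Q : Finset (Finset ℕ))
    (hP : IsOrderedMatching r 2 P) (hQ : IsOrderedMatching r 2 Q)
    (hPQ : Mismatch r P Q) :
    ∃ c₁ c₂ : ℝ, 0 < c₁ ∧ 0 < c₂ ∧
      Filter.Tendsto
        (fun n : ℕ => prob r n (fun M =>
          c₁ * (n : ℝ) ^ ((1 : ℝ) / (r : ℝ)) ≤ (zClique r {P, Q} M : ℝ) ∧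
          (zClique r {P, Q} M : ℝ) ≤ c₂ * (n : ℝ) ^ ((1 : ℝ) / (r : ℝ))))
        Filter.atTop (nhds 1) := by
  obtain ⟨c₂, hc₂, h₂⟩ := upper_tendsto hr hP hQ hPQ
  have hlow : ∃ c : ℝ, 0 < c ∧
    Filter.Tendsto (fun n : ℕ => prob r n (fun M =>
      ¬ (c * (n : ℝ) ^ ((1 : ℝ) / (r : ℝ)) ≤ (zClique r {P, Q} M : ℝ)))) Filter.atTop (nhds 0) := by
    rcases hPQ.2 with h | h | h
    · exact lower_tendsto hr hP h.1 _ (by simp)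
    · exact lower_tendsto hr hQ h.2 _ (by simp)
    · exact lower_tendsto hr hP h.1 _ (by simp)
  obtain ⟨c₁, hc₁, h₁⟩ := hlow
  exact ⟨c₁, c₂, hc₁, hc₂, both_tendsto (by omega) _ _ h₁ h₂⟩
end

section
/- For every integer r ≥ 2 and every pair {P, Q} of distinct r-patterns neither of which is collectable, the number z = z_{{P,Q}} defined as the maximum size of any {P, Q}-clique satisfies 2 ≤ z ≤ 5, and the probability that z_{{P,Q}}(RM_n^(r)) = z tends to 1 as n → ∞. -/
open Finset
open scoped Classical

lemma FormsPattern.symm' {r : ℕ} {e f : Finset ℕ} {P : Finset (Finset ℕ)}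
    (h : FormsPattern r e f P) : FormsPattern r f e P := by
  obtain ⟨φ, h1, h2, h3⟩ := h
  refine ⟨φ, ?_, ?_, ?_⟩
  · rwa [Finset.union_comm]
  · rwa [Finset.union_comm]
  · rwa [Finset.pair_comm]

lemma FormsPattern.comp' {r : ℕ} {e f e' f' : Finset ℕ} {P : Finset (Finset ℕ)} (ψ : ℕ → ℕ)
    (hψ : StrictMonoOn ψ ↑(e ∪ f)) (he : e.image ψ = e') (hf : f.image ψ = f')
    (h : FormsPattern r e' f' P) : FormsPattern r e f P := by
  obtain ⟨φ, h1, h2, h3⟩ := h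
  subst he hf
  refine ⟨φ ∘ ψ, ?_, ?_, ?_⟩
  · refine h1.comp hψ ?_
    intro x hx
    rw [← Finset.image_union]
    exact Finset.mem_coe.2 (Finset.mem_image_of_mem _ hx)
  · rw [← Finset.image_image, Finset.image_union, h2]
  · rw [← Finset.image_image, ← Finset.image_image, h3]

/-- In a pattern map, the edge with the smaller first element is the one whose image contains 1. -/
lemma one_mem_image {r : ℕ} (hr : 0 < r) {e f : Finset ℕ} (he : e.card = r) (hf : f.card = r)
    (hlt : e.orderEmbOfFin he ⟨0, hr⟩ < f.orderEmbOfFin hf ⟨0, hr⟩)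
    {φ : ℕ → ℕ} (h1 : StrictMonoOn φ ↑(e ∪ f))
    (h2 : (e ∪ f).image φ = Finset.Icc 1 (2 * r)) : 1 ∈ e.image φ := by
  have hmem : e.orderEmbOfFin he ⟨0, hr⟩ ∈ e := Finset.orderEmbOfFin_mem _ _ _
  have h1m : 1 ∈ (e ∪ f).image φ := by rw [h2]; simp; omega
  obtain ⟨x, hx, hx1⟩ := Finset.mem_image.1 h1m
  have hle : e.orderEmbOfFin he ⟨0, hr⟩ ≤ x := by
    rcases Finset.mem_union.1 hx with hx | hx
    · have : x ∈ Set.range (e.orderEmbOfFin he) := by simpa using hx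
      obtain ⟨i, rfl⟩ := this
      exact (e.orderEmbOfFin he).monotone (Fin.mk_le_of_le_val (Nat.zero_le _))
    · have : x ∈ Set.range (f.orderEmbOfFin hf) := by simpa using hx
      obtain ⟨i, rfl⟩ := this
      exact hlt.le.trans ((f.orderEmbOfFin hf).monotone (Fin.mk_le_of_le_val (Nat.zero_le _)))
  have hu : e.orderEmbOfFin he ⟨0, hr⟩ ∈ e ∪ f := Finset.mem_union_left _ hmem
  have hle2 := h1.monotoneOn (Finset.mem_coe.2 hu) (Finset.mem_coe.2 hx) hle
  have hge : φ (e.orderEmbOfFin he ⟨0, hr⟩) ∈ Finset.Icc 1 (2 * r) := by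
    rw [← h2]; exact Finset.mem_image_of_mem _ hu
  rw [Finset.mem_Icc] at hge
  exact Finset.mem_image.2 ⟨_, hmem, by omega⟩

lemma one_not_mem_image {e f : Finset ℕ} (hd : Disjoint e f)
    {φ : ℕ → ℕ} (h1 : StrictMonoOn φ ↑(e ∪ f)) (h : 1 ∈ e.image φ) : 1 ∉ f.image φ := by
  intro h'
  obtain ⟨x, hx, hx1⟩ := Finset.mem_image.1 h
  obtain ⟨y, hy, hy1⟩ := Finset.mem_image.1 h'
  have := h1.injOn (Finset.mem_coe.2 (Finset.mem_union_left _ hx))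
    (Finset.mem_coe.2 (Finset.mem_union_right _ hy)) (hx1.trans hy1.symm)
  subst this
  exact Finset.disjoint_left.1 hd hx hy

lemma same_type {r : ℕ} (hr : 0 < r) {P : Finset (Finset ℕ)} {e f e' f' : Finset ℕ}
    (he : e.card = r) (hf : f.card = r) (he' : e'.card = r) (hf' : f'.card = r)
    (hd : Disjoint e f) (hd' : Disjoint e' f')
    (hlt : e.orderEmbOfFin he ⟨0, hr⟩ < f.orderEmbOfFin hf ⟨0, hr⟩)
    (hlt' : e'.orderEmbOfFin he' ⟨0, hr⟩ < f'.orderEmbOfFin hf' ⟨0, hr⟩)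
    (h : FormsPattern r e f P) (h' : FormsPattern r e' f' P) (i j : Fin r) :
    e.orderEmbOfFin he i < f.orderEmbOfFin hf j ↔
      e'.orderEmbOfFin he' i < f'.orderEmbOfFin hf' j := by
  obtain ⟨φ, h1, h2, h3⟩ := h
  obtain ⟨φ', h1', h2', h3'⟩ := h'
  have a1 := one_mem_image hr he hf hlt h1 h2
  have a2 := one_mem_image hr he' hf' hlt' h1' h2'
  have b1 := one_not_mem_image hd h1 a1
  have b2 := one_not_mem_image hd' h1' a2
  have hee : e.image φ = e'.image φ' := by
    have : e.image φ ∈ P := by rw [← h3]; simp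
    rw [← h3'] at this
    simp only [Finset.mem_insert, Finset.mem_singleton] at this
    rcases this with h | h
    · exact h
    · rw [h] at a1; exact absurd a1 b2
  have hff : f.image φ = f'.image φ' := by
    have : f.image φ ∈ P := by rw [← h3]; simp
    rw [← h3'] at this
    simp only [Finset.mem_insert, Finset.mem_singleton] at this
    rcases this with h | h
    · rw [h] at b1; exact absurd a2 b1
    · exact h
  have key : ∀ (s s' u u' : Finset ℕ) (hs : s.card = r) (hs' : s'.card = r),
      s ⊆ u → s' ⊆ u' → StrictMonoOn φ ↑u → StrictMonoOn φ' ↑u' →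
      s.image φ = s'.image φ' → ∀ i, φ (s.orderEmbOfFin hs i) = φ' (s'.orderEmbOfFin hs' i) := by
    intro s s' u u' hs hs' hsu hsu' m m' him i
    have hc : (s.image φ).card = r := by
      rw [Finset.card_image_of_injOn, hs]
      exact m.injOn.mono (by exact_mod_cast hsu)
    have e1 := Finset.orderEmbOfFin_unique hc (f := fun i => φ (s.orderEmbOfFin hs i))
      (fun x => Finset.mem_image_of_mem _ (Finset.orderEmbOfFin_mem _ _ _))
      (fun x y hxy => m (hsu (Finset.orderEmbOfFin_mem _ _ _))
        (hsu (Finset.orderEmbOfFin_mem _ _ _)) ((s.orderEmbOfFin hs).strictMono hxy))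
    have e2 := Finset.orderEmbOfFin_unique hc (f := fun i => φ' (s'.orderEmbOfFin hs' i))
      (fun x => by rw [him]; exact Finset.mem_image_of_mem _ (Finset.orderEmbOfFin_mem _ _ _))
      (fun x y hxy => m' (hsu' (Finset.orderEmbOfFin_mem _ _ _))
        (hsu' (Finset.orderEmbOfFin_mem _ _ _)) ((s'.orderEmbOfFin hs').strictMono hxy))
    exact congrFun (e1.trans e2.symm) i
  have k1 := key e e' _ _ he he' Finset.subset_union_left Finset.subset_union_left h1 h1' hee i
  have k2 := key f f' _ _ hf hf' Finset.subset_union_right Finset.subset_union_right h1 h1' hff j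
  rw [← h1.lt_iff_lt (Finset.mem_union_left _ (Finset.orderEmbOfFin_mem _ _ _))
    (Finset.mem_union_right _ (Finset.orderEmbOfFin_mem _ _ _)),
    ← h1'.lt_iff_lt (Finset.mem_union_left _ (Finset.orderEmbOfFin_mem _ _ _))
    (Finset.mem_union_right _ (Finset.orderEmbOfFin_mem _ _ _)), k1, k2]

/-- The candidate order on `k × r`. -/
def blowLt {k r : ℕ} (T : Fin r → Fin r → Prop) (p q : Fin k × Fin r) : Prop :=
  (p.1 < q.1 ∧ T p.2 q.2) ∨ (p.1 = q.1 ∧ p.2 < q.2) ∨ (q.1 < p.1 ∧ ¬ T q.2 p.2)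

lemma blowLt_total {k r : ℕ} (T : Fin r → Fin r → Prop) (p q : Fin k × Fin r) (h : p ≠ q) :
    blowLt T p q ∨ blowLt T q p := by
  unfold blowLt
  rcases lt_trichotomy p.1 q.1 with h1 | h1 | h1
  · by_cases h2 : T p.2 q.2 <;> simp [h1, h2]
  · rcases lt_trichotomy p.2 q.2 with h2 | h2 | h2
    · simp [h1, h2]
    · exact absurd (Prod.ext h1 h2) h
    · simp [h1, h2]
  · by_cases h2 : T q.2 p.2 <;> simp [h1, h2]

lemma blowLt_irrefl {k r : ℕ} (T : Fin r → Fin r → Prop) (p : Fin k × Fin r) :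
    ¬ blowLt T p p := by
  simp [blowLt]

lemma blowLt_trans {k r : ℕ} (A : ℕ → Fin r → ℕ) (T : Fin r → Fin r → Prop)
    (hA : ∀ s, s < 3 → StrictMono (A s))
    (hT : ∀ s t, s < t → t < 3 → ∀ i j, A s i < A t j ↔ T i j)
    (hne : ∀ s t, s < t → t < 3 → ∀ i j, A s i ≠ A t j)
    (p q u : Fin k × Fin r) (h1 : blowLt T p q) (h2 : blowLt T q u) : blowLt T p u := by
  obtain ⟨σ, hσ, hσ3⟩ : ∃ σ : Fin k → ℕ, (∀ x ∈ ({p.1, q.1, u.1} : Finset (Fin k)),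
      ∀ y ∈ ({p.1, q.1, u.1} : Finset (Fin k)), x < y → σ x < σ y) ∧
      ∀ x ∈ ({p.1, q.1, u.1} : Finset (Fin k)), σ x < 3 := by
    refine ⟨fun x => (({p.1, q.1, u.1} : Finset (Fin k)).filter (· < x)).card, ?_, ?_⟩
    · intro x hx y hy hxy
      apply Finset.card_lt_card
      rw [Finset.ssubset_iff_of_subset]
      · exact ⟨x, by simp only [Finset.mem_filter]; exact ⟨hx, hxy⟩, by simp⟩
      · intro z hz
        simp only [Finset.mem_filter] at hz ⊢
        exact ⟨hz.1, hz.2.trans hxy⟩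
    · intro x hx
      refine lt_of_lt_of_le (Finset.card_lt_card (?_ : _ ⊂ ({p.1, q.1, u.1} : Finset (Fin k))))
        Finset.card_le_three
      rw [Finset.ssubset_iff_of_subset (Finset.filter_subset _ _)]
      exact ⟨x, hx, by simp⟩
  have key : ∀ x ∈ ({p.1, q.1, u.1} : Finset (Fin k)),
      ∀ y ∈ ({p.1, q.1, u.1} : Finset (Fin k)), ∀ i j,
      (blowLt T (x, i) (y, j) ↔ A (σ x) i < A (σ y) j) := by
    intro x hx y hy i j
    unfold blowLt
    rcases lt_trichotomy x y with h | h | h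
    · rw [hT _ _ (hσ x hx y hy h) (hσ3 y hy)]
      simp [h, h.ne, h.not_gt]
    · subst h
      simp [(hA _ (hσ3 x hx)).lt_iff_lt]
    · have e1 := hT _ _ (hσ y hy x hx h) (hσ3 x hx) j i
      have e2 := hne _ _ (hσ y hy x hx h) (hσ3 x hx) j i
      simp only [h, h.ne', h.not_gt, ← e1]
      simp
      omega
  have hp : p.1 ∈ ({p.1, q.1, u.1} : Finset (Fin k)) := by simp
  have hq : q.1 ∈ ({p.1, q.1, u.1} : Finset (Fin k)) := by simp
  have hu : u.1 ∈ ({p.1, q.1, u.1} : Finset (Fin k)) := by simp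
  have a1 := (key _ hp _ hq p.2 q.2).1 h1
  have a2 := (key _ hq _ hu q.2 u.2).1 h2
  exact (key _ hp _ hu p.2 u.2).2 (a1.trans a2)

lemma collectable_of_ordered {r : ℕ} (hr : 0 < r) {P : Finset (Finset ℕ)} {e f g : Finset ℕ}
    (he : e.card = r) (hf : f.card = r) (hg : g.card = r)
    (hef : Disjoint e f) (heg : Disjoint e g) (hfg : Disjoint f g)
    (h1 : e.orderEmbOfFin he ⟨0, hr⟩ < f.orderEmbOfFin hf ⟨0, hr⟩)
    (h2 : f.orderEmbOfFin hf ⟨0, hr⟩ < g.orderEmbOfFin hg ⟨0, hr⟩)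
    (pef : FormsPattern r e f P) (peg : FormsPattern r e g P) (pfg : FormsPattern r f g P) :
    Collectable r P := by
  intro k
  set a := e.orderEmbOfFin he with ha
  set b := f.orderEmbOfFin hf with hb
  set c := g.orderEmbOfFin hg with hc
  have hac := same_type hr he hf he hg hef heg h1 (h1.trans h2) pef peg
  have hbc := same_type hr he hf hf hg hef hfg h1 h2 pef pfg
  have nab : ∀ i j, a i ≠ b j := fun i j h => Finset.disjoint_left.1 hef
    (Finset.orderEmbOfFin_mem e he i) (by rw [← ha, h]; exact Finset.orderEmbOfFin_mem f hf j)
  have nac : ∀ i j, a i ≠ c j := fun i j h => Finset.disjoint_left.1 heg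
    (Finset.orderEmbOfFin_mem e he i) (by rw [← ha, h]; exact Finset.orderEmbOfFin_mem g hg j)
  have nbc : ∀ i j, b i ≠ c j := fun i j h => Finset.disjoint_left.1 hfg
    (Finset.orderEmbOfFin_mem f hf i) (by rw [← hb, h]; exact Finset.orderEmbOfFin_mem g hg j)
  let T : Fin r → Fin r → Prop := fun i j => a i < b j
  let A : ℕ → Fin r → ℕ := fun s => if s = 0 then a else if s = 1 then b else c
  have htrans : ∀ p q u : Fin k × Fin r, blowLt T p q → blowLt T q u → blowLt T p u := by
    refine blowLt_trans A T ?_ ?_ ?_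
    · intro s hs
      interval_cases s
      · exact a.strictMono
      · exact b.strictMono
      · exact c.strictMono
    · intro s t hst ht i j
      interval_cases t
      · omega
      · interval_cases s
        exact Iff.rfl
      · interval_cases s
        · exact (hac i j).symm
        · exact (hbc i j).symm
    · intro s t hst ht i j
      interval_cases t
      · omega
      · interval_cases s
        exact nab i j
      · interval_cases s
        · exact nac i j
        · exact nbc i j
  let R : Fin k × Fin r → ℕ := fun p => (Finset.univ.filter (fun q => blowLt T q p)).card
  have hR : ∀ p q, blowLt T p q → R p < R q := by
    intro p q hpq
    apply Finset.card_lt_card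
    rw [Finset.ssubset_iff_of_subset]
    · exact ⟨p, by simpa using hpq, by simpa using blowLt_irrefl T p⟩
    · intro z hz
      simp only [Finset.mem_filter, Finset.mem_univ, true_and] at hz ⊢
      exact htrans _ _ _ hz hpq
  have hRinj : Function.Injective R := by
    intro p q hpq
    by_contra hne
    rcases blowLt_total T p q hne with h | h
    · exact absurd (hR _ _ h) (by omega)
    · exact absurd (hR _ _ h) (by omega)
  have hR' : ∀ p q, R p < R q → blowLt T p q := by
    intro p q hpq
    have hne : p ≠ q := by rintro rfl; omega
    rcases blowLt_total T p q hne with h | h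
    · exact h
    · exact absurd (hR _ _ h) (by omega)
  let E : Fin k → Finset ℕ := fun x => Finset.univ.image (fun i => R (x, i))
  have hEcard : ∀ x, (E x).card = r := by
    intro x
    rw [Finset.card_image_of_injective]
    · simp
    · intro i j hij
      exact congrArg Prod.snd (hRinj hij)
  have hEdisj : ∀ x y, x ≠ y → Disjoint (E x) (E y) := by
    intro x y hxy
    rw [Finset.disjoint_left]
    intro m hm hm'
    simp only [E, Finset.mem_image, Finset.mem_univ, true_and] at hm hm'
    obtain ⟨i, rfl⟩ := hm
    obtain ⟨j, hj⟩ := hm'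
    exact hxy (congrArg Prod.fst (hRinj hj)).symm
  have hEinj : Function.Injective E := by
    intro x y hxy
    by_contra hne
    have := hEdisj x y hne
    rw [hxy, disjoint_self] at this
    have h0 := hEcard y
    rw [this] at h0
    simp at h0
    omega
  have hEpat : ∀ x y, x < y → FormsPattern r (E x) (E y) P := by
    intro x y hxy
    let v : Fin k × Fin r → ℕ := fun p => if p.1 = x then a p.2 else b p.2
    let ψ : ℕ → ℕ := Function.extend R v 0
    have hψ : ∀ p, ψ (R p) = v p := fun p => hRinj.extend_apply v 0 p
    have vx : ∀ i, v (x, i) = a i := fun i => by simp [v]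
    have vy : ∀ i, v (y, i) = b i := fun i => by simp [v, hxy.ne']
    refine FormsPattern.comp' ψ ?_ (e' := e) (f' := f) ?_ ?_ pef
    · intro m hm m' hm' hmm
      simp only [E, Finset.coe_union, Finset.coe_image, Set.mem_union, Set.mem_image,
        Finset.coe_univ, Set.mem_univ, true_and] at hm hm'
      rcases hm with ⟨i, rfl⟩ | ⟨i, rfl⟩ <;> rcases hm' with ⟨j, rfl⟩ | ⟨j, rfl⟩ <;>
        have := hR' _ _ hmm <;> simp only [hψ, vx, vy] <;> simp only [blowLt] at this
      · simp at this
        exact a.strictMono this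
      · simp [hxy, hxy.ne, hxy.not_gt] at this
        exact this
      · simp [hxy, hxy.ne', hxy.not_gt] at this
        exact lt_of_le_of_ne (not_lt.1 this) (nab _ _).symm
      · simp at this
        exact b.strictMono this
    · simp only [E, Finset.image_image, Function.comp_def, hψ, vx]
      ext m
      have : m ∈ Set.range a ↔ m ∈ e := by rw [ha]; simp
      simpa using this
    · simp only [E, Finset.image_image, Function.comp_def, hψ, vy]
      ext m
      have : m ∈ Set.range b ↔ m ∈ f := by rw [hb]; simp
      simpa using this
  refine ⟨Finset.univ.image E, ⟨?_, ?_, ?_⟩, ?_⟩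
  · intro s hs
    obtain ⟨x, -, rfl⟩ := Finset.mem_image.1 hs
    exact hEcard x
  · intro s hs t ht hst
    obtain ⟨x, -, rfl⟩ := Finset.mem_image.1 hs
    obtain ⟨y, -, rfl⟩ := Finset.mem_image.1 ht
    exact hEdisj x y (fun h => hst (by rw [h]))
  · intro s hs t ht hst
    obtain ⟨x, -, rfl⟩ := Finset.mem_image.1 hs
    obtain ⟨y, -, rfl⟩ := Finset.mem_image.1 ht
    have hxy : x ≠ y := fun h => hst (by rw [h])
    refine ⟨P, rfl, ?_⟩
    rcases lt_or_gt_of_ne hxy with h | h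
    · exact hEpat x y h
    · exact (hEpat y x h).symm'
  · rw [Finset.card_image_of_injective _ hEinj]; simp

lemma collectable_of_three {r : ℕ} (hr : 0 < r) {P : Finset (Finset ℕ)} {e f g : Finset ℕ}
    (he : e.card = r) (hf : f.card = r) (hg : g.card = r)
    (hef : Disjoint e f) (heg : Disjoint e g) (hfg : Disjoint f g)
    (pef : FormsPattern r e f P) (peg : FormsPattern r e g P) (pfg : FormsPattern r f g P) :
    Collectable r P := by
  have hne : ∀ (s t : Finset ℕ) (hs : s.card = r) (ht : t.card = r), Disjoint s t →
      s.orderEmbOfFin hs ⟨0, hr⟩ ≠ t.orderEmbOfFin ht ⟨0, hr⟩ := fun s t hs ht hd h =>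
    Finset.disjoint_left.1 hd (Finset.orderEmbOfFin_mem s hs _)
      (by rw [h]; exact Finset.orderEmbOfFin_mem t ht _)
  rcases lt_or_gt_of_ne (hne e f he hf hef) with h1 | h1 <;>
  rcases lt_or_gt_of_ne (hne e g he hg heg) with h2 | h2 <;>
  rcases lt_or_gt_of_ne (hne f g hf hg hfg) with h3 | h3
  · exact collectable_of_ordered hr he hf hg hef heg hfg h1 h3 pef peg pfg
  · exact collectable_of_ordered hr he hg hf heg hef hfg.symm h2 h3 peg pef pfg.symm'
  · exact absurd (h1.trans h3) (lt_asymm h2)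
  · exact collectable_of_ordered hr hg he hf heg.symm hfg.symm hef h2 h1 peg.symm' pfg.symm' pef
  · exact collectable_of_ordered hr hf he hg hef.symm hfg heg h1 h2 pef.symm' pfg peg
  · exact absurd (h3.trans h1) (lt_asymm h2)
  · exact collectable_of_ordered hr hf hg he hfg hef.symm heg.symm h3 h2 pfg pef.symm' peg.symm'
  · exact collectable_of_ordered hr hg hf he hfg.symm heg.symm hef.symm h3 h1 pfg.symm' peg.symm'
      pef.symm'

lemma clique_card_le {r : ℕ} (hr : 0 < r) {P Q : Finset (Finset ℕ)}
    (hcP : ¬ Collectable r P) (hcQ : ¬ Collectable r Q) {K : Finset (Finset ℕ)}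
    (hK : IsClique r {P, Q} K) : K.card ≤ 5 := by
  by_contra hcard
  obtain ⟨h1, h2, h3⟩ := hK
  have tri : ∀ P', ¬ Collectable r P' → ∀ e ∈ K, ∀ f ∈ K, ∀ g ∈ K, e ≠ f → e ≠ g → f ≠ g →
      FormsPattern r e f P' → FormsPattern r e g P' → ¬ FormsPattern r f g P' :=
    fun P' hP' e he f hf g hg hef heg hfg a b c => hP' (collectable_of_three hr (h1 e he) (h1 f hf)
      (h1 g hg) (h2 e he f hf hef) (h2 e he g hg heg) (h2 f hf g hg hfg) a b c)
  have main : ∀ P' Q', ¬ Collectable r P' → ¬ Collectable r Q' →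
      (∀ e ∈ K, ∀ f ∈ K, e ≠ f → FormsPattern r e f P' ∨ FormsPattern r e f Q') →
      ∀ v ∈ K, ((K.erase v).filter (fun f => FormsPattern r v f P')).card ≤ 2 := by
    intro P' Q' hP' hQ' hor v hv
    by_contra hc
    obtain ⟨a, b, c, ha, hb, hc, hab, hac, hbc⟩ := Finset.two_lt_card_iff.1 (not_le.1 hc)
    simp only [Finset.mem_filter, Finset.mem_erase] at ha hb hc
    obtain ⟨⟨a1, a2⟩, a3⟩ := ha
    obtain ⟨⟨b1, b2⟩, b3⟩ := hb
    obtain ⟨⟨c1, c2⟩, c3⟩ := hc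
    have q1 := (hor a a2 b b2 hab).resolve_left
      (tri P' hP' v hv a a2 b b2 a1.symm b1.symm hab a3 b3)
    have q2 := (hor a a2 c c2 hac).resolve_left
      (tri P' hP' v hv a a2 c c2 a1.symm c1.symm hac a3 c3)
    have q3 := (hor b b2 c c2 hbc).resolve_left
      (tri P' hP' v hv b b2 c c2 b1.symm c1.symm hbc b3 c3)
    exact tri Q' hQ' a a2 b b2 c c2 hab hac hbc q1 q2 q3
  have hor : ∀ e ∈ K, ∀ f ∈ K, e ≠ f → FormsPattern r e f P ∨ FormsPattern r e f Q := by
    intro e he f hf hef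
    obtain ⟨S, hS, hS'⟩ := h3 e he f hf hef
    rcases hS with rfl | hS
    · exact Or.inl hS'
    · rw [Set.mem_singleton_iff] at hS
      subst hS
      exact Or.inr hS'
  obtain ⟨v, hv⟩ : K.Nonempty := Finset.card_pos.1 (by omega)
  have m1 := main P Q hcP hcQ hor v hv
  have m2 := main Q P hcQ hcP (fun e he f hf hef => (hor e he f hf hef).symm) v hv
  have hsub : K.erase v ⊆ (K.erase v).filter (fun f => FormsPattern r v f P) ∪
      (K.erase v).filter (fun f => FormsPattern r v f Q) := by
    intro f hf
    have hf' := Finset.mem_erase.1 hf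
    simp only [Finset.mem_union, Finset.mem_filter]
    rcases hor v hv f hf'.2 hf'.1.symm with h | h
    · exact Or.inl ⟨hf, h⟩
    · exact Or.inr ⟨hf, h⟩
  have := (Finset.card_le_card hsub).trans (Finset.card_union_le _ _)
  rw [Finset.card_erase_of_mem hv] at this
  omega

lemma pattern_isClique {r : ℕ} {P : Finset (Finset ℕ)} (Ps : Set (Finset (Finset ℕ)))
    (hPs : P ∈ Ps) (hP : IsOrderedMatching r 2 P) : IsClique r Ps P := by
  obtain ⟨h1, h2, h3, h4⟩ := hP
  refine ⟨h2, h3, ?_⟩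
  intro e he f hf hef
  have hPe : ({e, f} : Finset (Finset ℕ)) = P := by
    apply Finset.eq_of_subset_of_card_le
    · intro x hx
      simp at hx
      rcases hx with rfl | rfl <;> assumption
    · rw [h1, Finset.card_pair hef]
  refine ⟨P, hPs, id, strictMonoOn_id, ?_, ?_⟩
  · rw [← hPe] at h4
    simpa [Nat.mul_comm] using h4
  · simpa using hPe

/-- Perfect `r`-matchings of size `n` of an arbitrary finite set `S`. -/
def IsMatchingOn (r n : ℕ) (S : Finset ℕ) (M : Finset (Finset ℕ)) : Prop :=
  M.card = n ∧ (∀ e ∈ M, e.card = r) ∧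
  (∀ e ∈ M, ∀ f ∈ M, e ≠ f → Disjoint e f) ∧ M.biUnion id = S

noncomputable def matchOn (r n : ℕ) (S : Finset ℕ) : Finset (Finset (Finset ℕ)) :=
  (S.powerset.powerset).filter (IsMatchingOn r n S)

lemma mem_matchOn {r n : ℕ} {S : Finset ℕ} {M : Finset (Finset ℕ)} :
    M ∈ matchOn r n S ↔ IsMatchingOn r n S M := by
  unfold matchOn
  rw [Finset.mem_filter]
  refine ⟨fun h => h.2, fun h => ⟨?_, h⟩⟩
  rw [Finset.mem_powerset]
  intro e he
  rw [Finset.mem_powerset, ← h.2.2.2]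
  exact Finset.subset_biUnion_of_mem id he

lemma matchOn_eq (r n : ℕ) : matchOn r n (Finset.Icc 1 (r * n)) = matchingFamilies r n := rfl

lemma IsMatchingOn.subset {r n : ℕ} {S : Finset ℕ} {M : Finset (Finset ℕ)}
    (h : IsMatchingOn r n S M) {e : Finset ℕ} (he : e ∈ M) : e ⊆ S := by
  rw [← h.2.2.2]
  exact Finset.subset_biUnion_of_mem id he

lemma matchOn_card_le {r n : ℕ} {S S' : Finset ℕ} (h : S.card = S'.card) :
    (matchOn r n S).card ≤ (matchOn r n S').card := by
  have e := Finset.equivOfCardEq h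
  let φ : ℕ → ℕ := fun x => if hx : x ∈ S then (e ⟨x, hx⟩ : ℕ) else 0
  have hφ : ∀ x (hx : x ∈ S), φ x = e ⟨x, hx⟩ := fun x hx => by simp [φ, hx]
  have hinj : Set.InjOn φ ↑S := by
    intro x hx y hy hxy
    rw [hφ x hx, hφ y hy] at hxy
    have := e.injective (Subtype.ext hxy)
    exact congrArg Subtype.val this
  have himg : S.image φ = S' := by
    ext y
    rw [Finset.mem_image]
    constructor
    · rintro ⟨x, hx, rfl⟩
      rw [hφ x hx]
      exact (e ⟨x, hx⟩).2
    · intro hy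
      refine ⟨(e.symm ⟨y, hy⟩ : ℕ), (e.symm ⟨y, hy⟩).2, ?_⟩
      rw [hφ _ (e.symm ⟨y, hy⟩).2]
      simp
  have hsetinj : ∀ s t : Finset ℕ, s ⊆ S → t ⊆ S → s.image φ = t.image φ → s = t := by
    have aux : ∀ s t : Finset ℕ, s ⊆ S → t ⊆ S → s.image φ = t.image φ → s ⊆ t := by
      intro s t hs ht hst x hx
      have : φ x ∈ t.image φ := by rw [← hst]; exact Finset.mem_image_of_mem _ hx
      obtain ⟨y, hy, hyx⟩ := Finset.mem_image.1 this
      rw [← hinj (ht hy) (hs hx) hyx]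
      exact hy
    exact fun s t hs ht hst => (aux s t hs ht hst).antisymm (aux t s ht hs hst.symm)
  refine Finset.card_le_card_of_injOn (fun M => M.image (fun s => s.image φ)) ?_ ?_
  · intro M hM
    rw [Finset.mem_coe, mem_matchOn] at hM
    rw [Finset.mem_coe, mem_matchOn]
    obtain ⟨h1, h2, h3, h4⟩ := id hM
    refine ⟨?_, ?_, ?_, ?_⟩
    · rw [Finset.card_image_of_injOn, h1]
      intro s hs t ht hst
      exact hsetinj s t (hM.subset hs) (hM.subset ht) hst
    · intro f hf
      obtain ⟨s, hs, rfl⟩ := Finset.mem_image.1 hf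
      rw [Finset.card_image_of_injOn, h2 s hs]
      exact hinj.mono (by exact_mod_cast hM.subset hs)
    · intro f hf g hg hfg
      obtain ⟨s, hs, rfl⟩ := Finset.mem_image.1 hf
      obtain ⟨t, ht, rfl⟩ := Finset.mem_image.1 hg
      have hst : s ≠ t := fun h => hfg (by rw [h])
      rw [Finset.disjoint_left]
      intro y hy hy'
      obtain ⟨a, ha, rfl⟩ := Finset.mem_image.1 hy
      obtain ⟨b, hb, hba⟩ := Finset.mem_image.1 hy'
      have := hinj (hM.subset ht hb) (hM.subset hs ha) hba
      subst this
      exact Finset.disjoint_left.1 (h3 s hs t ht hst) ha hb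
    · rw [← himg, ← h4]
      ext y
      simp only [Finset.mem_biUnion, Finset.mem_image, id]
      constructor
      · rintro ⟨_, ⟨s, hs, rfl⟩, hy⟩
        obtain ⟨x, hx, rfl⟩ := Finset.mem_image.1 hy
        exact ⟨x, ⟨s, hs, hx⟩, rfl⟩
      · rintro ⟨x, ⟨s, hs, hx⟩, rfl⟩
        exact ⟨_, ⟨s, hs, rfl⟩, Finset.mem_image_of_mem _ hx⟩
  · intro M hM M' hM' hMM
    rw [Finset.mem_coe, mem_matchOn] at hM hM'
    have aux : ∀ M M', IsMatchingOn r n S M → IsMatchingOn r n S M' →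
        M.image (fun s => s.image φ) = M'.image (fun s => s.image φ) → M ⊆ M' := by
      intro M M' hM hM' hMM s hs
      have : s.image φ ∈ M'.image (fun s => s.image φ) := by
        rw [← hMM]; exact Finset.mem_image_of_mem (fun s => s.image φ) hs
      obtain ⟨t, ht, hts⟩ := Finset.mem_image.1 this
      rw [← hsetinj t s (hM'.subset ht) (hM.subset hs) hts]
      exact ht
    exact (aux M M' hM hM' hMM).antisymm (aux M' M hM' hM hMM.symm)

noncomputable def numM (r n : ℕ) : ℕ := (matchingFamilies r n).card

lemma matchOn_card {r n : ℕ} {S : Finset ℕ} (h : S.card = r * n) :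
    (matchOn r n S).card = numM r n := by
  have h' : S.card = (Finset.Icc 1 (r * n)).card := by simp [h]
  rw [numM, ← matchOn_eq]
  exact le_antisymm (matchOn_card_le h') (matchOn_card_le h'.symm)

lemma IsMatchingOn.erase {r n : ℕ} {S : Finset ℕ} {M : Finset (Finset ℕ)} {e : Finset ℕ}
    (h : IsMatchingOn r (n + 1) S M) (he : e ∈ M) : IsMatchingOn r n (S \ e) (M.erase e) := by
  obtain ⟨h1, h2, h3, h4⟩ := h
  refine ⟨?_, ?_, ?_, ?_⟩
  · rw [Finset.card_erase_of_mem he, h1]; rfl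
  · exact fun f hf => h2 f (Finset.mem_of_mem_erase hf)
  · exact fun f hf g hg => h3 f (Finset.mem_of_mem_erase hf) g (Finset.mem_of_mem_erase hg)
  · rw [← h4]
    ext x
    simp only [Finset.mem_biUnion, Finset.mem_erase, id, Finset.mem_sdiff]
    constructor
    · rintro ⟨f, ⟨hfe, hf⟩, hx⟩
      exact ⟨⟨f, hf, hx⟩, Finset.disjoint_left.1 (h3 f hf e he hfe) hx⟩
    · rintro ⟨⟨f, hf, hx⟩, hxe⟩
      refine ⟨f, ⟨?_, hf⟩, hx⟩
      rintro rfl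
      exact hxe hx

lemma IsMatchingOn.insert' {r n : ℕ} (hr : 0 < r) {S : Finset ℕ} {M : Finset (Finset ℕ)}
    {e : Finset ℕ} (heS : e ⊆ S) (hec : e.card = r)
    (h : IsMatchingOn r n (S \ e) M) : e ∉ M ∧ IsMatchingOn r (n + 1) S (insert e M) := by
  have hd : ∀ f ∈ M, Disjoint f e := fun f hf => by
    rw [Finset.disjoint_left]
    intro x hx
    exact (Finset.mem_sdiff.1 (h.subset hf hx)).2
  have hne : e ∉ M := by
    intro hm
    have := hd e hm
    rw [disjoint_self] at this
    rw [this] at hec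
    simp at hec
    omega
  obtain ⟨h1, h2, h3, h4⟩ := h
  refine ⟨hne, ?_, ?_, ?_, ?_⟩
  · rw [Finset.card_insert_of_notMem hne, h1]
  · intro f hf
    rcases Finset.mem_insert.1 hf with rfl | hf
    · exact hec
    · exact h2 f hf
  · intro f hf g hg hfg
    rcases Finset.mem_insert.1 hf with hf1 | hf1 <;>
      rcases Finset.mem_insert.1 hg with hg1 | hg1
    · exact absurd (hf1.trans hg1.symm) hfg
    · rw [hf1]; exact (hd g hg1).symm
    · rw [hg1]; exact hd f hf1
    · exact h3 f hf1 g hg1 hfg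
  · rw [Finset.biUnion_insert, h4]
    exact Finset.union_sdiff_of_subset heS

lemma card_contain {r n : ℕ} (hr : 0 < r) {S e : Finset ℕ} (hS : S.card = r * (n + 1))
    (heS : e ⊆ S) (hec : e.card = r) :
    ((matchOn r (n + 1) S).filter (fun M => e ∈ M)).card = numM r n := by
  have hc : (S \ e).card = r * n := by
    rw [Finset.card_sdiff_of_subset heS, hS, hec, Nat.mul_succ]; omega
  rw [← matchOn_card hc]
  refine Finset.card_bij' (fun M _ => M.erase e) (fun M _ => insert e M) ?_ ?_ ?_ ?_
  · intro M hM
    rw [Finset.mem_filter, mem_matchOn] at hM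
    exact mem_matchOn.2 (hM.1.erase hM.2)
  · intro M hM
    rw [mem_matchOn] at hM
    rw [Finset.mem_filter, mem_matchOn]
    exact ⟨(hM.insert' hr heS hec).2, Finset.mem_insert_self _ _⟩
  · intro M hM
    rw [Finset.mem_filter] at hM
    exact Finset.insert_erase hM.2
  · intro M hM
    rw [mem_matchOn] at hM
    exact Finset.erase_insert (hM.insert' hr heS hec).1

lemma card_contain_two {r n : ℕ} (hr : 0 < r) {S e f : Finset ℕ} (hS : S.card = r * (n + 2))
    (heS : e ⊆ S) (hec : e.card = r) (hfc : f.card = r) (hef : e ≠ f) :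
    ((matchOn r (n + 2) S).filter (fun M => e ∈ M ∧ f ∈ M)).card ≤ numM r n := by
  have hc : (S \ e).card = r * (n + 1) := by
    rw [Finset.card_sdiff_of_subset heS, hS, hec, Nat.mul_succ]; omega
  have step : ((matchOn r (n + 2) S).filter (fun M => e ∈ M ∧ f ∈ M)).card ≤
      ((matchOn r (n + 1) (S \ e)).filter (fun M => f ∈ M)).card := by
    refine Finset.card_le_card_of_injOn (fun M => M.erase e) ?_ ?_
    · intro M hM
      rw [Finset.mem_coe, Finset.mem_filter, mem_matchOn] at hM
      rw [Finset.mem_coe, Finset.mem_filter, mem_matchOn]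
      exact ⟨hM.1.erase hM.2.1, Finset.mem_erase.2 ⟨hef.symm, hM.2.2⟩⟩
    · intro M hM M' hM' h
      rw [Finset.mem_coe, Finset.mem_filter] at hM hM'
      rw [← Finset.insert_erase hM.2.1, ← Finset.insert_erase hM'.2.1]
      simp only at h
      rw [h]
  refine step.trans ?_
  by_cases hf : f ⊆ S \ e
  · exact (card_contain hr hc hf hfc).le
  · rw [Finset.filter_eq_empty_iff.2]
    · simp
    · intro M hM hfM
      exact hf ((mem_matchOn.1 hM).subset hfM)

/-- Counting the incidences in two ways. -/
lemma sum_inter {r n : ℕ} (hr : 0 < r) {S : Finset ℕ} (hS : S.card = r * (n + 1))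
    (T : Finset (Finset ℕ)) (hT : T ⊆ S.powersetCard r) :
    ∑ M ∈ matchOn r (n + 1) S, (M ∩ T).card = T.card * numM r n := by
  have h1 : ∀ M : Finset (Finset ℕ), (M ∩ T).card = ∑ e ∈ T, if e ∈ M then 1 else 0 := by
    intro M
    rw [Finset.inter_comm, ← Finset.filter_mem_eq_inter, Finset.card_filter]
  simp only [h1]
  rw [Finset.sum_comm]
  rw [Finset.card_eq_sum_ones, Finset.sum_mul]
  refine Finset.sum_congr rfl fun e he => ?_
  rw [← Finset.card_filter]
  have := Finset.mem_powersetCard.1 (hT he)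
  rw [card_contain hr hS this.1 this.2, one_mul]

lemma sum_inter_sq {r n : ℕ} (hr : 0 < r) {S : Finset ℕ} (hS : S.card = r * (n + 2))
    (T : Finset (Finset ℕ)) (hT : T ⊆ S.powersetCard r) :
    ∑ M ∈ matchOn r (n + 2) S, (M ∩ T).card ^ 2 ≤
      T.card * numM r (n + 1) + T.card ^ 2 * numM r n := by
  have h1 : ∀ M : Finset (Finset ℕ), (M ∩ T).card ^ 2 =
      ∑ e ∈ T, ∑ f ∈ T, if e ∈ M ∧ f ∈ M then 1 else 0 := by
    intro M
    have : (M ∩ T).card = ∑ e ∈ T, if e ∈ M then 1 else 0 := by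
      rw [Finset.inter_comm, ← Finset.filter_mem_eq_inter, Finset.card_filter]
    rw [this, sq, Finset.sum_mul_sum]
    refine Finset.sum_congr rfl fun e _ => Finset.sum_congr rfl fun f _ => ?_
    by_cases h1 : e ∈ M <;> by_cases h2 : f ∈ M <;> simp [h1, h2]
  simp only [h1]
  rw [Finset.sum_comm]
  have h2 : ∀ e ∈ T, ∑ M ∈ matchOn r (n + 2) S, ∑ f ∈ T, (if e ∈ M ∧ f ∈ M then 1 else 0) ≤
      numM r (n + 1) + T.card * numM r n := by
    intro e he
    have he' := Finset.mem_powersetCard.1 (hT he)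
    rw [Finset.sum_comm, ← Finset.add_sum_erase _ _ he]
    refine add_le_add ?_ ?_
    · rw [← Finset.card_filter]
      simp only [and_self]
      exact (card_contain hr hS he'.1 he'.2).le
    · calc _ ≤ ∑ f ∈ T.erase e, numM r n := by
            refine Finset.sum_le_sum fun f hf => ?_
            rw [← Finset.card_filter]
            have hf' := Finset.mem_erase.1 hf
            exact card_contain_two hr hS he'.1 he'.2
              (Finset.mem_powersetCard.1 (hT hf'.2)).2 hf'.1.symm
        _ = (T.erase e).card * numM r n := by simp
        _ ≤ _ := Nat.mul_le_mul_right _ (Finset.card_le_card (Finset.erase_subset _ _))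
  refine (Finset.sum_le_sum h2).trans (le_of_eq ?_)
  simp
  ring

lemma numM_rec {r : ℕ} (hr : 0 < r) (n : ℕ) :
    (n + 1) * numM r (n + 1) = (r * (n + 1)).choose r * numM r n := by
  have h := sum_inter hr (n := n) (S := Finset.Icc 1 (r * (n + 1))) (by simp) _ subset_rfl
  rw [Finset.card_powersetCard] at h
  simp only [Nat.card_Icc, Nat.add_sub_cancel] at h
  rw [← h, matchOn_eq]
  rw [Finset.sum_congr rfl (g := fun _ => n + 1)]
  · simp [numM, mul_comm]
  · intro M hM
    rw [← matchOn_eq, mem_matchOn] at hM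
    rw [Finset.inter_eq_left.2]
    · exact hM.1
    · intro e he
      exact Finset.mem_powersetCard.2 ⟨hM.subset he, hM.2.1 e he⟩

lemma numM_pos {r : ℕ} (hr : 0 < r) (n : ℕ) : 0 < numM r n := by
  induction n with
  | zero =>
    refine Finset.card_pos.2 ⟨∅, ?_⟩
    rw [← matchOn_eq, mem_matchOn]
    exact ⟨rfl, by simp, by simp, by simp⟩
  | succ n ih =>
    have h := numM_rec hr n
    have : 0 < (r * (n + 1)).choose r * numM r n :=
      Nat.mul_pos (Nat.choose_pos (Nat.le_mul_of_pos_right _ (by omega))) ih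
    rw [← h] at this
    exact Nat.pos_of_mul_pos_left this

/-- Second moment bound on the proportion of matchings missing the family `T`. -/
lemma miss_bound {r n : ℕ} (hr : 0 < r) (T : Finset (Finset ℕ))
    (hT : T ⊆ (Finset.Icc 1 (r * (n + 2))).powersetCard r) (hT0 : 0 < T.card) :
    (((matchingFamilies r (n + 2)).filter (fun M => M ∩ T = ∅)).card : ℝ) / numM r (n + 2) ≤
      (numM r (n + 2) : ℝ) / (T.card * numM r (n + 1)) +
        (numM r n : ℝ) * numM r (n + 2) / (numM r (n + 1)) ^ 2 - 1 := by
  have hS : (Finset.Icc 1 (r * (n + 2))).card = r * (n + 2) := by simp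
  have s1 := sum_inter hr (n := n + 1) hS T hT
  have s2 := sum_inter_sq hr hS T hT
  rw [show n + 1 + 1 = n + 2 from rfl, matchOn_eq] at s1
  rw [matchOn_eq] at s2
  have hw0 : (0 : ℝ) < numM r (n + 2) := by exact_mod_cast numM_pos hr _
  have hp0 : (0 : ℝ) < numM r (n + 1) := by exact_mod_cast numM_pos hr _
  have ht0 : (0 : ℝ) < T.card := by exact_mod_cast hT0
  have s1' : ∑ M ∈ matchingFamilies r (n + 2), ((M ∩ T).card : ℝ) =
      (T.card : ℝ) * numM r (n + 1) := by exact_mod_cast s1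
  have s2' : ∑ M ∈ matchingFamilies r (n + 2), ((M ∩ T).card : ℝ) ^ 2 ≤
      (T.card : ℝ) * numM r (n + 1) + (T.card : ℝ) ^ 2 * numM r n := by exact_mod_cast s2
  clear s1 s2
  set Ω := matchingFamilies r (n + 2) with hΩ
  set w : ℝ := (numM r (n + 2) : ℝ) with hw
  set p : ℝ := (numM r (n + 1) : ℝ)
  set q : ℝ := (numM r n : ℝ)
  set t : ℝ := (T.card : ℝ)
  set Z : ℝ := ((Ω.filter (fun M => M ∩ T = ∅)).card : ℝ)
  set m : ℝ := t * p / w with hm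
  have hΩw : (Ω.card : ℝ) = w := rfl
  have e1 : ∑ M ∈ Ω, (((M ∩ T).card : ℝ) - m) ^ 2 =
      ∑ M ∈ Ω, ((M ∩ T).card : ℝ) ^ 2 - 2 * m * (t * p) + w * m ^ 2 := by
    rw [← s1', ← hΩw, Finset.mul_sum, ← nsmul_eq_mul, ← Finset.sum_const,
      ← Finset.sum_sub_distrib, ← Finset.sum_add_distrib]
    refine Finset.sum_congr rfl fun M _ => ?_
    ring
  have e2 : Z * m ^ 2 ≤ ∑ M ∈ Ω, (((M ∩ T).card : ℝ) - m) ^ 2 := by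
    calc Z * m ^ 2 = ∑ M ∈ Ω.filter (fun M => M ∩ T = ∅), (((M ∩ T).card : ℝ) - m) ^ 2 := by
          rw [Finset.sum_congr rfl (g := fun _ => m ^ 2)]
          · simp [Z]
          · intro M hM
            rw [(Finset.mem_filter.1 hM).2]
            simp
      _ ≤ _ := Finset.sum_le_sum_of_subset_of_nonneg (Finset.filter_subset _ _)
          (fun _ _ _ => sq_nonneg _)
  have e3 : Z * m ^ 2 ≤ t * p + t ^ 2 * q - w * m ^ 2 := by
    have : t * p = m * w := by rw [hm]; field_simp
    have h4 : 2 * m * (t * p) = 2 * (w * m ^ 2) := by rw [this]; ring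
    linarith
  have hm0 : 0 < m := by positivity
  have e4 : w / (t * p) + q * w / p ^ 2 - 1 = (t * p + t ^ 2 * q - w * m ^ 2) / (w * m ^ 2) := by
    rw [hm]
    field_simp
  rw [e4, div_le_div_iff₀ hw0 (by positivity)]
  calc Z * (w * m ^ 2) = (Z * m ^ 2) * w := by ring
    _ ≤ _ := mul_le_mul_of_nonneg_right e3 hw0.le

/-- The `r`-sets in `[m]` that are sent onto `h` by contracting intervals of length `L`. -/
noncomputable def famT (r m L : ℕ) (h : Finset ℕ) : Finset (Finset ℕ) :=
  ((Finset.Icc 1 m).powersetCard r).filter (fun e => e.image (fun x => (x - 1) / L) = h)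

lemma famT_card {r m L N : ℕ} {h : Finset ℕ} (hc : h.card = r) (hN : ∀ p ∈ h, p < N)
    (hL : 0 < L) (hm : N * L ≤ m) : L ^ r ≤ (famT r m L h).card := by
  have h0 : (h.pi (fun _ => Finset.range L)).card = L ^ r := by
    rw [Finset.card_pi]; simp [hc]
  rw [← h0]
  have hdiv : ∀ p g, g < L → (p * L + g) / L = p := by
    intro p g hg
    rw [Nat.mul_comm, Nat.mul_add_div hL, Nat.div_eq_of_lt hg, Nat.add_zero]
  refine Finset.card_le_card_of_injOn
    (fun g => h.attach.image (fun p => p.1 * L + g p.1 p.2 + 1)) ?_ ?_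
  · intro g hg
    rw [Finset.mem_coe, Finset.mem_pi] at hg
    simp only [Finset.mem_range] at hg
    rw [Finset.mem_coe]
    unfold famT
    rw [Finset.mem_filter, Finset.mem_powersetCard]
    refine ⟨⟨?_, ?_⟩, ?_⟩
    · intro x hx
      obtain ⟨p, -, rfl⟩ := Finset.mem_image.1 hx
      rw [Finset.mem_Icc]
      refine ⟨by omega, ?_⟩
      have h1 := hN p.1 p.2
      have h2 := hg p.1 p.2
      have h3 : (p.1 + 1) * L ≤ N * L := Nat.mul_le_mul_right _ h1
      rw [Nat.succ_mul] at h3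
      omega
    · rw [Finset.card_image_of_injective, Finset.card_attach, hc]
      intro p p' hpp
      have h1 := hdiv p.1 _ (hg p.1 p.2)
      have h2 := hdiv p'.1 _ (hg p'.1 p'.2)
      simp only [Nat.add_right_cancel_iff] at hpp
      rw [hpp, h2] at h1
      exact Subtype.ext h1.symm
    · rw [Finset.image_image]
      ext x
      rw [Finset.mem_image]
      constructor
      · rintro ⟨p, -, rfl⟩
        simp only [Function.comp, Nat.add_sub_cancel]
        rw [hdiv _ _ (hg p.1 p.2)]
        exact p.2
      · intro hx
        refine ⟨⟨x, hx⟩, Finset.mem_attach _ _, ?_⟩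
        simp only [Function.comp, Nat.add_sub_cancel]
        exact hdiv _ _ (hg x hx)
  · intro g hg g' hg' hgg
    rw [Finset.mem_coe, Finset.mem_pi] at hg hg'
    simp only [Finset.mem_range] at hg hg'
    funext p hp
    have h1 : p * L + g p hp + 1 ∈ h.attach.image (fun p => p.1 * L + g' p.1 p.2 + 1) := by
      simp only at hgg
      rw [← hgg]
      exact Finset.mem_image.2 ⟨⟨p, hp⟩, Finset.mem_attach _ _, rfl⟩
    obtain ⟨⟨p', hp'⟩, -, h2⟩ := Finset.mem_image.1 h1
    simp only [Nat.add_right_cancel_iff] at h2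
    have h3 := hdiv p _ (hg p hp)
    have h4 := hdiv p' _ (hg' p' hp')
    rw [h2] at h4
    have h5 : p = p' := h3.symm.trans h4
    subst h5
    omega

lemma ratio_eq {r : ℕ} (hr : 0 < r) (n : ℕ) :
    (numM r (n + 1) : ℝ) = ((r * (n + 1)).choose r : ℝ) * numM r n / (n + 1) := by
  rw [eq_div_iff (by positivity)]
  have := numM_rec hr n
  have h : ((n + 1 : ℕ) : ℝ) * numM r (n + 1) = ((r * (n + 1)).choose r : ℝ) * numM r n := by
    exact_mod_cast this
  push_cast at h
  linarith

lemma choose_ratio {r n : ℕ} (hr : 0 < r) (hn : 0 < n) :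
    ((r * (n + 2)).choose r : ℝ) / ((r * (n + 1)).choose r : ℝ) ≤ (((n : ℝ) + 2) / n) ^ r := by
  have h1 : (r * n) ^ r ≤ Nat.factorial r * (r * (n + 1)).choose r := by
    rw [← Nat.descFactorial_eq_factorial_mul_choose]
    refine le_trans (Nat.pow_le_pow_left ?_ r) (Nat.pow_sub_le_descFactorial _ _)
    rw [Nat.mul_succ]; omega
  have h2 : Nat.factorial r * (r * (n + 2)).choose r ≤ (r * (n + 2)) ^ r := by
    rw [← Nat.descFactorial_eq_factorial_mul_choose]
    exact Nat.descFactorial_le_pow _ _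
  have h1' : ((r : ℝ) * n) ^ r ≤ (Nat.factorial r : ℝ) * ((r * (n + 1)).choose r : ℝ) := by
    exact_mod_cast h1
  have h2' : (Nat.factorial r : ℝ) * ((r * (n + 2)).choose r : ℝ) ≤ ((r : ℝ) * (n + 2)) ^ r := by
    exact_mod_cast h2
  have hf : (0 : ℝ) < Nat.factorial r := by exact_mod_cast Nat.factorial_pos r
  have hr' : (0 : ℝ) < r := by exact_mod_cast hr
  have hn' : (0 : ℝ) < n := by exact_mod_cast hn
  calc ((r * (n + 2)).choose r : ℝ) / ((r * (n + 1)).choose r : ℝ)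
      = ((Nat.factorial r : ℝ) * ((r * (n + 2)).choose r : ℝ)) /
        ((Nat.factorial r : ℝ) * ((r * (n + 1)).choose r : ℝ)) := by
        rw [mul_div_mul_left _ _ hf.ne']
    _ ≤ ((r : ℝ) * (n + 2)) ^ r / ((r : ℝ) * n) ^ r :=
        div_le_div₀ (by positivity) h2' (by positivity) h1'
    _ = (((n : ℝ) + 2) / n) ^ r := by
        rw [← div_pow, mul_div_mul_left _ _ hr'.ne']

lemma miss_bound2 {r n N : ℕ} (hr : 0 < r) (hn : 0 < n) (hN0 : 0 < N) (hNn : N ≤ n + 2)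
    {h : Finset ℕ} (hc : h.card = r) (hN : ∀ p ∈ h, p < N) :
    (((matchingFamilies r (n + 2)).filter
      (fun M => M ∩ famT r (r * (n + 2)) ((n + 2) / N) h = ∅)).card : ℝ) / numM r (n + 2) ≤
      (2 * r * N : ℝ) ^ r / (n + 2) + (((n : ℝ) + 2) / n) ^ r - 1 := by
  set L := (n + 2) / N with hLdef
  have hL : 0 < L := Nat.div_pos hNn hN0
  have hNL : N * L ≤ n + 2 := Nat.mul_div_le _ _
  have hLN : n + 2 ≤ 2 * L * N := by
    have h1 : n + 2 < N * (L + 1) := by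
      have := Nat.lt_mul_div_succ (n + 2) hN0
      simpa using this
    have h2 : N * 1 ≤ N * L := Nat.mul_le_mul_left _ hL
    nlinarith
  have hTc := famT_card (m := r * (n + 2)) hc hN hL
    (hNL.trans (Nat.le_mul_of_pos_left _ hr))
  have hLr : 0 < L ^ r := Nat.pow_pos hL
  refine (miss_bound hr (famT r (r * (n + 2)) L h) (Finset.filter_subset _ _)
    (lt_of_lt_of_le hLr hTc)).trans ?_
  have hq0 : (0 : ℝ) < numM r n := by exact_mod_cast numM_pos hr _
  have hp0 : (0 : ℝ) < numM r (n + 1) := by exact_mod_cast numM_pos hr _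
  have e1 := ratio_eq hr (n + 1)
  have e0 := ratio_eq hr n
  rw [show n + 1 + 1 = n + 2 from rfl] at e1
  have hC2 : (0 : ℝ) < ((r * (n + 2)).choose r : ℝ) := by
    exact_mod_cast Nat.choose_pos (Nat.le_mul_of_pos_right _ (by omega))
  have hC1 : (0 : ℝ) < ((r * (n + 1)).choose r : ℝ) := by
    exact_mod_cast Nat.choose_pos (Nat.le_mul_of_pos_right _ (by omega))
  have hrat := choose_ratio hr hn
  have hC2le : ((r * (n + 2)).choose r : ℝ) ≤ (2 * r * N : ℝ) ^ r * (L : ℝ) ^ r := by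
    have : (r * (n + 2)).choose r ≤ (2 * r * N) ^ r * L ^ r := by
      refine (Nat.choose_le_pow _ _).trans ?_
      rw [← Nat.mul_pow]
      refine Nat.pow_le_pow_left ?_ r
      calc r * (n + 2) ≤ r * (2 * L * N) := Nat.mul_le_mul_left _ hLN
        _ = _ := by ring
    exact_mod_cast this
  have hTc' : (L : ℝ) ^ r ≤ ((famT r (r * (n + 2)) L h).card : ℝ) := by exact_mod_cast hTc
  have hLr' : (0 : ℝ) < (L : ℝ) ^ r := by exact_mod_cast hLr
  set t : ℝ := ((famT r (r * (n + 2)) L h).card : ℝ)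
  have ht0 : 0 < t := lt_of_lt_of_le hLr' hTc'
  have g1 : (numM r (n + 2) : ℝ) / (t * numM r (n + 1)) ≤ (2 * r * N : ℝ) ^ r / (n + 2) := by
    have : (numM r (n + 2) : ℝ) / (t * numM r (n + 1)) =
        ((r * (n + 2)).choose r : ℝ) / (t * (n + 2)) := by
      rw [e1]; push_cast; field_simp; ring
    rw [this, div_le_div_iff₀ (by positivity) (by positivity)]
    have : (2 * r * N : ℝ) ^ r * (L : ℝ) ^ r ≤ (2 * r * N : ℝ) ^ r * t :=
      mul_le_mul_of_nonneg_left hTc' (by positivity)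
    have h3 : (0 : ℝ) ≤ (n : ℝ) + 2 := by positivity
    calc _ ≤ ((2 * r * N : ℝ) ^ r * t) * (n + 2) :=
          mul_le_mul_of_nonneg_right (hC2le.trans this) h3
      _ = _ := by ring
  have g2 : (numM r n : ℝ) * numM r (n + 2) / (numM r (n + 1)) ^ 2 ≤
      (((n : ℝ) + 2) / n) ^ r := by
    refine le_trans ?_ hrat
    have : (numM r n : ℝ) * numM r (n + 2) / (numM r (n + 1)) ^ 2 =
        ((r * (n + 2)).choose r : ℝ) / ((r * (n + 1)).choose r : ℝ) * ((n + 1) / (n + 2)) := by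
      rw [e1, e0]; push_cast; field_simp; ring
    rw [this]
    refine mul_le_of_le_one_right (by positivity) ?_
    rw [div_le_one (by positivity)]
    linarith
  linarith

lemma exists_copy {r L : ℕ} {Ps : Set (Finset (Finset ℕ))} {K M : Finset (Finset ℕ)} {m : ℕ}
    (hM : ∀ e ∈ M, ∀ f ∈ M, e ≠ f → Disjoint e f)
    (hK : IsClique r Ps K) (hne : ∀ h ∈ K, M ∩ famT r m L h ≠ ∅) :
    ∃ K' ⊆ M, IsClique r Ps K' ∧ K'.card = K.card := by
  have hex : ∀ h, ∃ e, h ∈ K → e ∈ M ∧ e ∈ famT r m L h := by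
    intro h
    by_cases hh : h ∈ K
    · obtain ⟨e, he⟩ := Finset.nonempty_iff_ne_empty.2 (hne h hh)
      exact ⟨e, fun _ => Finset.mem_inter.1 he⟩
    · exact ⟨∅, fun h' => absurd h' hh⟩
  choose E hE using hex
  obtain ⟨k1, k2, k3⟩ := hK
  let φ : ℕ → ℕ := fun x => (x - 1) / L
  have hφm : Monotone φ := fun x y hxy => Nat.div_le_div_right (Nat.sub_le_sub_right hxy 1)
  have hcard : ∀ h ∈ K, (E h).card = r := fun h hh => by
    have := (hE h hh).2
    unfold famT at this
    exact (Finset.mem_powersetCard.1 (Finset.mem_filter.1 this).1).2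
  have himg : ∀ h ∈ K, (E h).image φ = h := fun h hh => by
    have := (hE h hh).2
    unfold famT at this
    exact (Finset.mem_filter.1 this).2
  have hinjE : Set.InjOn E ↑K := by
    intro h hh h' hh' hEE
    rw [← himg h hh, ← himg h' hh', hEE]
  refine ⟨K.image E, ?_, ⟨?_, ?_, ?_⟩, Finset.card_image_of_injOn hinjE⟩
  · intro e he
    obtain ⟨h, hh, rfl⟩ := Finset.mem_image.1 he
    exact (hE h hh).1
  · intro e he
    obtain ⟨h, hh, rfl⟩ := Finset.mem_image.1 he
    exact hcard h hh
  · intro e he f hf hef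
    obtain ⟨h, hh, rfl⟩ := Finset.mem_image.1 he
    obtain ⟨h', hh', rfl⟩ := Finset.mem_image.1 hf
    exact hM _ (hE h hh).1 _ (hE h' hh').1 hef
  · intro e he f hf hef
    obtain ⟨h, hh, rfl⟩ := Finset.mem_image.1 he
    obtain ⟨h', hh', rfl⟩ := Finset.mem_image.1 hf
    have hne' : h ≠ h' := fun h0 => hef (by rw [h0])
    obtain ⟨S, hS, hform⟩ := k3 h hh h' hh' hne'
    refine ⟨S, hS, FormsPattern.comp' φ ?_ (himg h hh) (himg h' hh') hform⟩
    have inj1 : ∀ g ∈ K, Set.InjOn φ ↑(E g) := fun g hg => by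
      apply Finset.card_image_iff.1
      rw [himg g hg, hcard g hg, k1 g hg]
    have hd := k2 h hh h' hh' hne'
    have cross : ∀ x ∈ E h, ∀ y ∈ E h', φ x ≠ φ y := by
      intro x hx y hy hxy
      have a1 : φ x ∈ h := by
        have := Finset.mem_image_of_mem φ hx
        rwa [himg h hh] at this
      have a2 : φ y ∈ h' := by
        have := Finset.mem_image_of_mem φ hy
        rwa [himg h' hh'] at this
      rw [← hxy] at a2
      exact Finset.disjoint_left.1 hd a1 a2
    have inj : Set.InjOn φ ↑(E h ∪ E h') := by
      intro x hx y hy hxy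
      rw [Finset.mem_coe, Finset.mem_union] at hx hy
      rcases hx with hx | hx <;> rcases hy with hy | hy
      · exact inj1 h hh hx hy hxy
      · exact absurd hxy (cross x hx y hy)
      · exact absurd hxy.symm (cross y hy x hx)
      · exact inj1 h' hh' hx hy hxy
    intro x hx y hy hxy
    exact lt_of_le_of_ne (hφm hxy.le) (fun h0 => hxy.ne (inj hx hy h0))

lemma prob_le_one' (r n : ℕ) (A : Finset (Finset ℕ) → Prop) : prob r n A ≤ 1 := by
  refine div_le_one_of_le₀ ?_ (Nat.cast_nonneg _)
  exact_mod_cast Finset.card_le_card (Finset.filter_subset _ _)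

/-- **Theorem (non-collectable pairs).** For every `r ≥ 2` and every pair `{P, Q}` of
distinct non-collectable `r`-patterns, the maximum size `z` of a `{P,Q}`-clique satisfies
`2 ≤ z ≤ 5`, and a.a.s. `z_{{P,Q}}(RM_n^(r)) = z`. -/
theorem aas_noncollectable_pair (r : ℕ) (hr : 2 ≤ r) (P Q : Finset (Finset ℕ))
    (hP : IsOrderedMatching r 2 P) (hQ : IsOrderedMatching r 2 Q)
    (hne : P ≠ Q) (hcP : ¬ Collectable r P) (hcQ : ¬ Collectable r Q) :
    2 ≤ maxCliqueSize r {P, Q} ∧ maxCliqueSize r {P, Q} ≤ 5 ∧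
      Filter.Tendsto
        (fun n : ℕ => prob r n (fun M => zClique r {P, Q} M = maxCliqueSize r {P, Q}))
        Filter.atTop (nhds 1) := by
  have hr0 : 0 < r := by omega
  set Ps : Set (Finset (Finset ℕ)) := {P, Q} with hPs
  set z := maxCliqueSize r Ps with hz
  have hle : ∀ K, IsClique r Ps K → K.card ≤ 5 := fun K hK => clique_card_le hr0 hcP hcQ hK
  have hbdd : BddAbove {k | ∃ K : Finset (Finset ℕ), IsClique r Ps K ∧ K.card = k} := by
    refine ⟨5, ?_⟩
    rintro k ⟨K, hK, rfl⟩
    exact hle K hK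
  have hPc : IsClique r Ps P := pattern_isClique Ps (by simp [hPs]) hP
  have hnon : {k | ∃ K : Finset (Finset ℕ), IsClique r Ps K ∧ K.card = k}.Nonempty :=
    ⟨_, P, hPc, rfl⟩
  have hmem : z ∈ {k | ∃ K : Finset (Finset ℕ), IsClique r Ps K ∧ K.card = k} :=
    Nat.sSup_mem hnon hbdd
  have hmax : ∀ K, IsClique r Ps K → K.card ≤ z := fun K hK => le_csSup hbdd ⟨K, hK, rfl⟩
  obtain ⟨K, hK, hKz⟩ := hmem
  refine ⟨?_, ?_, ?_⟩
  · rw [← hP.1]; exact hmax P hPc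
  · rw [← hKz]; exact hle K hK
  obtain ⟨N, hN0, hN⟩ : ∃ N : ℕ, 0 < N ∧ ∀ h ∈ K, ∀ p ∈ h, p < N := by
    refine ⟨(K.biUnion id).sup id + 1, by omega, ?_⟩
    intro h hh p hp
    have : p ∈ K.biUnion id := Finset.mem_biUnion.2 ⟨h, hh, hp⟩
    have := Finset.le_sup (f := id) this
    simp only [id] at this ⊢
    omega
  rw [← Filter.tendsto_add_atTop_iff_nat 2]
  let B : ℕ → ℝ := fun n => (2 * r * N : ℝ) ^ r / (n + 2) + (((n : ℝ) + 2) / n) ^ r - 1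
  have hB : Filter.Tendsto B Filter.atTop (nhds 0) := by
    have t0 : Filter.Tendsto (fun n : ℕ => (n : ℝ)) Filter.atTop Filter.atTop :=
      tendsto_natCast_atTop_atTop
    have t1 : Filter.Tendsto (fun n : ℕ => (2 * r * N : ℝ) ^ r / ((n : ℝ) + 2)) Filter.atTop
        (nhds 0) :=
      Filter.Tendsto.div_atTop tendsto_const_nhds (Filter.tendsto_atTop_add_const_right _ _ t0)
    have t2 : Filter.Tendsto (fun n : ℕ => ((n : ℝ) + 2) / n) Filter.atTop (nhds 1) := by
      have h1 : Filter.Tendsto (fun n : ℕ => 1 + 2 / (n : ℝ)) Filter.atTop (nhds (1 + 0)) :=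
        tendsto_const_nhds.add (Filter.Tendsto.div_atTop tendsto_const_nhds t0)
      rw [add_zero] at h1
      refine h1.congr' ?_
      filter_upwards [Filter.eventually_gt_atTop 0] with n hn
      have : (n : ℝ) ≠ 0 := by exact_mod_cast hn.ne'
      field_simp
    have t3 := (t1.add (t2.pow r)).sub_const 1
    simpa using t3
  have hlow : Filter.Tendsto (fun n => 1 - (K.card : ℝ) * B n) Filter.atTop (nhds 1) := by
    have := (hB.const_mul (K.card : ℝ)).const_sub 1
    simpa using this
  refine tendsto_of_tendsto_of_tendsto_of_le_of_le' hlow tendsto_const_nhds ?_ ?_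
  · filter_upwards [Filter.eventually_gt_atTop 0, Filter.eventually_ge_atTop N] with n hn hNn
    have hw0 : (0 : ℝ) < numM r (n + 2) := by exact_mod_cast numM_pos hr0 _
    set Ω := matchingFamilies r (n + 2) with hΩ
    set T : Finset ℕ → Finset (Finset ℕ) :=
      fun h => famT r (r * (n + 2)) ((n + 2) / N) h with hT
    have hsub : Ω ⊆ Ω.filter (fun M => zClique r Ps M = z) ∪
        K.biUnion (fun h => Ω.filter (fun M => M ∩ T h = ∅)) := by
      intro M hM
      rw [Finset.mem_union, Finset.mem_filter, Finset.mem_biUnion]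
      by_cases hall : ∃ h ∈ K, M ∩ T h = ∅
      · obtain ⟨h, hh, hh'⟩ := hall
        exact Or.inr ⟨h, hh, Finset.mem_filter.2 ⟨hM, hh'⟩⟩
      · left
        refine ⟨hM, ?_⟩
        push Not at hall
        have hM' : IsOrderedMatching r (n + 2) M := (Finset.mem_filter.1 hM).2
        obtain ⟨K', hK'M, hK', hK'c⟩ := exists_copy hM'.2.2.1 hK
          (fun h hh => Finset.nonempty_iff_ne_empty.1 (hall h hh))
        have hb : BddAbove {k | ∃ K : Finset (Finset ℕ), K ⊆ M ∧ IsClique r Ps K ∧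
            K.card = k} := by
          refine ⟨5, ?_⟩
          rintro k ⟨K, -, hK, rfl⟩
          exact hle K hK
        refine le_antisymm (csSup_le ⟨_, K', hK'M, hK', rfl⟩ ?_) ?_
        · rintro k ⟨K, -, hK, rfl⟩
          exact hmax K hK
        · exact le_csSup hb ⟨K', hK'M, hK', hK'c.trans hKz⟩
    have hcard := (Finset.card_le_card hsub).trans ((Finset.card_union_le _ _).trans
      (Nat.add_le_add_left Finset.card_biUnion_le _))
    have hcard' : (numM r (n + 2) : ℝ) ≤ ((Ω.filter (fun M => zClique r Ps M = z)).card : ℝ) +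
        ∑ h ∈ K, ((Ω.filter (fun M => M ∩ T h = ∅)).card : ℝ) := by
      have h0 : numM r (n + 2) = Ω.card := rfl
      rw [h0]
      exact_mod_cast hcard
    have hsum : ∑ h ∈ K, ((Ω.filter (fun M => M ∩ T h = ∅)).card : ℝ) / numM r (n + 2) ≤
        (K.card : ℝ) * B n := by
      have : ∀ h ∈ K, ((Ω.filter (fun M => M ∩ T h = ∅)).card : ℝ) / numM r (n + 2) ≤ B n :=
        fun h hh => miss_bound2 hr0 hn hN0 (by omega) (hK.1 h hh) (hN h hh)
      refine (Finset.sum_le_sum this).trans (le_of_eq ?_)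
      simp
    have hprob : prob r (n + 2) (fun M => zClique r Ps M = z) =
        ((Ω.filter (fun M => zClique r Ps M = z)).card : ℝ) / numM r (n + 2) := by
      unfold prob numM
      congr!
    rw [hprob]
    rw [← Finset.sum_div] at hsum
    have h2 := div_le_div_of_nonneg_right hcard' hw0.le
    rw [div_self hw0.ne', add_div] at h2
    linarith
  · refine Filter.Eventually.of_forall fun n => ?_
    exact prob_le_one' _ _ _
end
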